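/- arXiv:math/0505563 — 3 statements merged into one kernel-verified Lean document; each statement's English description precedes it below -/
import Mathlib

section
/- (Lovász Conjecture, proved by Babson and Kozlov.) Let G be a finite simple graph and r ≥ 1, k ≥ −1 integers. If the Hom complex Hom(C_{2r+1}, G) — realized as the geometric realization of the nerve of the poset of multihomomorphisms from the odd cycle C_{2r+1} to G ordered by pointwise inclusion — is k-connected, then χ(G) ≥ k + 4. -/
open CategoryTheory

/-- A space is `k`-connected (for an integer `k ≥ -1`) if it is nonempty and all its
homotopy groups `π_n` vanish for `0 ≤ n ≤ k` (for `n = 0` this means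
path-connectedness). `(-1)`-connected just means nonempty. -/
def KConnected (k : ℤ) (X : Type*) [TopologicalSpace X] : Prop :=
  Nonempty X ∧ ∀ n : ℕ, (n : ℤ) ≤ k → ∀ x : X, Subsingleton (HomotopyGroup (Fin n) X x)

/-- The poset of multihomomorphisms from `T` to `G`: functions `η` assigning to each
vertex `x` of `T` a nonempty set `η x ⊆ V(G)` such that for every edge `(x,y)` of `T`,
every `a ∈ η x` and every `b ∈ η y` are adjacent in `G`; ordered by pointwise
inclusion. This is the face poset of the polyhedral complex `Hom(T,G)`. -/
def MultiHom {V W : Type} (T : SimpleGraph V) (G : SimpleGraph W) : Type :=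
  {η : V → Finset W // (∀ x, (η x).Nonempty) ∧
    ∀ x y, T.Adj x y → ∀ a ∈ η x, ∀ b ∈ η y, G.Adj a b}

instance {V W : Type} (T : SimpleGraph V) (G : SimpleGraph W) :
    Preorder (MultiHom T G) :=
  Subtype.preorder _

/-- The Hom complex `Hom(T,G)`, realized topologically as the geometric realization
of the nerve (order complex) of the poset of multihomomorphisms from `T` to `G`
(the barycentric subdivision of the polyhedral complex `Hom(T,G)`). -/
noncomputable def homComplex {V W : Type} (T : SimpleGraph V) (G : SimpleGraph W) :
    TopCat :=
  SSet.toTop.obj (nerve (MultiHom T G))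

/-!
Suppose that `G` is colored with `n + 2` colors. Selecting a color from `η w` for every
multihomomorphism `η` and extending linearly over chains evaluates a point of `Hom(T, G)` at each
vertex `w` of `T` to a point of the simplex on the colors, and adjacent vertices of `T` receive
points of disjoint supports. The reflection of the odd cycle induces an involution of the Hom
complex, so if the complex is `(n - 1)`-connected, then there is an equivariant map to it from the
`n`-sphere. Evaluation turns this map into a family of maps `p w` from the `n`-sphere to the
simplex with `p w (-x) = p (ρ w) x`, where `ρ` is the reflection.

For an edge `a w`, the difference `p a - p w` maps the sphere to the punctured hyperplane of
coordinate sum zero, and its homotopy class does not depend on `a`. If `w` is the vertex fixed by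
the reflection, then replacing `p a` by the average of `p a` and `p (ρ a)` shows that the class
contains an even map. This property is passed on from vertex to vertex, as exchanging `a` and `w`
changes only the sign. But if `a = ρ w`, which happens at the edge opposite to the fixed vertex,
then the difference is odd. An even map and an odd map are never homotopic, since the hyperplane
has dimension `n + 1` and the degrees mod 2 of the two maps are `0` and `1`.

Degrees mod 2 are computed combinatorially, as in Ky Fan's proof of Tucker's lemma: subdivide the
cross-polytope, label each vertex with the dominant signed coordinate of its image, and count the
simplices whose signs alternate.
-/

/-- Mod `2` chains on the vertex set `A`: the monomial `m` stands for the simplex with vertex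
multiset `m`, and `1` for the empty simplex. The degree of a chain is thus one more than its
dimension, and multiplication by `X a` is the cone with apex `a`. -/
abbrev ModTwoChain (A : Type*) := MvPolynomial A (ZMod 2)

namespace ModTwoChain

open MvPolynomial

/-! ### Chains mod 2 -/

section chains

variable {A B : Type*}

/-- The augmented simplicial boundary operator. -/
noncomputable def boundary : Derivation (ZMod 2) (ModTwoChain A) (ModTwoChain A) :=
  mkDerivation (ZMod 2) fun _ => 1

@[simp]
lemma boundary_X (a : A) : boundary (X a) = 1 :=
  mkDerivation_X _ _ _

lemma boundary_X_mul (a : A) (c : ModTwoChain A) :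
    boundary (X a * c) = c + X a * boundary c := by
  simp [Derivation.leibniz, add_comm]

lemma boundary_monomial (m : A →₀ ℕ) :
    boundary (monomial m 1) = ∑ a ∈ m.support, (m a : ZMod 2) • monomial (m - .single a 1) 1 := by
  simp [boundary, mkDerivation_monomial, Finsupp.sum, smul_monomial]

@[simp]
lemma boundary_boundary (c : ModTwoChain A) : boundary (boundary c) = 0 := by
  induction c using MvPolynomial.induction_on with
  | C r => simp [← algebraMap_eq]
  | add c d hc hd => rw [map_add, map_add, hc, hd, add_zero]
  | mul_X c a hc =>
    rw [mul_comm, boundary_X_mul, map_add, boundary_X_mul, hc, mul_zero, add_zero,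
      CharTwo.add_self_eq_zero]

lemma boundary_rename (f : A → B) (c : ModTwoChain A) :
    boundary (rename f c) = rename f (boundary c) := by
  induction c using MvPolynomial.induction_on with
  | C r => simp [← algebraMap_eq]
  | add c d hc hd => simp only [map_add, hc, hd]
  | mul_X c a hc => simp only [mul_comm c, map_mul, rename_X, boundary_X_mul, map_add, hc]

lemma constr_basisMonomials_monomial {M : Type*} [AddCommGroup M] [Module (ZMod 2) M]
    (f : (A →₀ ℕ) → M) (m : A →₀ ℕ) :
    (basisMonomials A (ZMod 2)).constr (ZMod 2) f (monomial m 1) = f m := by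
  simpa using (basisMonomials A (ZMod 2)).constr_basis (ZMod 2) f m

lemma degree_sub_single_add_one {m : A →₀ ℕ} {a : A} (ha : a ∈ m.support) :
    (m - .single a 1).degree + 1 = m.degree := by
  rw [Finsupp.mem_support_iff] at ha
  conv_rhs => rw [← Finsupp.sub_add_single_one_cancel ha]
  rw [map_add, Finsupp.degree_single]

lemma linearMap_ext_of_boundary {M : Type*} [AddCommGroup M] [Module (ZMod 2) M]
    {T U : ModTwoChain A →ₗ[ZMod 2] M}
    (h : ∀ m : A →₀ ℕ, T (boundary (monomial m 1)) = U (boundary (monomial m 1)) →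
      T (monomial m 1) = U (monomial m 1)) : T = U := by
  refine (basisMonomials A (ZMod 2)).ext fun m => ?_
  rw [coe_basisMonomials]
  induction hk : m.degree generalizing m with
  | zero => exact h m (by rw [Finsupp.degree_eq_zero_iff] at hk; simp [hk])
  | succ k ih =>
    refine h m ?_
    simp only [boundary_monomial, map_sum, map_smul]
    exact Finset.sum_congr rfl fun a ha => congrArg _ (ih _ (by grind [degree_sub_single_add_one]))

/-- The chains of degree `k` all of whose simplices have their vertices in a member of `𝒞`. -/
noncomputable def carriedChains (𝒞 : Set (Set A)) (k : ℕ) : Submodule (ZMod 2) (ModTwoChain A) :=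
  restrictSupport (ZMod 2) {m | m.degree = k ∧ ∃ C ∈ 𝒞, ↑m.support ⊆ C}

variable {𝒞 : Set (Set A)} {𝒟 : Set (Set B)} {k : ℕ}

lemma monomial_mem_carriedChains {m : A →₀ ℕ} :
    monomial m 1 ∈ carriedChains 𝒞 k ↔ m.degree = k ∧ ∃ C ∈ 𝒞, ↑m.support ⊆ C := by
  simp [carriedChains, monomial_mem_restrictSupport]

lemma map_mem_of_mem_carriedChains {M : Type*} [AddCommGroup M] [Module (ZMod 2) M]
    {T : ModTwoChain A →ₗ[ZMod 2] M} {P : Submodule (ZMod 2) M}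
    (h : ∀ m : A →₀ ℕ, m.degree = k → ∀ C ∈ 𝒞, ↑m.support ⊆ C → T (monomial m 1) ∈ P)
    {c : ModTwoChain A} (hc : c ∈ carriedChains 𝒞 k) : T c ∈ P := by
  rw [carriedChains, restrictSupport_eq_span] at hc
  suffices Submodule.span (ZMod 2) _ ≤ P.comap T from this hc
  rw [Submodule.span_le]
  rintro _ ⟨m, ⟨hm, C, hC, hmC⟩, rfl⟩
  exact h m hm C hC hmC

lemma eq_of_mem_carriedChains {M : Type*} [AddCommGroup M] [Module (ZMod 2) M]
    {T U : ModTwoChain A →ₗ[ZMod 2] M}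
    (h : ∀ m : A →₀ ℕ, m.degree = k → ∀ C ∈ 𝒞, ↑m.support ⊆ C →
      T (monomial m 1) = U (monomial m 1))
    {c : ModTwoChain A} (hc : c ∈ carriedChains 𝒞 k) : T c = U c :=
  map_mem_of_mem_carriedChains (T := .id) (P := LinearMap.eqLocus T U) h hc

lemma mem_carriedChains_of_subset {𝒞' : Set (Set A)} (h : ∀ C ∈ 𝒞, ∃ D ∈ 𝒞', C ⊆ D)
    {c : ModTwoChain A} (hc : c ∈ carriedChains 𝒞 k) : c ∈ carriedChains 𝒞' k := by
  refine map_mem_of_mem_carriedChains (T := .id) (fun m hm C hC hmC => ?_) hc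
  obtain ⟨D, hD, hCD⟩ := h C hC
  exact monomial_mem_carriedChains.2 ⟨hm, D, hD, hmC.trans hCD⟩

lemma boundary_mem_carriedChains {c : ModTwoChain A} (hc : c ∈ carriedChains 𝒞 k) :
    boundary c ∈ carriedChains 𝒞 (k - 1) := by
  refine map_mem_of_mem_carriedChains (T := boundary.toLinearMap) (fun m hm C hC hmC => ?_) hc
  rw [Derivation.coeFn_coe, boundary_monomial]
  refine sum_mem fun a ha => Submodule.smul_mem _ _ (monomial_mem_carriedChains.2 ⟨?_, C, hC, ?_⟩)
  · grind [degree_sub_single_add_one]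
  · exact (Finset.coe_subset.2 (Finsupp.support_mono tsub_le_self)).trans hmC

lemma X_mul_mem_carriedChains {a : A} {𝒞' : Set (Set A)} (h : ∀ C ∈ 𝒞, ∃ D ∈ 𝒞', insert a C ⊆ D)
    {c : ModTwoChain A} (hc : c ∈ carriedChains 𝒞 k) : X a * c ∈ carriedChains 𝒞' (k + 1) := by
  classical
  refine map_mem_of_mem_carriedChains (T := .mulLeft _ (X a)) (fun m hm C hC hmC => ?_) hc
  obtain ⟨D, hD, haD⟩ := h C hC
  rw [LinearMap.mulLeft_apply, X, monomial_mul, one_mul]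
  refine monomial_mem_carriedChains.2 ⟨by simp [hm, add_comm], D, hD, fun b hb => haD ?_⟩
  obtain hb | hb := Finset.mem_union.1 (Finsupp.support_add hb)
  · exact .inl (Finset.mem_singleton.1 (Finsupp.support_single_subset hb))
  · exact .inr (hmC hb)

lemma rename_mem_carriedChains {f : A → B} (h : ∀ C ∈ 𝒞, ∃ D ∈ 𝒟, Set.MapsTo f C D)
    {c : ModTwoChain A} (hc : c ∈ carriedChains 𝒞 k) : rename f c ∈ carriedChains 𝒟 k := by
  classical
  refine map_mem_of_mem_carriedChains (T := (rename f).toLinearMap) (fun m hm C hC hmC => ?_) hc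
  obtain ⟨D, hD, hCD⟩ := h C hC
  rw [AlgHom.toLinearMap_apply, rename_monomial]
  refine monomial_mem_carriedChains.2 ⟨by rw [Finsupp.degree_mapDomain, hm], D, hD, fun b hb => ?_⟩
  obtain ⟨a, ha, rfl⟩ := Finset.mem_image.1 (Finsupp.mapDomain_support hb)
  exact hCD (hmC ha)

lemma rename_congr {f g : A → B} (h : ∀ C ∈ 𝒞, Set.EqOn f g C) {c : ModTwoChain A}
    (hc : c ∈ carriedChains 𝒞 k) : rename f c = rename g c := by
  refine eq_of_mem_carriedChains (T := (rename f).toLinearMap) (U := (rename g).toLinearMap)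
    (fun m _ C hC hmC => ?_) hc
  simp only [AlgHom.toLinearMap_apply, rename_monomial]
  rw [Finsupp.mapDomain_congr fun a ha => h C hC (hmC ha)]

open scoped Classical in
/-- The values of `coneExtend` on simplices. -/
noncomputable def coneExtendMonomial (apex : (m : A →₀ ℕ) → m ≠ 0 → B) (c₀ : ModTwoChain B)
    (L : ModTwoChain A →ₗ[ZMod 2] ModTwoChain B) (m : A →₀ ℕ) : ModTwoChain B :=
  if hm : m = 0 then c₀ else
    X (apex m hm) * (L (monomial m 1) +
      ∑ a : m.support, (m a : ZMod 2) • coneExtendMonomial apex c₀ L (m - .single (a : A) 1))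
termination_by m.degree
decreasing_by
  have := degree_sub_single_add_one a.2
  lia

/-- The linear map `Φ` with `Φ 1 = c₀` that sends every other simplex `m` to the cone with apex
`apex m` over `L m + Φ (boundary m)`. -/
noncomputable def coneExtend (apex : (m : A →₀ ℕ) → m ≠ 0 → B) (c₀ : ModTwoChain B)
    (L : ModTwoChain A →ₗ[ZMod 2] ModTwoChain B) : ModTwoChain A →ₗ[ZMod 2] ModTwoChain B :=
  (basisMonomials A (ZMod 2)).constr (ZMod 2) (coneExtendMonomial apex c₀ L)

section coneExtend

variable (apex : (m : A →₀ ℕ) → m ≠ 0 → B) (c₀ : ModTwoChain B)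
  (L : ModTwoChain A →ₗ[ZMod 2] ModTwoChain B)

lemma coneExtend_monomial (m : A →₀ ℕ) :
    coneExtend apex c₀ L (monomial m 1) = coneExtendMonomial apex c₀ L m := by
  rw [coneExtend, constr_basisMonomials_monomial]

@[simp]
lemma coneExtend_one : coneExtend apex c₀ L 1 = c₀ := by
  rw [← C_1, ← monomial_zero', coneExtend_monomial, coneExtendMonomial, dif_pos rfl]

lemma coneExtend_monomial_of_ne_zero {m : A →₀ ℕ} (hm : m ≠ 0) :
    coneExtend apex c₀ L (monomial m 1) =
      X (apex m hm) * (L (monomial m 1) + coneExtend apex c₀ L (boundary (monomial m 1))) := by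
  rw [coneExtend_monomial, coneExtendMonomial, dif_neg hm, boundary_monomial, map_sum]
  simp only [map_smul, coneExtend_monomial]
  congr 2
  exact Finset.sum_coe_sort m.support
    fun a => (m a : ZMod 2) • coneExtendMonomial apex c₀ L (m - .single a 1)

end coneExtend

section contiguityHomotopy

variable (f g : A → B)

/-- A chain homotopy between `rename f` and `rename g` that maps the simplices with vertices in `C`
to chains with vertices in `f '' C ∪ g '' C`. -/
noncomputable def contiguityHomotopy : ModTwoChain A →ₗ[ZMod 2] ModTwoChain B :=
  coneExtend (fun _ hm => f (Finsupp.support_nonempty_iff.2 hm).choose) 0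
    ((rename f).toLinearMap + (rename g).toLinearMap)

lemma boundary_contiguityHomotopy (c : ModTwoChain A) :
    boundary (contiguityHomotopy f g c) + contiguityHomotopy f g (boundary c) =
      rename f c + rename g c := by
  set h := contiguityHomotopy f g with hh
  suffices boundary.toLinearMap ∘ₗ h + h ∘ₗ boundary.toLinearMap =
    (rename f).toLinearMap + (rename g).toLinearMap from LinearMap.congr_fun this c
  refine linearMap_ext_of_boundary fun m hm => ?_
  simp only [LinearMap.add_apply, LinearMap.comp_apply, Derivation.coeFn_coe, boundary_boundary,
    map_zero, add_zero, AlgHom.toLinearMap_apply] at hm ⊢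
  obtain rfl | hm₀ := eq_or_ne m 0
  · simp [hh, contiguityHomotopy, CharTwo.add_self_eq_zero]
  · conv_lhs => rw [hh, contiguityHomotopy, coneExtend_monomial_of_ne_zero _ _ _ hm₀]
    rw [← contiguityHomotopy, ← hh, boundary_X_mul, map_add, hm]
    simp [boundary_rename, CharTwo.add_self_eq_zero, add_assoc]

lemma contiguityHomotopy_mem_carriedChains
    (h : ∀ C ∈ 𝒞, ∃ D ∈ 𝒟, Set.MapsTo f C D ∧ Set.MapsTo g C D)
    {c : ModTwoChain A} (hc : c ∈ carriedChains 𝒞 k) :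
    contiguityHomotopy f g c ∈ carriedChains 𝒟 (k + 1) := by
  induction k generalizing 𝒞 𝒟 c with
  | zero =>
    refine map_mem_of_mem_carriedChains (fun m hm _ _ _ => ?_) hc
    obtain rfl := (Finsupp.degree_eq_zero_iff m).1 hm
    rw [monomial_zero', C_1, contiguityHomotopy, coneExtend_one]
    exact zero_mem _
  | succ k ih =>
    refine map_mem_of_mem_carriedChains (fun m hm C hC hmC => ?_) hc
    obtain ⟨D, hD, hf, hg⟩ := h C hC
    have hm₀ : m ≠ 0 := by rintro rfl; simp at hm
    have hmem : monomial m 1 ∈ carriedChains {C} (k + 1) :=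
      monomial_mem_carriedChains.2 ⟨hm, C, rfl, hmC⟩
    rw [contiguityHomotopy, coneExtend_monomial_of_ne_zero _ _ _ hm₀, ← contiguityHomotopy]
    refine X_mul_mem_carriedChains (𝒞 := {D}) ?_ (add_mem (add_mem ?_ ?_) ?_)
    · simpa using ⟨D, hD, Set.insert_subset (hf (hmC (Finset.mem_coe.2
        (Finsupp.support_nonempty_iff.2 hm₀).choose_spec))) subset_rfl⟩
    · exact rename_mem_carriedChains (by simpa using hf) hmem
    · exact rename_mem_carriedChains (by simpa using hg) hmem
    · exact ih (by simpa using ⟨hf, hg⟩) (boundary_mem_carriedChains hmem)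

end contiguityHomotopy

end chains

/-! ### Barycentric subdivision -/

section subdivision

variable {k : ℕ}

variable {E F : Type*} [NormedAddCommGroup E] [NormedSpace ℝ E]
  [NormedAddCommGroup F] [NormedSpace ℝ F]

/-- The barycentre of a simplex, its vertices being counted with multiplicity. -/
noncomputable def barycenter (m : E →₀ ℕ) : E :=
  (m.degree : ℝ)⁻¹ • m.sum fun a j => j • a

/-- Barycentric subdivision. -/
noncomputable def subdivision : ModTwoChain E →ₗ[ZMod 2] ModTwoChain E :=
  coneExtend (fun m _ => barycenter m) 1 0

lemma subdivision_monomial {m : E →₀ ℕ} (hm : m ≠ 0) :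
    subdivision (monomial m 1) = X (barycenter m) * subdivision (boundary (monomial m 1)) := by
  rw [subdivision, coneExtend_monomial_of_ne_zero _ _ _ hm, LinearMap.zero_apply, zero_add]

@[simp]
lemma subdivision_one : subdivision (1 : ModTwoChain E) = 1 :=
  coneExtend_one _ _ _

lemma boundary_subdivision (c : ModTwoChain E) :
    boundary (subdivision c) = subdivision (boundary c) := by
  suffices boundary.toLinearMap ∘ₗ subdivision = subdivision (E := E) ∘ₗ boundary.toLinearMap from
    LinearMap.congr_fun this c
  refine linearMap_ext_of_boundary fun m hm => ?_
  simp only [LinearMap.comp_apply, Derivation.coeFn_coe, boundary_boundary, map_zero] at hm ⊢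
  obtain rfl | hm₀ := eq_or_ne m 0
  · simp
  · rw [subdivision_monomial hm₀, boundary_X_mul, hm, mul_zero, add_zero]

lemma barycenter_mapDomain (f : E →ₗ[ℝ] F) (m : E →₀ ℕ) :
    barycenter (m.mapDomain f) = f (barycenter m) := by
  rw [barycenter, Finsupp.degree_mapDomain, Finsupp.sum_mapDomain_index (by simp)
    fun _ _ _ => add_smul _ _ _, barycenter, map_smul, map_finsuppSum]
  simp only [map_nsmul]

lemma subdivision_rename (f : E →ₗ[ℝ] F) (c : ModTwoChain E) :
    subdivision (rename f c) = rename f (subdivision c) := by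
  suffices subdivision ∘ₗ (rename f).toLinearMap = (rename f).toLinearMap ∘ₗ subdivision from
    LinearMap.congr_fun this c
  refine linearMap_ext_of_boundary fun m hm => ?_
  simp only [LinearMap.comp_apply, AlgHom.toLinearMap_apply] at hm ⊢
  obtain rfl | hm₀ := eq_or_ne m 0
  · simp
  · have hfm : m.mapDomain f ≠ 0 := by
      rwa [Ne, ← Finsupp.degree_eq_zero_iff, Finsupp.degree_mapDomain, Finsupp.degree_eq_zero_iff]
    rw [subdivision_monomial hm₀, map_mul, rename_X, ← hm, rename_monomial,
      subdivision_monomial hfm, barycenter_mapDomain, ← boundary_rename, rename_monomial]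

lemma barycenter_mem_convexHull {m : E →₀ ℕ} (hm : m ≠ 0) :
    barycenter m ∈ convexHull ℝ (m.support : Set E) := by
  have hcast : (m.degree : ℝ) = ∑ a ∈ m.support, (m a : ℝ) := by
    rw [Finsupp.degree_apply, Nat.cast_sum]
  have hpos : 0 < m.degree := Nat.pos_of_ne_zero ((Finsupp.degree_eq_zero_iff m).not.2 hm)
  convert m.support.centerMass_id_mem_convexHull (R := ℝ) (w := fun a => (m a : ℝ))
    (fun _ _ => Nat.cast_nonneg _) (by rw [← hcast]; exact_mod_cast hpos) using 1
  simp [barycenter, Finset.centerMass, hcast, Finsupp.sum, Nat.cast_smul_eq_nsmul]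

lemma dist_barycenter_le {m : E →₀ ℕ} {a : E} (ha : a ∈ m.support) {δ : ℝ}
    (h : ∀ b ∈ m.support, dist a b ≤ δ) :
    dist a (barycenter m) ≤ (1 - (m.degree : ℝ)⁻¹) * δ := by
  obtain ⟨m', rfl⟩ : ∃ m', m = .single a 1 + m' :=
    ⟨m - .single a 1, by
      rw [add_comm, Finsupp.sub_add_single_one_cancel (Finsupp.mem_support_iff.1 ha)]⟩
  have hK : (0 : ℝ) < 1 + m'.degree := by positivity
  have hsum : a - barycenter (.single a 1 + m') =
      (1 + m'.degree : ℝ)⁻¹ • ∑ b ∈ m'.support, m' b • (a - b) := by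
    rw [eq_inv_smul_iff₀ hK.ne', barycenter, map_add, Finsupp.degree_single, Nat.cast_add,
      Nat.cast_one, smul_sub, smul_inv_smul₀ hK.ne', Finsupp.sum_add_index' (by simp)
      (by simp [add_smul]), Finsupp.sum_single_index (by simp), Finsupp.degree_apply]
    simp [smul_sub, Finsupp.sum, add_smul, Finset.sum_smul, Nat.cast_smul_eq_nsmul]
  have hnorm : ‖∑ b ∈ m'.support, m' b • (a - b)‖ ≤ m'.degree * δ := by
    rw [Finsupp.degree_apply, Nat.cast_sum, Finset.sum_mul]
    refine norm_sum_le_of_le _ fun b hb => (norm_nsmul_le ..).trans ?_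
    rw [← dist_eq_norm]
    gcongr
    exact h b (Finsupp.support_mono le_add_self hb)
  rw [dist_eq_norm, hsum, norm_smul, Real.norm_of_nonneg (by positivity), map_add,
    Finsupp.degree_single]
  calc (1 + m'.degree : ℝ)⁻¹ * _ ≤ (1 + m'.degree : ℝ)⁻¹ * (m'.degree * δ) := by gcongr
    _ = _ := by push_cast; field_simp; ring

/-- The sets of diameter at most `δ` in the convex hull of a member of `𝒞`. -/
def smallSubsets (𝒞 : Set (Set E)) (δ : ℝ) : Set (Set E) :=
  {D | (∃ C ∈ 𝒞, D ⊆ convexHull ℝ C) ∧ ∀ x ∈ D, ∀ y ∈ D, dist x y ≤ δ}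

lemma smallSubsets_smallSubsets_subset {𝒞 : Set (Set E)} {δ ε : ℝ} :
    smallSubsets (smallSubsets 𝒞 δ) ε ⊆ smallSubsets 𝒞 ε := by
  rintro D ⟨⟨D', ⟨⟨C, hC, hD'C⟩, -⟩, hDD'⟩, hD⟩
  exact ⟨⟨C, hC, hDD'.trans (convexHull_min hD'C (convex_convexHull ℝ C))⟩, hD⟩

lemma subdivision_mem_carriedChains {𝒞 : Set (Set E)} {δ : ℝ} {K : ℕ} (hkK : k ≤ K)
    (h𝒞 : ∀ C ∈ 𝒞, ∀ x ∈ C, ∀ y ∈ C, dist x y ≤ δ) {c : ModTwoChain E}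
    (hc : c ∈ carriedChains 𝒞 k) :
    subdivision c ∈ carriedChains (smallSubsets 𝒞 ((1 - (K : ℝ)⁻¹) * δ)) k := by
  induction k generalizing 𝒞 c with
  | zero =>
    refine map_mem_of_mem_carriedChains (fun m hm C hC hmC => ?_) hc
    obtain rfl := (Finsupp.degree_eq_zero_iff m).1 hm
    rw [monomial_zero', C_1, subdivision_one, ← C_1, ← monomial_zero']
    exact monomial_mem_carriedChains.2 ⟨hm, ∅, ⟨⟨C, hC, by simp⟩, by simp⟩, by simp⟩
  | succ k ih =>
    refine map_mem_of_mem_carriedChains (fun m hm C hC hmC => ?_) hc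
    have hm₀ : m ≠ 0 := by rintro rfl; simp at hm
    obtain ⟨v, hv⟩ := Finsupp.support_nonempty_iff.2 hm₀
    have hδ : 0 ≤ δ := by simpa using h𝒞 C hC v (hmC hv) v (hmC hv)
    have hball : convexHull ℝ (m.support : Set E) ⊆
        Metric.closedBall (barycenter m) ((1 - (K : ℝ)⁻¹) * δ) := by
      refine convexHull_min (fun a ha => ?_) (convex_closedBall _ _)
      refine (dist_barycenter_le ha fun b hb => h𝒞 C hC a (hmC ha) b (hmC hb)).trans ?_
      rw [hm]
      gcongr
    have hface : monomial m 1 ∈ carriedChains {(m.support : Set E)} (k + 1) :=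
      monomial_mem_carriedChains.2 ⟨hm, _, rfl, subset_rfl⟩
    rw [subdivision_monomial hm₀]
    refine X_mul_mem_carriedChains (fun D hD => ?_) (ih (by lia) ?_
      (boundary_mem_carriedChains hface))
    · obtain ⟨⟨_, rfl, hDm⟩, hDδ⟩ := hD
      have hbary := barycenter_mem_convexHull hm₀
      refine ⟨insert (barycenter m) D, ⟨⟨C, hC, ?_⟩, ?_⟩, subset_rfl⟩
      · exact (Set.insert_subset hbary hDm).trans (convexHull_mono hmC)
      · rintro x (rfl | hx) y (rfl | hy)
        · exact Metric.mem_closedBall.1 (hball hbary)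
        · exact Metric.mem_closedBall'.1 (hball (hDm hy))
        · exact Metric.mem_closedBall.1 (hball (hDm hx))
        · exact hDδ x hx y hy
    · rintro _ rfl x hx y hy
      exact h𝒞 C hC x (hmC hx) y (hmC hy)

lemma subdivision_pow_mem_carriedChains {𝒞 : Set (Set E)} {δ : ℝ}
    (h𝒞 : ∀ C ∈ 𝒞, ∀ x ∈ C, ∀ y ∈ C, dist x y ≤ δ) {c : ModTwoChain E}
    (hc : c ∈ carriedChains 𝒞 k) (M : ℕ) :
    (subdivision ^ M) c ∈
      carriedChains (smallSubsets 𝒞 ((1 - ((k + 1 : ℕ) : ℝ)⁻¹) ^ M * δ)) k := by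
  induction M with
  | zero =>
    simp only [pow_zero, one_mul, Module.End.one_apply]
    refine mem_carriedChains_of_subset (fun C hC => ?_) hc
    exact ⟨C, ⟨⟨C, hC, subset_convexHull ℝ C⟩, h𝒞 C hC⟩, subset_rfl⟩
  | succ M ih =>
    rw [pow_succ' subdivision, Module.End.mul_apply, pow_succ', mul_assoc]
    refine mem_carriedChains_of_subset (fun D hD => ?_)
      (subdivision_mem_carriedChains k.le_succ (fun D hD => hD.2) ih)
    exact ⟨D, smallSubsets_smallSubsets_subset hD, subset_rfl⟩

lemma eventually_subdivision_pow_mem_carriedChains {𝒞 : Set (Set E)} {Δ δ : ℝ} (hδ : 0 < δ)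
    (h𝒞 : ∀ C ∈ 𝒞, ∀ x ∈ C, ∀ y ∈ C, dist x y ≤ Δ) {c : ModTwoChain E}
    (hc : c ∈ carriedChains 𝒞 k) :
    ∀ᶠ M in Filter.atTop, (subdivision ^ M) c ∈ carriedChains (smallSubsets 𝒞 δ) k := by
  have hlim := (tendsto_pow_atTop_nhds_zero_of_lt_one (r := 1 - ((k + 1 : ℕ) : ℝ)⁻¹)
    (sub_nonneg.2 (Nat.cast_inv_le_one _)) (sub_lt_self _ (by positivity))).mul_const Δ
  rw [zero_mul] at hlim
  filter_upwards [hlim.eventually_le_const hδ] with M hM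
  refine mem_carriedChains_of_subset (fun D hD => ?_) (subdivision_pow_mem_carriedChains h𝒞 hc M)
  exact ⟨D, ⟨hD.1, fun x hx y hy => (hD.2 x hx y hy).trans hM⟩, subset_rfl⟩

lemma boundary_subdivision_pow (M : ℕ) (c : ModTwoChain E) :
    boundary ((subdivision ^ M) c) = (subdivision ^ M) (boundary c) := by
  induction M with
  | zero => rfl
  | succ M ih => simp only [pow_succ', Module.End.mul_apply, boundary_subdivision, ih]

lemma subdivision_pow_rename (f : E →ₗ[ℝ] E) (M : ℕ) (c : ModTwoChain E) :
    (subdivision ^ M) (rename f c) = rename f ((subdivision ^ M) c) := by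
  induction M with
  | zero => rfl
  | succ M ih => simp only [pow_succ', Module.End.mul_apply, subdivision_rename, ih]

end subdivision

/-! ### Ky Fan's alternating simplices -/

lemma induction_on_min_vertex {A : Type*} [LinearOrder A] {P : (A →₀ ℕ) → Prop} (zero : P 0)
    (single_add : ∀ (a : A) (m : A →₀ ℕ), ↑m.support ⊆ Set.Ici a → P m → P (.single a 1 + m))
    (m : A →₀ ℕ) : P m := by
  induction hk : m.degree generalizing m with
  | zero => rwa [(Finsupp.degree_eq_zero_iff m).1 hk]
  | succ k ih =>
    have hm : m.support.Nonempty := by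
      rw [Finsupp.support_nonempty_iff]
      rintro rfl
      simp at hk
    have ha := m.support.min'_mem hm
    have hsplit := Finsupp.sub_add_single_one_cancel (Finsupp.mem_support_iff.1 ha)
    rw [← hsplit, add_comm]
    refine single_add _ _ (fun v hv => m.support.min'_le v ?_) (ih _ ?_)
    · exact Finsupp.support_mono tsub_le_self hv
    · grind [degree_sub_single_add_one]

section alternatingCount

variable {ι : Type*} [LinearOrder ι]

/-- The indicator function of the lists of signed labels whose signs alternate and start with
`b`. -/
def alternatingIndicator : Bool → List (ι ×ₗ Bool) → ZMod 2
  | _, [] => 1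
  | b, a :: l => if (ofLex a).2 = b then alternatingIndicator (!b) l else 0

/-- Ky Fan's functional: the number, mod `2`, of simplices in a chain of signed labels whose signs,
ordered by increasing label, alternate and start with `b`. -/
noncomputable def alternatingCount (b : Bool) : ModTwoChain (ι ×ₗ Bool) →ₗ[ZMod 2] ZMod 2 :=
  (basisMonomials _ (ZMod 2)).constr (ZMod 2) fun m => alternatingIndicator b m.toMultiset.sort

lemma alternatingCount_monomial (b : Bool) (m : ι ×ₗ Bool →₀ ℕ) :
    alternatingCount b (monomial m 1) = alternatingIndicator b m.toMultiset.sort := by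
  rw [alternatingCount, constr_basisMonomials_monomial]

@[simp]
lemma alternatingCount_one (b : Bool) :
    alternatingCount b (1 : ModTwoChain (ι ×ₗ Bool)) = 1 := by
  rw [← C_1, ← monomial_zero', alternatingCount_monomial, map_zero, Multiset.sort_zero,
    alternatingIndicator]

variable {k : ℕ} {𝒞 : Set (Set (ι ×ₗ Bool))}

lemma alternatingCount_X_mul (b : Bool) {a : ι ×ₗ Bool} {c : ModTwoChain (ι ×ₗ Bool)}
    (hc : c ∈ carriedChains {Set.Ici a} k) :
    alternatingCount b (X a * c) = if (ofLex a).2 = b then alternatingCount (!b) c else 0 := by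
  suffices (alternatingCount b ∘ₗ .mulLeft _ (X a)) c =
      (if (ofLex a).2 = b then alternatingCount (!b) else 0 : ModTwoChain _ →ₗ[ZMod 2] ZMod 2) c by
    simpa [apply_ite (fun T : ModTwoChain _ →ₗ[ZMod 2] ZMod 2 => T c)] using this
  refine eq_of_mem_carriedChains (fun m _ C hC hmC => ?_) hc
  obtain rfl := hC
  have hmin : ∀ v ∈ m.toMultiset, a ≤ v := fun v hv => hmC ((Finsupp.mem_toMultiset m v).1 hv)
  have hcone : X a * monomial m 1 = monomial (.single a 1 + m) (1 : ZMod 2) := by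
    rw [monomial_single_add, pow_one]
  simp only [LinearMap.comp_apply, LinearMap.mulLeft_apply, hcone,
    alternatingCount_monomial, map_add, Finsupp.toMultiset_single, one_smul,
    Multiset.singleton_add]
  rw [Multiset.sort_cons _ _ _ hmin, alternatingIndicator]
  split_ifs <;> simp [alternatingCount_monomial]

lemma alternatingCount_boundary (b : Bool) (c : ModTwoChain (ι ×ₗ Bool)) :
    alternatingCount b (boundary c) = alternatingCount b c + alternatingCount (!b) c := by
  suffices ∀ b, alternatingCount b ∘ₗ boundary.toLinearMap =
    alternatingCount (ι := ι) b + alternatingCount (!b) from LinearMap.congr_fun (this b) c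
  intro b
  refine (basisMonomials _ (ZMod 2)).ext fun m => ?_
  simp only [coe_basisMonomials, LinearMap.comp_apply, Derivation.coeFn_coe, LinearMap.add_apply]
  induction m using induction_on_min_vertex generalizing b with
  | zero => simp [CharTwo.add_self_eq_zero]
  | single_add a m hm ih =>
    have hmem : monomial m 1 ∈ carriedChains {Set.Ici a} m.degree :=
      monomial_mem_carriedChains.2 ⟨rfl, _, rfl, hm⟩
    rw [monomial_single_add, pow_one, boundary_X_mul, map_add, alternatingCount_X_mul _ hmem,
      alternatingCount_X_mul _ hmem, alternatingCount_X_mul _ (boundary_mem_carriedChains hmem), ih]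
    cases b <;> cases (ofLex a).2 <;> simp <;> grind

/-- No two labels in `C` differ only in their signs, as is the case for the labels of close points
in Tucker's lemma. -/
def IsAntipodeFree (C : Set (ι ×ₗ Bool)) : Prop :=
  Set.InjOn (fun a => (ofLex a).1) C

/-- The label with the opposite sign. -/
def antipode (a : ι ×ₗ Bool) : ι ×ₗ Bool :=
  toLex ((ofLex a).1, !(ofLex a).2)

lemma antipode_le_antipode {C : Set (ι ×ₗ Bool)} (hC : IsAntipodeFree C) {a b : ι ×ₗ Bool}
    (ha : a ∈ C) (hb : b ∈ C) (hab : a ≤ b) : antipode a ≤ antipode b := by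
  obtain h | ⟨h, -⟩ := Prod.Lex.le_iff.1 hab
  · exact Prod.Lex.le_iff.2 (.inl h)
  · exact (congrArg antipode (hC ha hb h)).le

lemma alternatingCount_rename_antipode (h𝒞 : ∀ C ∈ 𝒞, IsAntipodeFree C) (b : Bool)
    {c : ModTwoChain (ι ×ₗ Bool)} (hc : c ∈ carriedChains 𝒞 k) :
    alternatingCount b (rename antipode c) = alternatingCount (!b) c := by
  rw [← AlgHom.toLinearMap_apply, ← LinearMap.comp_apply]
  refine eq_of_mem_carriedChains ?_ hc
  simp only [LinearMap.comp_apply, AlgHom.toLinearMap_apply]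
  rintro m - C hC hmC
  induction m using induction_on_min_vertex generalizing b with
  | zero => simp
  | single_add a m hm ih =>
    have haC : a ∈ C := hmC (by simp)
    have hm' : ↑m.support ⊆ C := .trans (Finset.coe_subset.2 (Finsupp.support_mono le_add_self)) hmC
    have hmem : monomial m 1 ∈ carriedChains {C ∩ Set.Ici a} m.degree :=
      monomial_mem_carriedChains.2 ⟨rfl, _, rfl, Set.subset_inter hm' hm⟩
    have hren : rename antipode (monomial m 1) ∈ carriedChains {Set.Ici (antipode a)} m.degree := by
      refine rename_mem_carriedChains ?_ hmem
      rintro _ rfl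
      exact ⟨_, rfl, fun v hv => antipode_le_antipode (h𝒞 C hC) haC hv.1 hv.2⟩
    rw [monomial_single_add, pow_one, map_mul, rename_X, alternatingCount_X_mul _ hren,
      alternatingCount_X_mul _ (mem_carriedChains_of_subset (by simp) hmem), ih _ hm']
    simp [antipode, Bool.not_eq_eq_eq_not]

lemma alternatingCount_monomial_eq_zero (b : Bool) {s : Finset ι} {m : ι ×ₗ Bool →₀ ℕ}
    (hfree : IsAntipodeFree (m.support : Set (ι ×ₗ Bool)))
    (hs : ∀ a ∈ m.support, (ofLex a).1 ∈ s) (hsm : s.card < m.degree) :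
    alternatingCount b (monomial m 1) = 0 := by
  induction m using induction_on_min_vertex generalizing b s with
  | zero => simp at hsm
  | single_add a m hm ih =>
    have ha : a ∈ (Finsupp.single a 1 + m).support := by simp
    have hsub : m.support ⊆ (Finsupp.single a 1 + m).support := Finsupp.support_mono le_add_self
    have hcarried {m' : ι ×ₗ Bool →₀ ℕ} (hm' : m' ≤ m) :
        monomial m' 1 ∈ carriedChains {Set.Ici a} m'.degree :=
      monomial_mem_carriedChains.2
        ⟨rfl, _, rfl, .trans (Finset.coe_subset.2 (Finsupp.support_mono hm')) hm⟩
    rw [monomial_single_add, pow_one, alternatingCount_X_mul _ (hcarried le_rfl), ite_eq_right_iff]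
    intro hab
    by_cases ham : a ∈ m.support
    · rw [← Finsupp.sub_add_single_one_cancel (Finsupp.mem_support_iff.1 ham), add_comm,
        monomial_single_add, pow_one, alternatingCount_X_mul _ (hcarried tsub_le_self), hab]
      simp
    · refine ih _ (hfree.mono (Finset.coe_subset.2 hsub)) (s := s.erase (ofLex a).1)
        (fun v hv => Finset.mem_erase.2 ⟨fun hva => ?_, hs v (hsub hv)⟩) ?_
      · exact ham (hfree (hsub hv) ha hva ▸ hv)
      · rw [map_add, Finsupp.degree_single] at hsm
        grind [Finset.card_erase_of_mem]

lemma alternatingCount_eq_zero [Fintype ι] (h𝒞 : ∀ C ∈ 𝒞, IsAntipodeFree C)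
    (hk : Fintype.card ι < k) (b : Bool) {c : ModTwoChain (ι ×ₗ Bool)}
    (hc : c ∈ carriedChains 𝒞 k) : alternatingCount b c = 0 := by
  refine eq_of_mem_carriedChains (U := 0) (fun m hm C hC hmC => ?_) hc
  exact alternatingCount_monomial_eq_zero b ((h𝒞 C hC).mono hmC) (s := .univ) (by simp)
    (by rwa [Finset.card_univ, hm])

end alternatingCount

/-! ### Cross-polytopes -/

section crossPolytope

variable {ι : Type*} [DecidableEq ι]

/-- The fundamental cycle of the boundary of the cross-polytope with vertices `±e_j`, `j ∈ s`. -/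
noncomputable def crossPolytope (s : Finset ι) : ModTwoChain (ι → ℝ) :=
  ∏ j ∈ s, (X (Pi.single j 1) + X (-Pi.single j 1))

/-- The vertex sets of the facets of the cross-polytope with vertices `±e_j`, `j ∈ s`. -/
def crossPolytopeFacets (s : Finset ι) : Set (Set (ι → ℝ)) :=
  {C | ∃ σ : ι → ℝ, (∀ j, |σ j| = 1) ∧ C = (fun j => Pi.single j (σ j)) '' s}

lemma rename_neg_crossPolytope (s : Finset ι) :
    rename Neg.neg (crossPolytope s) = crossPolytope s := by
  simp [crossPolytope, add_comm]

lemma crossPolytope_insert {a : ι} {s : Finset ι} (ha : a ∉ s) :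
    crossPolytope (insert a s) =
      X (Pi.single a 1) * crossPolytope s +
        rename Neg.neg (X (Pi.single a 1) * crossPolytope s) := by
  rw [map_mul, rename_neg_crossPolytope, rename_X, ← add_mul, crossPolytope, Finset.prod_insert ha,
    crossPolytope]

lemma boundary_crossPolytope (s : Finset ι) : boundary (crossPolytope s) = 0 := by
  induction s using Finset.induction_on with
  | empty => simp [crossPolytope]
  | insert a s ha ih =>
    rw [crossPolytope_insert ha, map_add, boundary_rename, boundary_X_mul, ih, mul_zero, add_zero,
      rename_neg_crossPolytope, CharTwo.add_self_eq_zero]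

lemma boundary_X_mul_crossPolytope (v : ι → ℝ) (s : Finset ι) :
    boundary (X v * crossPolytope s) = crossPolytope s := by
  rw [boundary_X_mul, boundary_crossPolytope, mul_zero, add_zero]

lemma X_mul_mem_carriedChains_crossPolytopeFacets {a : ι} {s : Finset ι} (ha : a ∉ s) {ε : ℝ}
    (hε : |ε| = 1) {k : ℕ} {c : ModTwoChain (ι → ℝ)}
    (hc : c ∈ carriedChains (crossPolytopeFacets s) k) :
    X (Pi.single a ε) * c ∈ carriedChains (crossPolytopeFacets (insert a s)) (k + 1) := by
  refine X_mul_mem_carriedChains ?_ hc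
  rintro _ ⟨σ, hσ, rfl⟩
  refine ⟨_, ⟨Function.update σ a ε, fun j => ?_, rfl⟩, ?_⟩
  · obtain rfl | hj := eq_or_ne j a
    · rwa [Function.update_self]
    · rw [Function.update_of_ne hj, hσ]
  · rw [Finset.coe_insert, Set.image_insert_eq, Function.update_self]
    refine Set.insert_subset_insert (Set.image_congr fun j hj => ?_).subset
    rw [Function.update_of_ne (ne_of_mem_of_not_mem (Finset.mem_coe.1 hj) ha)]

lemma crossPolytope_mem_carriedChains (s : Finset ι) :
    crossPolytope s ∈ carriedChains (crossPolytopeFacets s) s.card := by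
  induction s using Finset.induction_on with
  | empty =>
    rw [crossPolytope, Finset.prod_empty, ← C_1, ← monomial_zero']
    exact monomial_mem_carriedChains.2 ⟨by simp, _, ⟨1, by simp, rfl⟩, by simp⟩
  | insert a s ha ih =>
    rw [crossPolytope, Finset.prod_insert ha, ← crossPolytope, add_mul, ← Pi.single_neg,
      Finset.card_insert_of_notMem ha]
    exact add_mem (X_mul_mem_carriedChains_crossPolytopeFacets ha (by simp) ih)
      (X_mul_mem_carriedChains_crossPolytopeFacets ha (by simp) ih)

lemma exists_isCompact_superset_crossPolytopeFacets (ι : Type*) [DecidableEq ι] [Fintype ι] :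
    ∃ K : Set (ι → ℝ), IsCompact K ∧ K ⊆ {0}ᶜ ∧
      ∀ C ∈ crossPolytopeFacets (Finset.univ : Finset ι), convexHull ℝ C ⊆ K := by
  refine ⟨Metric.closedBall 0 1 ∩ {x | 1 ≤ ∑ i, |x i|},
    (isCompact_closedBall _ _).inter_right (isClosed_le (by fun_prop) (by fun_prop)),
    fun x hx h0 => ?_, ?_⟩
  · obtain rfl : x = 0 := h0
    have := hx.2
    norm_num at this
  · rintro _ ⟨σ, hσ, rfl⟩
    have hhalf : convexHull ℝ ((fun j => Pi.single j (σ j)) '' (Finset.univ : Finset ι)) ⊆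
        Metric.closedBall 0 1 ∩ {x | 1 ≤ ∑ i, σ i * x i} := by
      refine convexHull_min ?_ ((convex_closedBall _ _).inter
        (convex_halfSpace_ge (f := fun x : ι → ℝ => ∑ i, σ i * x i)
          ⟨fun x y => ?_, fun c x => ?_⟩ 1))
      · rintro _ ⟨j, -, rfl⟩
        simp [Pi.norm_single, hσ, Pi.single_apply, ← abs_mul_abs_self (σ j)]
      · simp [mul_add, Finset.sum_add_distrib]
      · simp [Finset.mul_sum, mul_left_comm]
    refine hhalf.trans (Set.inter_subset_inter_right _ fun x (hx : 1 ≤ ∑ i, σ i * x i) => ?_)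
    exact hx.trans <|
      Finset.sum_le_sum fun i _ => (le_abs_self _).trans (by rw [abs_mul, hσ, one_mul])

variable [Fintype ι]

lemma zero_notMem_of_mem_smallSubsets {δ : ℝ} {D : Set (ι → ℝ)}
    (hD : D ∈ smallSubsets (crossPolytopeFacets .univ) δ) : 0 ∉ D := by
  obtain ⟨K, -, hK0, hK⟩ := exists_isCompact_superset_crossPolytopeFacets ι
  obtain ⟨⟨C, hC, hDC⟩, -⟩ := hD
  exact fun h0 => hK0 (hK C hC (hDC h0)) rfl

lemma crossPolytope_mem_carriedChains_univ (s : Finset ι) :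
    crossPolytope s ∈ carriedChains (crossPolytopeFacets .univ) s.card := by
  refine mem_carriedChains_of_subset ?_ (crossPolytope_mem_carriedChains s)
  rintro _ ⟨σ, hσ, rfl⟩
  exact ⟨_, ⟨σ, hσ, rfl⟩, Set.image_mono (Finset.coe_subset.2 s.subset_univ)⟩

lemma X_mul_crossPolytope_mem_carriedChains {a : ι} {s : Finset ι} (ha : a ∉ s) :
    X (Pi.single a 1) * crossPolytope s ∈
      carriedChains (crossPolytopeFacets .univ) (s.card + 1) := by
  refine mem_carriedChains_of_subset ?_ (X_mul_mem_carriedChains_crossPolytopeFacets ha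
    (abs_one (α := ℝ)) (crossPolytope_mem_carriedChains s))
  rintro _ ⟨σ, hσ, rfl⟩
  exact ⟨_, ⟨σ, hσ, rfl⟩, Set.image_mono (Finset.coe_subset.2 (Finset.subset_univ _))⟩

lemma eventually_subdivision_pow_mem_smallSubsets {δ : ℝ} (hδ : 0 < δ) {k : ℕ}
    {c : ModTwoChain (ι → ℝ)} (hc : c ∈ carriedChains (crossPolytopeFacets .univ) k) :
    ∀ᶠ M in Filter.atTop,
      (subdivision ^ M) c ∈ carriedChains (smallSubsets (crossPolytopeFacets .univ) δ) k := by
  obtain ⟨K, hcomp, -, hK⟩ := exists_isCompact_superset_crossPolytopeFacets ι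
  refine eventually_subdivision_pow_mem_carriedChains (Δ := Metric.diam K) hδ ?_ hc
  exact fun C hC x hx y hy => Metric.dist_le_diam_of_mem hcomp.isBounded
    (hK C hC (subset_convexHull ℝ C hx)) (hK C hC (subset_convexHull ℝ C hy))

lemma subdivision_pow_crossPolytope_insert {a : ι} {s : Finset ι} (ha : a ∉ s) (M : ℕ) :
    (subdivision ^ M) (crossPolytope (insert a s)) =
      (subdivision ^ M) (X (Pi.single a 1) * crossPolytope s) +
        rename Neg.neg ((subdivision ^ M) (X (Pi.single a 1) * crossPolytope s)) := by
  rw [crossPolytope_insert ha, map_add]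
  exact congrArg _ (subdivision_pow_rename (-LinearMap.id) M _)

end crossPolytope

/-! ### Maps between punctured vector spaces -/

section signLabel

variable {ι : Type*} [Fintype ι] [Nonempty ι]

/-- A coordinate of `w` of maximal absolute value, depending only on the absolute values. -/
noncomputable def maxCoord (w : ι → ℝ) : ι :=
  (Finite.exists_max fun i => |w i|).choose

lemma norm_eq_abs_maxCoord (w : ι → ℝ) : ‖w‖ = |w (maxCoord w)| :=
  le_antisymm ((pi_norm_le_iff_of_nonneg (abs_nonneg _)).2
    (Finite.exists_max fun i => |w i|).choose_spec) (norm_le_pi_norm w _)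

@[simp]
lemma maxCoord_neg (w : ι → ℝ) : maxCoord (-w) = maxCoord w := by
  simp only [maxCoord, Pi.neg_apply, abs_neg]

lemma apply_maxCoord_ne_zero {w : ι → ℝ} (hw : w ≠ 0) : w (maxCoord w) ≠ 0 := by
  rwa [← abs_ne_zero, ← norm_eq_abs_maxCoord, norm_ne_zero_iff]

/-- Tucker labelling of the nonzero vectors: the dominant coordinate together with its sign. -/
noncomputable def signLabel (w : ι → ℝ) : ι ×ₗ Bool :=
  toLex (maxCoord w, decide (0 < w (maxCoord w)))

lemma signLabel_neg {w : ι → ℝ} (hw : w ≠ 0) : signLabel (-w) = antipode (signLabel w) := by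
  simp only [signLabel, antipode, maxCoord_neg, Pi.neg_apply, Left.neg_pos_iff, ofLex_toLex,
    ← decide_not, not_lt, (apply_maxCoord_ne_zero hw).le_iff_lt]

lemma isAntipodeFree_image_signLabel {S : Set (ι → ℝ)} {η : ℝ} (hη : ∀ w ∈ S, η ≤ ‖w‖)
    (hS : ∀ w ∈ S, ∀ w' ∈ S, dist w w' < η) : IsAntipodeFree (signLabel '' S) := by
  rintro _ ⟨w, hw, rfl⟩ _ ⟨w', hw', rfl⟩ (h : maxCoord w = maxCoord w')
  have h1 := hη w hw
  have h2 := hη w' hw'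
  have h3 := (norm_le_pi_norm (w - w') (maxCoord w)).trans_lt ((dist_eq_norm w w') ▸ hS w hw w' hw')
  rw [norm_eq_abs_maxCoord] at h1 h2
  rw [← h] at h2
  rw [Pi.sub_apply, Real.norm_eq_abs] at h3
  have hsign : 0 < w (maxCoord w) ↔ 0 < w' (maxCoord w) := by grind
  rw [signLabel, signLabel, ← h, decide_eq_decide.2 hsign]

lemma exists_forall_isAntipodeFree {X : Type*} [PseudoMetricSpace X] {S : Set X}
    (hS : IsCompact S) {φ : X → ι → ℝ} (hφ : ContinuousOn φ S) (h0 : ∀ x ∈ S, φ x ≠ 0) :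
    ∃ δ > 0, ∀ D ⊆ S, (∀ x ∈ D, ∀ y ∈ D, dist x y ≤ δ) →
      IsAntipodeFree (signLabel '' (φ '' D)) := by
  obtain ⟨η, hη, hφη⟩ := hS.exists_forall_le' hφ.norm fun x hx => norm_pos_iff.2 (h0 x hx)
  obtain ⟨δ, hδ, h⟩ := Metric.uniformContinuousOn_iff_le.1
    (hS.uniformContinuousOn_of_continuous hφ) (η / 2) (half_pos hη)
  refine ⟨δ, hδ, fun D hDS hD => isAntipodeFree_image_signLabel (η := η) ?_ ?_⟩
  · rintro _ ⟨x, hx, rfl⟩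
    exact hφη x (hDS hx)
  · rintro _ ⟨x, hx, rfl⟩ _ ⟨y, hy, rfl⟩
    exact (h x (hDS hx) y (hDS hy) (hD x hx y hy)).trans_lt (half_lt_self hη)

variable [DecidableEq ι]

lemma exists_forall_isAntipodeFree_smallSubsets {T : Type*} [PseudoMetricSpace T] [CompactSpace T]
    {Φ : T → (ι → ℝ) → ι → ℝ} (hΦ : ContinuousOn (Function.uncurry Φ) (.univ ×ˢ {0}ᶜ))
    (h0 : ∀ t, ∀ x ≠ 0, Φ t x ≠ 0) :
    ∃ δ > 0, ∀ D ∈ smallSubsets (crossPolytopeFacets .univ) δ, ∀ t t', dist t t' ≤ δ →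
      IsAntipodeFree (signLabel '' (Φ t '' D ∪ Φ t' '' D)) := by
  obtain ⟨K, hcomp, hK0, hK⟩ := exists_isCompact_superset_crossPolytopeFacets ι
  obtain ⟨δ, hδ, h⟩ := exists_forall_isAntipodeFree (isCompact_univ.prod hcomp)
    (hΦ.mono (Set.prod_mono_right hK0)) fun x hx => h0 x.1 x.2 (hK0 hx.2)
  refine ⟨δ, hδ, ?_⟩
  rintro D ⟨⟨C, hC, hDC⟩, hD⟩ t t' htt'
  convert h ({t, t'} ×ˢ D) (Set.prod_mono (Set.subset_univ _) (hDC.trans (hK C hC))) ?_ using 2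
  · simp [Set.insert_prod, Set.image_union, Set.image_image]
  · rintro ⟨s, x⟩ ⟨hs, hx⟩ ⟨s', y⟩ ⟨hs', hy⟩
    refine max_le ?_ (hD x hx y hy)
    obtain rfl | rfl := hs <;> obtain rfl | rfl := hs'
    exacts [(dist_self _).trans_le hδ.le, htt', (dist_comm _ _).trans_le htt',
      (dist_self _).trans_le hδ.le]

end signLabel

section parity

variable {ι : Type*} [LinearOrder ι] [Fintype ι] [Nonempty ι]

/-- The degree mod `2` of `F`, read off from the sign labels of the images of the vertices of the
`M`-th subdivision of a cross-polytope; it is meaningful once `M` is large. -/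
noncomputable def parity (F : (ι → ℝ) → ι → ℝ) (M : ℕ) : ZMod 2 :=
  alternatingCount true (rename (signLabel ∘ F) ((subdivision ^ M) (crossPolytope .univ)))

lemma parity_of_even {F : (ι → ℝ) → ι → ℝ} (hF : ∀ x, F (-x) = F x) (M : ℕ) :
    parity F M = 0 := by
  have a := Classical.arbitrary ι
  have hcomp : signLabel ∘ F ∘ Neg.neg = signLabel ∘ F := by
    funext x
    simp [hF]
  rw [parity, ← Finset.insert_erase (Finset.mem_univ a),
    subdivision_pow_crossPolytope_insert (Finset.notMem_erase a _), map_add, rename_rename,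
    Function.comp_assoc, hcomp, CharTwo.add_self_eq_zero, map_zero]

lemma eventually_alternatingCount_eq_one {F : (ι → ℝ) → ι → ℝ} (hF : ContinuousOn F {0}ᶜ)
    (h0 : ∀ x ≠ 0, F x ≠ 0) (hodd : ∀ x ≠ 0, F (-x) = -F x) (s : Finset ι) :
    ∀ᶠ M in Filter.atTop, ∀ b, alternatingCount b
      (rename (signLabel ∘ F) ((subdivision ^ M) (crossPolytope s))) = 1 := by
  obtain ⟨δ, hδ, hfree⟩ := exists_forall_isAntipodeFree_smallSubsets (T := Unit)
    (Φ := fun _ => F) (hF.comp continuousOn_snd fun x hx => hx.2) fun _ => h0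
  have hanti : ∀ D ∈ smallSubsets (crossPolytopeFacets .univ) δ,
      Set.EqOn (signLabel ∘ F ∘ Neg.neg) (antipode ∘ signLabel ∘ F) D := fun D hD x hx => by
    have hx0 : x ≠ 0 := ne_of_mem_of_not_mem hx (zero_notMem_of_mem_smallSubsets hD)
    simp [hodd x hx0, signLabel_neg (h0 x hx0)]
  induction s using Finset.induction_on with
  | empty =>
    refine .of_forall fun M b => ?_
    rw [crossPolytope, Finset.prod_empty, Module.End.pow_apply,
      Function.iterate_fixed subdivision_one, map_one, alternatingCount_one]
  | insert a s ha ih =>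
    filter_upwards [ih, eventually_subdivision_pow_mem_smallSubsets hδ
      (X_mul_crossPolytope_mem_carriedChains ha)] with M ihM hM b
    have hlabels : rename (signLabel ∘ F) ((subdivision ^ M) (X (Pi.single a 1) * crossPolytope s))
        ∈ carriedChains {L | IsAntipodeFree L} (s.card + 1) :=
      rename_mem_carriedChains (fun D hD => ⟨signLabel '' (F '' D), by
        simpa using hfree D hD ⟨⟩ ⟨⟩ (by simpa using hδ.le),
        fun x hx => ⟨_, ⟨x, hx, rfl⟩, rfl⟩⟩) hM
    -- The alternating count of `c + antipode c` is that of the boundary of `c`.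
    rw [subdivision_pow_crossPolytope_insert ha, map_add, map_add, rename_rename,
      Function.comp_assoc, rename_congr hanti hM, ← rename_rename (signLabel ∘ F),
      alternatingCount_rename_antipode (fun _ h => h) b hlabels, ← alternatingCount_boundary,
      boundary_rename, boundary_subdivision_pow, boundary_X_mul_crossPolytope, ihM]

lemma eventually_parity_of_odd {F : (ι → ℝ) → ι → ℝ} (hF : ContinuousOn F {0}ᶜ)
    (h0 : ∀ x ≠ 0, F x ≠ 0) (hodd : ∀ x ≠ 0, F (-x) = -F x) :
    ∀ᶠ M in Filter.atTop, parity F M = 1 :=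
  (eventually_alternatingCount_eq_one hF h0 hodd .univ).mono fun _ hM => hM true

lemma eventually_parity_eq_of_homotopy {Φ : unitInterval → (ι → ℝ) → ι → ℝ}
    (hΦ : ContinuousOn (Function.uncurry Φ) (.univ ×ˢ {0}ᶜ)) (h0 : ∀ t, ∀ x ≠ 0, Φ t x ≠ 0) :
    ∀ᶠ M in Filter.atTop, parity (Φ 0) M = parity (Φ 1) M := by
  obtain ⟨δ, hδ, hfree⟩ := exists_forall_isAntipodeFree_smallSubsets hΦ h0
  filter_upwards [eventually_subdivision_pow_mem_smallSubsets hδ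
    (crossPolytope_mem_carriedChains_univ (.univ : Finset ι))] with M hM
  suffices IsLocallyConstant fun t => parity (Φ t) M from this.apply_eq_of_preconnectedSpace 0 1
  refine (IsLocallyConstant.iff_eventually_eq _).2 fun t => ?_
  filter_upwards [Metric.closedBall_mem_nhds t hδ] with t' ht'
  have hcarried : contiguityHomotopy (signLabel ∘ Φ t') (signLabel ∘ Φ t)
      ((subdivision ^ M) (crossPolytope .univ)) ∈
      carriedChains {L | IsAntipodeFree L} ((Finset.univ : Finset ι).card + 1) := by
    refine contiguityHomotopy_mem_carriedChains _ _ (fun D hD => ?_) hM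
    exact ⟨_, hfree D hD t' t ht', fun x hx => ⟨_, .inl ⟨x, hx, rfl⟩, rfl⟩,
      fun x hx => ⟨_, .inr ⟨x, hx, rfl⟩, rfl⟩⟩
  have hvanish b := alternatingCount_eq_zero (fun _ h => h) (Nat.lt_succ_self _) b hcarried
  have hboundary := boundary_contiguityHomotopy (signLabel ∘ Φ t') (signLabel ∘ Φ t)
    ((subdivision ^ M) (crossPolytope .univ))
  rw [boundary_subdivision_pow, boundary_crossPolytope, map_zero, map_zero, add_zero] at hboundary
  rw [← CharTwo.add_eq_zero, parity, parity, ← map_add, ← hboundary, alternatingCount_boundary,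
    hvanish, hvanish, add_zero]

end parity

lemma not_even_and_odd_of_homotopy {ι : Type*} [LinearOrder ι] [Finite ι] [Nonempty ι]
    {Φ : unitInterval → (ι → ℝ) → ι → ℝ}
    (hΦ : ContinuousOn (Function.uncurry Φ) (.univ ×ˢ {0}ᶜ)) (h0 : ∀ t, ∀ x ≠ 0, Φ t x ≠ 0) :
    ¬ ((∀ x, Φ 0 (-x) = Φ 0 x) ∧ ∀ x ≠ 0, Φ 1 (-x) = -Φ 1 x) := by
  rintro ⟨heven, hodd⟩
  have := Fintype.ofFinite ι
  have hΦ1 : ContinuousOn (Φ 1) {0}ᶜ :=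
    hΦ.comp (f := fun x => ((1 : unitInterval), x)) (by fun_prop) fun x hx => ⟨trivial, hx⟩
  obtain ⟨M, hM, hM1⟩ :=
    ((eventually_parity_eq_of_homotopy hΦ h0).and (eventually_parity_of_odd hΦ1 (h0 1) hodd)).exists
  rw [parity_of_even heven, hM1] at hM
  exact zero_ne_one hM

end ModTwoChain

section sphere

open Metric

variable {E F : Type*} [NormedAddCommGroup E] [NormedSpace ℝ E] [NormedAddCommGroup F]
  [NormedSpace ℝ F]

/-- The radial projection of the punctured space `E` onto its unit sphere. -/
noncomputable def radialProjection : C(({0}ᶜ : Set E), sphere (0 : E) 1) :=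
  ⟨fun x => (homeomorphUnitSphereProd E x).1, by fun_prop⟩

lemma coe_radialProjection (x : ({0}ᶜ : Set E)) :
    (radialProjection x : E) = ‖(x : E)‖⁻¹ • (x : E) :=
  homeomorphUnitSphereProd_apply_fst_coe E x

lemma radialProjection_neg {x : E} (hx : x ∈ ({0}ᶜ : Set E)) :
    radialProjection ⟨-x, neg_ne_zero.2 hx⟩ = -radialProjection ⟨x, hx⟩ := by
  ext
  simp [coe_radialProjection]

theorem not_homotopic_of_even_of_odd [Nontrivial E] [FiniteDimensional ℝ E]
    (hE : Module.finrank ℝ E = Module.finrank ℝ F)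
    {f g : C(sphere (0 : E) 1, ({0}ᶜ : Set F))} (hf : ∀ x, f (-x) = f x)
    (hg : ∀ x, (g (-x) : F) = -g x) : ¬ f.Homotopic g := by
  classical
  rintro ⟨H⟩
  have hpos : 0 < Module.finrank ℝ E := Module.finrank_pos
  have : FiniteDimensional ℝ F := Module.finite_of_finrank_pos (hE ▸ hpos)
  have : Nonempty (Fin (Module.finrank ℝ E)) := ⟨⟨0, hpos⟩⟩
  let e : (Fin (Module.finrank ℝ E) → ℝ) ≃L[ℝ] E := .ofFinrankEq (by simp)
  let e' : F ≃L[ℝ] (Fin (Module.finrank ℝ E) → ℝ) := .ofFinrankEq (by simp [hE])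
  have he {x} (hx : x ≠ 0) : e x ∈ ({0}ᶜ : Set E) := e.map_eq_zero_iff.not.2 hx
  let Φ (t : unitInterval) (x : Fin (Module.finrank ℝ E) → ℝ) : Fin (Module.finrank ℝ E) → ℝ :=
    if hx : x = 0 then 0 else e' (H (t, radialProjection ⟨e x, he hx⟩))
  have hΦ (t) {x} (hx : x ≠ 0) : Φ t x = e' (H (t, radialProjection ⟨e x, he hx⟩)) := dif_neg hx
  have hneg {x} (hx : x ≠ 0) : radialProjection ⟨e (-x), he (neg_ne_zero.2 hx)⟩ =
      -radialProjection ⟨e x, he hx⟩ := by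
    simp only [← radialProjection_neg, map_neg]
  refine ModTwoChain.not_even_and_odd_of_homotopy (Φ := Φ) ?_ (fun t x hx => ?_)
    ⟨fun x => ?_, fun x hx => ?_⟩
  · rw [continuousOn_iff_continuous_domRestrict]
    suffices Continuous fun p : (.univ ×ˢ {0}ᶜ : Set (unitInterval × _)) =>
        e' (H (p.1.1, radialProjection ⟨e p.1.2, he p.2.2⟩)) from
      this.congr fun p => (hΦ _ p.2.2).symm
    fun_prop
  · rw [hΦ t hx]
    exact e'.map_eq_zero_iff.not.2 (H _).2
  · obtain rfl | hx := eq_or_ne x 0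
    · rw [neg_zero]
    · rw [hΦ _ hx, hΦ _ (neg_ne_zero.2 hx), hneg hx, H.apply_zero, H.apply_zero, hf]
  · rw [hΦ _ hx, hΦ _ (neg_ne_zero.2 hx), hneg hx, H.apply_one, H.apply_one, hg, map_neg]

end sphere

/-! ### Equivariant maps from spheres -/

section sphereExtension

open Metric unitInterval Topology

/-- The collapse of the complement of the range of `j` to the point at infinity. -/
noncomputable def collapse {U Y : Type*} (j : U → Y) : Y → OnePoint U :=
  Function.extend j (↑) fun _ => OnePoint.infty

section collapse

variable {U Y : Type*} {j : U → Y}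

lemma collapse_apply (hj : Function.Injective j) (x : U) : collapse j (j x) = x :=
  hj.extend_apply _ _ x

lemma collapse_of_notMem_range {y : Y} (hy : y ∉ Set.range j) : collapse j y = OnePoint.infty :=
  Function.extend_apply' _ _ _ hy

lemma collapse_eq_collapse_iff (hj : Function.Injective j) {y y' : Y} :
    collapse j y = collapse j y' ↔ y = y' ∨ y ∉ Set.range j ∧ y' ∉ Set.range j := by
  by_cases hy : y ∈ Set.range j <;> by_cases hy' : y' ∈ Set.range j
  · obtain ⟨x, rfl⟩ := hy
    obtain ⟨x', rfl⟩ := hy'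
    simp [collapse_apply hj, hj.eq_iff]
  · obtain ⟨x, rfl⟩ := hy
    have hne : j x ≠ y' := ne_of_mem_of_not_mem (Set.mem_range_self x) hy'
    simp [collapse_apply hj, collapse_of_notMem_range hy', hne]
  · obtain ⟨x, rfl⟩ := hy'
    have hne : y ≠ j x := (ne_of_mem_of_not_mem (Set.mem_range_self x) hy).symm
    simp [collapse_apply hj, collapse_of_notMem_range hy, hne]
  · simp [collapse_of_notMem_range hy, collapse_of_notMem_range hy', hy, hy']

lemma collapse_surjective (hj : Function.Injective j) {y : Y} (hy : y ∉ Set.range j) :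
    Function.Surjective (collapse j) := by
  intro z
  induction z with
  | infty => exact ⟨y, collapse_of_notMem_range hy⟩
  | coe x => exact ⟨j x, collapse_apply hj x⟩

lemma continuous_collapse [TopologicalSpace U] [TopologicalSpace Y] [T2Space Y]
    (hj : IsOpenEmbedding j) : Continuous (collapse j) := by
  have hcompl (s : Set (OnePoint U)) (hs : OnePoint.infty ∉ s) :
      collapse j ⁻¹' s = j '' ((↑) ⁻¹' s) := by
    ext y
    by_cases hy : y ∈ Set.range j
    · obtain ⟨x, rfl⟩ := hy
      simp [collapse_apply hj.injective, hj.injective.eq_iff]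
    · rw [Set.mem_preimage, collapse_of_notMem_range hy]
      exact iff_of_false hs fun h => hy (Set.image_subset_range _ _ h)
  refine continuous_def.2 fun s hs => ?_
  by_cases h : OnePoint.infty ∈ s
  · rw [← isClosed_compl_iff, ← Set.preimage_compl, hcompl _ (not_not.2 h)]
    exact (((OnePoint.isOpen_iff_of_mem h).1 hs).2.image hj.continuous).isClosed
  · rw [hcompl s h]
    exact hj.isOpenMap _ (hs.preimage OnePoint.continuous_coe)

end collapse

lemma range_piMap_sigmoid (N : Type*) :
    Set.range (Pi.map fun _ : N => unitInterval.sigmoid) = (Cube.boundary N)ᶜ := by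
  ext y
  simp [Set.range_piMap, range_sigmoid, Cube.boundary, unitInterval.pos_iff_ne_zero,
    unitInterval.lt_one_iff_ne_one]

lemma isOpenEmbedding_piMap_sigmoid (N : Type*) [Finite N] :
    IsOpenEmbedding (Pi.map fun _ : N => unitInterval.sigmoid) where
  toIsEmbedding := .piMap fun _ => isEmbedding_sigmoid
  isOpen_range := by
    rw [Set.range_piMap, range_sigmoid]
    exact isOpen_set_pi Set.finite_univ fun _ _ => isOpen_Ioo

lemma exists_cube_collapse (n : ℕ) : ∃ k : C(Fin (n + 1) → I,
      sphere (0 : EuclideanSpace ℝ (Fin (n + 2))) 1), Function.Surjective k ∧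
      ∀ y y', k y = k y' ↔
        y = y' ∨ y ∈ Cube.boundary (Fin (n + 1)) ∧ y' ∈ Cube.boundary (Fin (n + 1)) := by
  let e : OnePoint (Fin (n + 1) → ℝ) ≃ₜ sphere (0 : EuclideanSpace ℝ (Fin (n + 2))) 1 :=
    onePointEquivSphereOfFinrankEq (by simp)
  have hj := isOpenEmbedding_piMap_sigmoid (Fin (n + 1))
  have h0 : 0 ∉ Set.range (Pi.map fun _ : Fin (n + 1) => unitInterval.sigmoid) := by
    rw [range_piMap_sigmoid]
    exact not_not.2 ⟨0, .inl rfl⟩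
  refine ⟨⟨e ∘ collapse _, e.continuous.comp (continuous_collapse hj)⟩,
    e.surjective.comp (collapse_surjective hj.injective h0), fun y y' => ?_⟩
  refine e.injective.eq_iff.trans ((collapse_eq_collapse_iff hj.injective).trans ?_)
  rw [range_piMap_sigmoid, Set.notMem_compl_iff, Set.notMem_compl_iff]

section coneMap

variable {E Y : Type*} [NormedAddCommGroup E] [NormedSpace ℝ E] [TopologicalSpace Y]

/-- The radial extension of a map to the unit sphere to a map from the cone to the unit ball. -/
noncomputable def coneMap (k : C(Y, sphere (0 : E) 1)) : C(I × Y, closedBall (0 : E) 1) :=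
  ⟨fun p => ⟨(p.1 : ℝ) • (k p.2 : E), by
    simp [norm_smul, abs_of_nonneg p.1.2.1, p.1.2.2]⟩, by fun_prop⟩

lemma coneMap_one (k : C(Y, sphere (0 : E) 1)) (y : Y) :
    coneMap k (1, y) = ⟨k y, sphere_subset_closedBall (k y).2⟩ :=
  Subtype.ext (one_smul _ _)

lemma eq_of_coneMap_eq {k : C(Y, sphere (0 : E) 1)} {t t' : I} {y y' : Y}
    (h : coneMap k (t, y) = coneMap k (t', y')) : t = t' ∧ (t = 0 ∨ k y = k y') := by
  have hsmul : (t : ℝ) • (k y : E) = (t' : ℝ) • (k y' : E) := congrArg Subtype.val h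
  obtain rfl : t = t' := Subtype.ext <| by
    simpa [norm_smul, abs_of_nonneg t.2.1, abs_of_nonneg t'.2.1] using congrArg norm hsmul
  refine ⟨rfl, or_iff_not_imp_left.2 fun ht => Subtype.ext ?_⟩
  exact smul_right_injective E (Set.Icc.coe_ne_zero.2 ht) hsmul

lemma isQuotientMap_coneMap [CompactSpace Y] [Nonempty Y] {k : C(Y, sphere (0 : E) 1)}
    (hk : Function.Surjective k) : IsQuotientMap (coneMap k) := by
  refine (coneMap k).continuous.isClosedMap.isQuotientMap (coneMap k).continuous fun x => ?_
  obtain hx | hx := eq_or_ne (x : E) 0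
  · exact ⟨(0, Classical.arbitrary Y), Subtype.ext (by simp [coneMap, hx])⟩
  · obtain ⟨y, hy⟩ := hk (radialProjection ⟨x, hx⟩)
    refine ⟨(⟨‖x.1‖, norm_nonneg _, mem_closedBall_zero_iff.1 x.2⟩, y), Subtype.ext ?_⟩
    simp [coneMap, hy, coe_radialProjection, hx]

end coneMap

variable {X : Type*} [TopologicalSpace X]

lemma exists_extend_closedBall_of_subsingleton_homotopyGroup (n : ℕ)
    (hX : ∀ x : X, Subsingleton (HomotopyGroup (Fin (n + 1)) X x))
    (f : C(sphere (0 : EuclideanSpace ℝ (Fin (n + 2))) 1, X)) :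
    ∃ F : C(closedBall (0 : EuclideanSpace ℝ (Fin (n + 2))) 1, X),
      ∀ x : sphere (0 : EuclideanSpace ℝ (Fin (n + 2))) 1,
        F ⟨x, sphere_subset_closedBall x.2⟩ = f x := by
  obtain ⟨k, hsurj, hk⟩ := exists_cube_collapse n
  have hbdry {y} (hy : y ∈ Cube.boundary (Fin (n + 1))) : k y = k 0 :=
    (hk _ _).2 (.inr ⟨hy, 0, .inl rfl⟩)
  obtain ⟨H⟩ : GenLoop.Homotopic (GenLoop.const (x := f (k 0)))
      ⟨f.comp k, fun y hy => congrArg f (hbdry hy)⟩ :=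
    Quotient.exact ((hX (f (k 0))).elim ⟦_⟧ ⟦_⟧)
  have hquot := isQuotientMap_coneMap hsurj
  have hfactors : Function.FactorsThrough H.toContinuousMap (coneMap k) := by
    rintro ⟨t, y⟩ ⟨t', y'⟩ hyy'
    obtain ⟨rfl, rfl | hkk⟩ := eq_of_coneMap_eq hyy'
    · exact (H.apply_zero y).trans (H.apply_zero y').symm
    · obtain rfl | ⟨hy, hy'⟩ := (hk y y').1 hkk
      · rfl
      · exact (H.eq_fst t hy).trans (H.eq_fst t hy').symm
  refine ⟨hquot.lift H.toContinuousMap hfactors, fun x => ?_⟩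
  obtain ⟨y, rfl⟩ := hsurj x
  rw [← coneMap_one]
  exact (DFunLike.congr_fun (hquot.lift_comp _ hfactors) (1, y)).trans (H.apply_one y)

lemma exists_extend_closedBall_of_pathConnectedSpace [PathConnectedSpace X]
    (f : C(sphere (0 : EuclideanSpace ℝ (Fin 1)) 1, X)) :
    ∃ F : C(closedBall (0 : EuclideanSpace ℝ (Fin 1)) 1, X),
      ∀ x : sphere (0 : EuclideanSpace ℝ (Fin 1)) 1,
        F ⟨x, sphere_subset_closedBall x.2⟩ = f x := by
  let e : sphere (0 : EuclideanSpace ℝ (Fin 1)) 1 := ⟨.single 0 1, by simp⟩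
  let γ : Path (f (-e)) (f e) := PathConnectedSpace.somePath _ _
  refine ⟨⟨fun x => γ.extend ((x.1 0 + 1) / 2), by fun_prop⟩, fun x => ?_⟩
  have hx : |x.1 0| = 1 := by
    have h := mem_sphere_zero_iff_norm.1 x.2
    rwa [EuclideanSpace.norm_eq, Fin.sum_univ_one, Real.sqrt_sq (norm_nonneg _)] at h
  obtain h | h := eq_or_eq_neg_of_abs_eq hx
  · obtain rfl : x = e := by
      ext i
      simp [Subsingleton.elim i 0, h, e]
    simp [e]
  · obtain rfl : x = -e := by
      ext i
      simp [Subsingleton.elim i 0, h, e]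
    simp [e]

lemma exists_extend_closedBall [Nonempty X] (n : ℕ)
    (hX : ∀ m < n, ∀ x : X, Subsingleton (HomotopyGroup (Fin m) X x))
    (f : C(sphere (0 : EuclideanSpace ℝ (Fin n)) 1, X)) :
    ∃ F : C(closedBall (0 : EuclideanSpace ℝ (Fin n)) 1, X),
      ∀ x : sphere (0 : EuclideanSpace ℝ (Fin n)) 1,
        F ⟨x, sphere_subset_closedBall x.2⟩ = f x := by
  match n with
  | 0 =>
    refine ⟨.const _ (Classical.arbitrary X), fun x => ?_⟩
    have := x.2
    simp [Subsingleton.elim x.1 0] at this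
  | 1 =>
    have : Subsingleton (ZerothHomotopy X) :=
      (HomotopyGroup.pi0EquivZerothHomotopy (x := Classical.arbitrary X)).symm.subsingleton_congr.2
        (hX 0 one_pos _)
    have : PathConnectedSpace X :=
      pathConnectedSpace_iff_zerothHomotopy.2 ⟨inferInstance, inferInstance⟩
    exact exists_extend_closedBall_of_pathConnectedSpace f
  | n + 2 =>
    exact exists_extend_closedBall_of_subsingleton_homotopyGroup n (hX _ (Nat.lt_succ_self _)) f

lemma sq_add_norm_sq_succ_of_mem_sphere {n : ℕ} {x : EuclideanSpace ℝ (Fin (n + 1))}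
    (hx : x ∈ sphere (0 : EuclideanSpace ℝ (Fin (n + 1))) 1) :
    x 0 ^ 2 + ‖WithLp.toLp 2 fun i : Fin n => x i.succ‖ ^ 2 = 1 := by
  have h : ‖x‖ ^ 2 = 1 := by rw [mem_sphere_zero_iff_norm.1 hx, one_pow]
  simpa [EuclideanSpace.norm_sq_eq, Fin.sum_univ_succ] using h

/-- The orthogonal projection of the unit sphere of `ℝⁿ⁺¹` to the unit ball of `ℝⁿ` that forgets
the coordinate of index `0`. -/
noncomputable def sphereTail (n : ℕ) : C(sphere (0 : EuclideanSpace ℝ (Fin (n + 1))) 1,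
    closedBall (0 : EuclideanSpace ℝ (Fin n)) 1) :=
  ⟨fun x => ⟨WithLp.toLp 2 fun i => x.1 i.succ, by
    rw [mem_closedBall_zero_iff, ← sq_le_one_iff₀ (norm_nonneg _)]
    linarith [sq_add_norm_sq_succ_of_mem_sphere x.2, sq_nonneg (x.1 0)]⟩, by fun_prop⟩

lemma sphereTail_neg {n : ℕ} (x : sphere (0 : EuclideanSpace ℝ (Fin (n + 1))) 1) :
    sphereTail n (-x) = -sphereTail n x :=
  rfl

lemma sphereTail_mem_sphere {n : ℕ} {x : sphere (0 : EuclideanSpace ℝ (Fin (n + 1))) 1}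
    (hx : x.1 0 = 0) : (sphereTail n x).1 ∈ sphere (0 : EuclideanSpace ℝ (Fin n)) 1 := by
  have h := sq_add_norm_sq_succ_of_mem_sphere x.2
  rw [hx, zero_pow two_ne_zero, zero_add] at h
  exact mem_sphere_zero_iff_norm.2 ((pow_eq_one_iff_of_nonneg (norm_nonneg _) two_ne_zero).1 h)

/-- A map from the sphere of dimension `n - 1` extends over the upper hemisphere of the `n`-sphere,
and by equivariance over the lower one. -/
lemma exists_equivariant_sphere [Nonempty X] (n : ℕ)
    (hX : ∀ m, m + 1 < n → ∀ x : X, Subsingleton (HomotopyGroup (Fin m) X x))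
    {R : X → X} (hR : Continuous R) (hinv : Function.Involutive R) :
    ∃ g : C(sphere (0 : EuclideanSpace ℝ (Fin n)) 1, X), ∀ x, g (-x) = R (g x) := by
  induction n with
  | zero =>
    have : IsEmpty (sphere (0 : EuclideanSpace ℝ (Fin 0)) 1) :=
      ⟨fun x => by simpa [Subsingleton.elim x.1 0] using x.2⟩
    exact ⟨⟨isEmptyElim, continuous_of_const isEmptyElim⟩, isEmptyElim⟩
  | succ n ih =>
    obtain ⟨g, hg⟩ := ih fun m hm => hX m (by lia)
    obtain ⟨F, hF⟩ := exists_extend_closedBall n (fun m hm => hX m (by lia)) g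
    have hequator {x : sphere (0 : EuclideanSpace ℝ (Fin (n + 1))) 1} (hx : x.1 0 = 0) :
        F (-sphereTail n x) = R (F (sphereTail n x)) := by
      have h := hg ⟨_, sphereTail_mem_sphere hx⟩
      rwa [← hF, ← hF] at h
    refine ⟨⟨fun x => if 0 ≤ x.1 0 then F (sphereTail n x) else R (F (-sphereTail n x)),
      .if_le (by fun_prop) (by fun_prop) (by fun_prop) (by fun_prop) fun x hx => ?_⟩, fun x => ?_⟩
    · rw [hequator hx.symm, hinv]
    · obtain h | h | h := lt_trichotomy (x.1 0) 0
      · simp [sphereTail_neg, h.le, h.not_ge, hinv _]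
      · simp [sphereTail_neg, h, hequator h]
      · simp [sphereTail_neg, h.le, h.not_ge]

end sphereExtension

/-! ### Evaluating the Hom complex at the vertices of the source -/

section evaluation

variable {W W' V κ : Type} {T : SimpleGraph W} {T' : SimpleGraph W'} {G : SimpleGraph V}

namespace MultiHom

/-- The multihomomorphism obtained by precomposition with a graph homomorphism. -/
def precomp (ρ : T' →g T) (η : MultiHom T G) : MultiHom T' G :=
  ⟨fun w => η.1 (ρ w), fun _ => η.2.1 _, fun _ _ h => η.2.2 _ _ (ρ.map_adj h)⟩

lemma monotone_precomp (ρ : T' →g T) : Monotone (precomp ρ : MultiHom T G → MultiHom T' G) :=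
  fun _ _ h w => h (ρ w)

/-- The color of a vertex selected from `η w`. -/
noncomputable def color (C : G.Coloring κ) (w : W) (η : MultiHom T G) : κ :=
  C (η.2.1 w).choose

lemma color_ne_color (C : G.Coloring κ) {u w : W} (huw : T.Adj u w) {η η' ζ : MultiHom T G}
    (hη : η ≤ ζ) (hη' : η' ≤ ζ) : color C u η ≠ color C w η' :=
  C.valid (ζ.2.2 u w huw _ (hη u (η.2.1 u).choose_spec) _ (hη' w (η'.2.1 w).choose_spec))

end MultiHom

/-- Two points of a standard simplex lie in disjoint faces. -/
def DisjointSupport {κ : Type*} [Fintype κ] (p q : stdSimplex ℝ κ) : Prop :=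
  ∀ c, p c = 0 ∨ q c = 0

lemma disjointSupport_map {ι κ : Type*} [Fintype ι] [Fintype κ] {f g : ι → κ}
    (hfg : ∀ i j, f i ≠ g j) (t : stdSimplex ℝ ι) :
    DisjointSupport (stdSimplex.map f t) (stdSimplex.map g t) := by
  classical
  intro c
  by_cases hf : ∃ i, f i = c
  · obtain ⟨i, rfl⟩ := hf
    refine .inr ?_
    simp [FunOnFinite.linearMap_apply_apply, Finset.filter_eq_empty_iff.2, fun j => (hfg i j).symm]
  · refine .inl ?_
    simp [FunOnFinite.linearMap_apply_apply, Finset.filter_eq_empty_iff.2, not_exists.1 hf]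

/-- The space of assignments of points of a simplex to the vertices of `T` under which adjacent
vertices receive points of disjoint support. -/
abbrev FuzzyColoring {W : Type} (T : SimpleGraph W) (κ : Type) [Fintype κ] : Type :=
  {f : W → stdSimplex ℝ κ // ∀ u w, T.Adj u w → DisjointSupport (f u) (f w)}

section

variable [Fintype κ] (C : G.Coloring κ)

/-- The fuzzy colorings arising from the convex combinations of a chain of multihomomorphisms. -/
noncomputable def fuzzyColoringOfChain {n : ℕ} (s : Fin (n + 1) →o MultiHom T G) :
    C(stdSimplex ℝ (Fin (n + 1)), FuzzyColoring T κ) :=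
  ⟨fun t => ⟨fun w => stdSimplex.map (fun i => (s i).color C w) t, fun _ _ huw =>
    disjointSupport_map (fun i j => MultiHom.color_ne_color C huw
      (s.monotone (Fin.le_last i)) (s.monotone (Fin.le_last j))) t⟩,
    .subtype_mk (continuous_pi fun _ => stdSimplex.continuous_map _) _⟩

/-- The evaluation of points of the Hom complex at the vertices of `T`, as a simplicial map. -/
noncomputable def nerveEval :
    nerve (MultiHom T G) ⟶ TopCat.toSSet.obj (TopCat.of (FuzzyColoring T κ)) where
  app n := ↾fun s => (TopCat.toSSetObjEquiv (TopCat.of (FuzzyColoring T κ)) n).symm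
    (fuzzyColoringOfChain C ⟨s.obj, s.monotone⟩)
  naturality n m f := by
    ext s
    apply (TopCat.toSSetObjEquiv (TopCat.of (FuzzyColoring T κ)) m).injective
    ext t w : 3
    exact (stdSimplex.map_comp_apply f.unop.toOrderHom (fun i => (s.obj i).color C w) t).symm

/-- The evaluation of points of the Hom complex at the vertices of `T`. -/
noncomputable def homComplexEval : homComplex T G ⟶ TopCat.of (FuzzyColoring T κ) :=
  (sSetTopAdj.homEquiv _ _).symm (nerveEval C)

/-- The map of Hom complexes induced by a graph homomorphism of the sources. -/
noncomputable def homComplexMap (ρ : T' →g T) : homComplex T G ⟶ homComplex T' G :=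
  SSet.toTop.map (nerveMap (MultiHom.monotone_precomp ρ).functor)

lemma involutive_homComplexMap {ρ : T →g T} (hρ : Function.Involutive ρ) :
    Function.Involutive (homComplexMap (G := G) ρ) := by
  have hnerve : nerveMap (MultiHom.monotone_precomp (G := G) ρ).functor ≫
      nerveMap (MultiHom.monotone_precomp ρ).functor = 𝟙 (nerve (MultiHom T G)) := by
    ext n s i
    exact Subtype.ext (funext fun w => congrArg (s.obj i).1 (hρ w))
  have hcomp : homComplexMap (G := G) ρ ≫ homComplexMap ρ = 𝟙 (homComplex T G) := by
    unfold homComplexMap homComplex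
    rw [← SSet.toTop.map_comp, hnerve, SSet.toTop.map_id]
  exact fun p => congrArg (fun φ => φ.hom p) hcomp

lemma homComplexEval_homComplexMap (ρ : T' →g T) (p : homComplex T G) (w : W') :
    (homComplexEval C (homComplexMap ρ p)).1 w = (homComplexEval C p).1 (ρ w) := by
  let act : C(FuzzyColoring T κ, FuzzyColoring T' κ) :=
    ⟨fun f => ⟨fun w => f.1 (ρ w), fun _ _ h => f.2 _ _ (ρ.map_adj h)⟩,
      (Pi.continuous_precomp ρ |>.comp continuous_subtype_val).subtype_mk _⟩
  have hact : homComplexMap ρ ≫ homComplexEval C = homComplexEval C ≫ TopCat.ofHom act :=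
    (sSetTopAdj.homEquiv_naturality_left_symm _ _).symm.trans
      (sSetTopAdj.homEquiv_naturality_right_symm (nerveEval C) (TopCat.ofHom act))
  exact congrArg (fun φ => (φ.hom p).1 w) hact

end

end evaluation

/-! ### Differences of maps to a simplex -/

section difference

open Metric

/-- The hyperplane of vectors with coordinate sum zero. -/
def sumZero (κ : Type*) [Fintype κ] : Submodule ℝ (κ → ℝ) :=
  LinearMap.ker (∑ c, LinearMap.proj c)

variable {κ : Type*} [Fintype κ]

lemma mem_sumZero {v : κ → ℝ} : v ∈ sumZero κ ↔ ∑ c, v c = 0 := by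
  simp [sumZero]

lemma finrank_sumZero_add_one [Nonempty κ] :
    Module.finrank ℝ (sumZero κ) + 1 = Fintype.card κ := by
  have h : (∑ c, LinearMap.proj c : Module.Dual ℝ (κ → ℝ)) ≠ 0 := fun h => by
    simpa using LinearMap.congr_fun h 1
  rw [sumZero, Module.Dual.finrank_ker_add_one_of_ne_zero h, Module.finrank_fintype_fun_eq_card]

lemma DisjointSupport.symm {p q : stdSimplex ℝ κ} (h : DisjointSupport p q) :
    DisjointSupport q p :=
  fun c => (h c).symm

variable {X : Type*} [TopologicalSpace X]

lemma homotopic_of_forall_exists_pos {E : Type*} [NormedAddCommGroup E] [NormedSpace ℝ E]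
    {f g : C(X, ({0}ᶜ : Set E))}
    (h : ∀ x, ∃ φ : Module.Dual ℝ E, 0 < φ (f x) ∧ 0 < φ (g x)) : f.Homotopic g := by
  let H := ContinuousMap.Homotopy.affine (ContinuousMap.comp ⟨_, continuous_subtype_val⟩ f)
    (ContinuousMap.comp ⟨_, continuous_subtype_val⟩ g)
  have hH (p : unitInterval × X) : H p ≠ 0 := fun hp => by
    obtain ⟨φ, hf, hg⟩ := h p.2
    have hpos : 0 < φ (H p) := ((convex_Ioi (0 : ℝ)).linear_preimage φ).lineMap_mem hf hg p.1.2
    rw [hp, map_zero] at hpos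
    exact lt_irrefl 0 hpos
  exact ⟨⟨⟨fun p => ⟨H p, hH p⟩, by fun_prop⟩, fun x => Subtype.ext (H.apply_zero x),
    fun x => Subtype.ext (H.apply_one x)⟩⟩

lemma exists_stdSimplex_pos (p : stdSimplex ℝ κ) : ∃ c, 0 < p c := by
  by_contra! h
  have hsum := Finset.sum_nonpos fun c (_ : c ∈ Finset.univ) => h c
  exact hsum.not_gt (p.2.2 ▸ one_pos)

/-- The map `p - q`, which has no zeros when the values of `p` and `q` have disjoint supports. -/
def difference (p q : C(X, stdSimplex ℝ κ)) (h : ∀ x, DisjointSupport (p x) (q x)) :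
    C(X, ({0}ᶜ : Set (sumZero κ))) :=
  ⟨fun x => ⟨⟨(p x : κ → ℝ) - q x, by simp [mem_sumZero]⟩, fun hx => by
    obtain ⟨c, hc⟩ := exists_stdSimplex_pos (q x)
    have hpq : p x c - q x c = 0 := congrFun (congrArg Subtype.val hx) c
    linarith [(h x c).resolve_right hc.ne']⟩, by fun_prop⟩

lemma difference_homotopic {p p' q : C(X, stdSimplex ℝ κ)}
    (hp : ∀ x, DisjointSupport (p x) (q x)) (hp' : ∀ x, DisjointSupport (p' x) (q x)) :
    (difference p q hp).Homotopic (difference p' q hp') := by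
  refine homotopic_of_forall_exists_pos fun x => ?_
  obtain ⟨c, hc⟩ := exists_stdSimplex_pos (q x)
  refine ⟨-(LinearMap.proj c ∘ₗ (sumZero κ).subtype), ?_, ?_⟩
  · simpa [difference, (hp x c).resolve_right hc.ne'] using hc
  · simpa [difference, (hp' x c).resolve_right hc.ne'] using hc

/-- The pointwise midpoint of two maps to a simplex. -/
noncomputable def pointwiseMidpoint (p q : C(X, stdSimplex ℝ κ)) : C(X, stdSimplex ℝ κ) :=
  ⟨fun x => ⟨midpoint ℝ (p x : κ → ℝ) (q x), (convex_stdSimplex ℝ κ).midpoint_mem (p x).2 (q x).2⟩,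
    by simp only [midpoint]; fun_prop⟩

lemma disjointSupport_pointwiseMidpoint {p p' q : C(X, stdSimplex ℝ κ)} {x : X}
    (hp : DisjointSupport (p x) (q x)) (hp' : DisjointSupport (p' x) (q x)) :
    DisjointSupport (pointwiseMidpoint p p' x) (q x) := by
  refine fun c => or_iff_not_imp_right.2 fun hc => ?_
  change midpoint ℝ (p x : κ → ℝ) (p' x) c = 0
  rw [pi_midpoint_apply, (hp c).resolve_right hc, (hp' c).resolve_right hc, midpoint_self]

end difference

section walk

open Metric

variable {E : Type*} [NormedAddCommGroup E]

/-- A map from the unit sphere is homotopic to an even map, that is, to a map which takes the same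
value at antipodal points. -/
def IsHomotopicToEven {Y : Type*} [TopologicalSpace Y] (f : C(sphere (0 : E) 1, Y)) : Prop :=
  ∃ g : C(sphere (0 : E) 1, Y), f.Homotopic g ∧ ∀ x, g (-x) = g x

lemma IsHomotopicToEven.comp {Y Z : Type*} [TopologicalSpace Y] [TopologicalSpace Z]
    {f : C(sphere (0 : E) 1, Y)} (hf : IsHomotopicToEven f) (φ : C(Y, Z)) :
    IsHomotopicToEven (φ.comp f) := by
  obtain ⟨g, hfg, hg⟩ := hf
  exact ⟨φ.comp g, .comp (.refl φ) hfg, fun x => congrArg φ (hg x)⟩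

variable {W κ : Type*} [Fintype κ] {T : SimpleGraph W} {p : W → C(sphere (0 : E) 1, stdSimplex ℝ κ)}

lemma isHomotopicToEven_difference_symm {p q : C(sphere (0 : E) 1, stdSimplex ℝ κ)}
    {h : ∀ x, DisjointSupport (p x) (q x)} (hpq : IsHomotopicToEven (difference p q h)) :
    IsHomotopicToEven (difference q p fun x => (h x).symm) := by
  let neg : C(({0}ᶜ : Set (sumZero κ)), ({0}ᶜ : Set (sumZero κ))) :=
    ⟨fun v => ⟨-v, neg_ne_zero.2 v.2⟩, by fun_prop⟩
  have hneg : neg.comp (difference p q h) = difference q p fun x => (h x).symm := by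
    ext x c
    simp [neg, difference]
  exact hneg ▸ hpq.comp neg

variable (hp : ∀ u w, T.Adj u w → ∀ x, DisjointSupport (p u x) (p w x))
  {ρ : T →g T} (hρ : ∀ w x, p w (-x) = p (ρ w) x)

include hρ in
lemma isHomotopicToEven_difference_of_fixed {u a : W} (hu : ρ u = u) (hau : T.Adj a u) :
    IsHomotopicToEven (difference (p a) (p u) (hp a u hau)) := by
  have hρa : T.Adj (ρ a) u := hu ▸ ρ.map_adj hau
  have hmid (x) : DisjointSupport (pointwiseMidpoint (p a) (p (ρ a)) x) (p u x) :=
    disjointSupport_pointwiseMidpoint (hp _ _ hau x) (hp _ _ hρa x)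
  refine ⟨_, difference_homotopic (hp a u hau) hmid, fun x => ?_⟩
  have hu' : p u (-x) = p u x := by rw [hρ, hu]
  have ha : p (ρ a) (-x) = p a x := by rw [← hρ, neg_neg]
  have ha' : p a (-x) = p (ρ a) x := hρ a x
  ext c
  simp [difference, pointwiseMidpoint, hu', ha, ha', midpoint_comm (p a x : κ → ℝ)]

include hρ in
/-- Replacing the neighbor `a` of `w` by another one does not change the homotopy class, and
exchanging the two ends of an edge only changes the sign. -/
lemma isHomotopicToEven_difference {u w : W} (hu : ρ u = u) (huw : T.Reachable u w) {a : W}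
    (haw : T.Adj a w) : IsHomotopicToEven (difference (p a) (p w) (hp a w haw)) := by
  rw [SimpleGraph.reachable_iff_reflTransGen] at huw
  induction huw generalizing a with
  | refl => exact isHomotopicToEven_difference_of_fixed hp hρ hu haw
  | tail _ hbw ih =>
    obtain ⟨g, hg, heven⟩ := isHomotopicToEven_difference_symm (ih hbw.symm)
    exact ⟨g, (difference_homotopic (hp _ _ haw) (hp _ _ hbw)).trans hg, heven⟩

include hp hρ in
theorem card_ne_finrank_add_one_of_disjointSupport [NormedSpace ℝ E] [Nontrivial E]
    [FiniteDimensional ℝ E] {u w : W} (hu : ρ u = u) (hw : T.Adj w (ρ w)) (huw : T.Reachable u w) :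
    Fintype.card κ ≠ Module.finrank ℝ E + 1 := by
  intro hcard
  have : Nonempty κ := Fintype.card_pos_iff.1 (hcard ▸ Nat.succ_pos _)
  have hE : Module.finrank ℝ E = Module.finrank ℝ (sumZero κ) := by
    rw [← finrank_sumZero_add_one] at hcard
    exact (Nat.succ_injective hcard).symm
  obtain ⟨g, hg, heven⟩ := isHomotopicToEven_difference_symm
    (isHomotopicToEven_difference hp hρ hu huw hw.symm)
  refine not_homotopic_of_even_of_odd hE heven (fun x => ?_) hg.symm
  have hρw : p (ρ w) (-x) = p w x := by rw [← hρ, neg_neg]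
  ext c
  simp [difference, hρ w, hρw]

end walk

/-! ### Graphs with a reflection -/

theorem lovasz_conjecture_general {W V : Type} {T : SimpleGraph W} (G : SimpleGraph V) {ρ : T →g T}
    (hρ : Function.Involutive ρ) {u w : W} (hu : ρ u = u) (hw : T.Adj w (ρ w))
    (huw : T.Reachable u w) (k : ℤ) (hconn : KConnected k (homComplex T G)) :
    ((k + 4).toNat : ℕ∞) ≤ G.chromaticNumber := by
  let n := (k + 1).toNat
  suffices ¬ G.Colorable (n + 2) by
    by_contra! hlt
    have hle : ((k + 4).toNat : ℕ∞) ≤ (n + 2 : ℕ) + 1 := by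
      norm_cast
      lia
    exact this (SimpleGraph.chromaticNumber_le_iff_colorable.1
      (Order.le_of_lt_add_one (hlt.trans_le hle)))
  rintro ⟨C⟩
  have : Nonempty (homComplex T G) := hconn.1
  obtain ⟨g, hg⟩ := exists_equivariant_sphere (n + 1)
    (fun m hm => hconn.2 m (by lia)) (homComplexMap ρ).hom.continuous (involutive_homComplexMap hρ)
  let p (v : W) : C(Metric.sphere (0 : EuclideanSpace ℝ (Fin (n + 1))) 1,
      stdSimplex ℝ (Fin (n + 2))) :=
    ⟨fun x => (homComplexEval C (g x)).1 v, (continuous_apply v).comp (continuous_subtype_val.comp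
      ((homComplexEval C).hom.continuous.comp g.continuous))⟩
  refine card_ne_finrank_add_one_of_disjointSupport (E := EuclideanSpace ℝ (Fin (n + 1))) (p := p)
    (ρ := ρ) (fun a b hab x => (homComplexEval C (g x)).2 a b hab) (fun v x => ?_) hu hw huw
    (by simp)
  change (homComplexEval C (g (-x))).1 v = _
  rw [hg]
  exact homComplexEval_homComplexMap C ρ (g x) v

/-- The reflection of a cycle that fixes the vertex `0`. -/
def cycleGraphNeg (n : ℕ) : SimpleGraph.cycleGraph (n + 1) →g SimpleGraph.cycleGraph (n + 1) where
  toFun v := -v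
  map_rel' h := by
    simp only [SimpleGraph.cycleGraph_eq_circulantGraph, SimpleGraph.circulantGraph_adj,
      Set.mem_singleton_iff, neg_inj.ne, sub_neg_eq_add, neg_add_eq_sub] at h ⊢
    exact ⟨h.1, h.2.symm⟩

lemma cycleGraph_adj_neg (r : ℕ) (hr : 1 ≤ r) :
    (SimpleGraph.cycleGraph (2 * r + 1)).Adj (r • 1) (-(r • 1)) := by
  obtain ⟨q, rfl⟩ := Nat.exists_eq_add_of_le' hr
  refine SimpleGraph.cycleGraph_adj.2 (.inr ?_)
  have hcard : (2 * (q + 1) + 1) • (1 : Fin (2 * (q + 1) + 1)) = 0 := by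
    simpa using card_nsmul_eq_zero (x := (1 : Fin (2 * (q + 1) + 1)))
  rw [add_smul, mul_smul, two_smul, one_smul] at hcard
  rw [← sub_eq_zero, ← neg_eq_zero, ← hcard]
  abel

/-- **The Lovász conjecture** (theorem of Babson and Kozlov): if `Hom(C_{2r+1}, G)` is
`k`-connected for integers `r ≥ 1` and `k ≥ -1`, then `χ(G) ≥ k + 4`. -/
theorem lovasz_conjecture {V : Type} [Fintype V] (G : SimpleGraph V)
    (r : ℕ) (hr : 1 ≤ r) (k : ℤ) (hk : -1 ≤ k)
    (hconn : KConnected k (homComplex (SimpleGraph.cycleGraph (2 * r + 1)) G)) :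
    ((k + 4).toNat : ℕ∞) ≤ G.chromaticNumber :=
  lovasz_conjecture_general G (ρ := cycleGraphNeg (2 * r)) neg_neg neg_zero
    (cycleGraph_adj_neg r hr) (SimpleGraph.cycleGraph_preconnected _ _) k hconn
end

section
/- Let t ≥ 4 and k ≥ 1 be integers with t = 3k + 1 or t = 3k − 1. Then the independence complex Ind(C_t) of the cycle with t vertices — realized as the geometric realization of the nerve of the poset of nonempty independent sets of C_t ordered by inclusion — is homotopy equivalent to the sphere S^{k−1}. -/
open CategoryTheory

/-- The poset of nonempty independent sets of a simple graph `G`, ordered by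
inclusion: the face poset of the independence complex `Ind(G)`. -/
def IndPoset {V : Type} (G : SimpleGraph V) : Type :=
  {s : Finset V // s.Nonempty ∧ ∀ x ∈ s, ∀ y ∈ s, ¬ G.Adj x y}

instance {V : Type} (G : SimpleGraph V) : Preorder (IndPoset G) :=
  Subtype.preorder _

/-- The independence complex `Ind(G)`, realized topologically as the geometric
realization of the nerve (order complex) of the poset of nonempty independent sets
of `G` ordered by inclusion. -/
noncomputable def indComplex {V : Type} (G : SimpleGraph V) : TopCat :=
  SSet.toTop.obj (nerve (IndPoset G))

/-!
Weights `g` on a chain of independent sets add up to the function `∑ s, g s • 1_s` on the vertices.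
By the layer cake formula this identifies `Ind(G)` with the unit sphere, for the sup norm, of the
cone of nonnegative functions on the vertices with independent support, so the radial retraction
makes `Ind(G)` homotopy equivalent to this cone with the origin removed.

If all neighbours of a vertex `w` are neighbours of `u` or `v`, while `w` itself is adjacent to
neither, then the edge `uv` can be inserted or removed without changing the homotopy type: the
weight `min (f u) (f v)` can be shifted continuously from `u` and `v` onto `w`. A few such moves
turn a subdivision of an edge into four into a disjoint edge. A disjoint edge contributes a factor
`ℝ` to the cone, as two opposite rays form a line. Hence the cone of `C_{t+3}` is that of `C_t`
times `ℝ`, up to homotopy away from the origin. The recursion ends at the single edge `C_2`, whose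
cone is a line, and at the square `C_4`, where opposite vertices have the same neighbours, so that
deleting one vertex of each opposite pair leaves a single edge.
-/

open Set

section CharacteristicMap

open Simplicial Opposite

universe u
variable (X : SSet.{u})

variable {X} in
/-- The characteristic map `|Δⁿ| → |X|` of an `n`-simplex `x` of `X`. -/
noncomputable def characteristicMap {n : SimplexCategory} (x : X.obj (op n)) :
    C(stdSimplex ℝ (Fin (n.len + 1)), SSet.toTop.obj X) :=
  (SSet.toTop.map (SSet.yonedaEquiv.symm x)).hom.comp
    (n.toTopHomeo.symm : C(stdSimplex ℝ (Fin (n.len + 1)), _))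

variable {X} in
lemma characteristicMap_map {n m : SimplexCategory} (f : m ⟶ n) (x : X.obj (op n))
    (a : stdSimplex ℝ (Fin (m.len + 1))) :
    characteristicMap (X.map f.op x) a = characteristicMap x (stdSimplex.map f a) := by
  have h : SSet.yonedaEquiv.symm (X.map f.op x) =
      SSet.stdSimplex.map f ≫ SSet.yonedaEquiv.symm x := uliftYonedaEquiv_symm_map f.op x
  simp only [characteristicMap, ContinuousMap.comp_apply, h, Functor.map_comp]
  exact congrArg (SSet.toTop.map (SSet.yonedaEquiv.symm x))
    (SimplexCategory.toTopHomeo_symm_naturality_apply f a).symm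

lemma exists_characteristicMap_eq (p : SSet.toTop.obj X) :
    ∃ (n : SimplexCategory) (x : X.obj (op n)) (a : stdSimplex ℝ (Fin (n.len + 1))),
      characteristicMap x a = p := by
  obtain ⟨j, y, hy⟩ := Limits.Types.jointly_surjective_of_isColimit
    (Limits.isColimitOfPreserves (SSet.toTop ⋙ forget TopCat)
      (Presheaf.colimitOfRepresentable.{u} X)) p
  refine ⟨j.unop.1.unop, j.unop.2, SimplexCategory.toTopHomeo _ y, Eq.trans ?_ hy⟩
  exact congrArg (SSet.toTop.map (SSet.yonedaEquiv.symm j.unop.2))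
    ((SimplexCategory.toTopHomeo _).symm_apply_apply y)

lemma exists_continuousMap_of_compatible (Y : TopCat.{u})
    (φ : ∀ n : SimplexCategory, X.obj (op n) → C(stdSimplex ℝ (Fin (n.len + 1)), Y))
    (hφ : ∀ (n m : SimplexCategory) (f : m ⟶ n) (x : X.obj (op n)) a,
      φ m (X.map f.op x) a = φ n x (stdSimplex.map f a)) :
    ∃ Φ : C(SSet.toTop.obj X, Y), ∀ n (x : X.obj (op n)) a,
      Φ (characteristicMap x a) = φ n x a := by
  let ψ : X ⟶ TopCat.toSSet.obj Y :=
    { app := fun n => ↾fun x => (Y.toSSetObjEquiv n).symm (φ n.unop x)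
      naturality := by
        intro n m f
        ext x
        apply (Y.toSSetObjEquiv m).injective
        ext a
        exact hφ n.unop m.unop f.unop x a }
  let Φ := (sSetTopAdj.homEquiv X Y).symm ψ
  refine ⟨Φ.hom, fun n x a => ?_⟩
  have adj : sSetTopAdj.unit.app X ≫ TopCat.toSSet.map Φ = ψ :=
    (sSetTopAdj.homEquiv_unit X Y Φ).symm.trans (Equiv.apply_symm_apply _ _)
  have simplex : SSet.toTopSimplex.inv.app _ ≫ SSet.toTop.map (SSet.yonedaEquiv.symm x) ≫ Φ =
      (ψ.app (op n) x).down := by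
    rw [← adj, ← Category.assoc, ← sSetTopAdj_unit_app_app_down X (op n) x]
    rfl
  calc Φ.hom (characteristicMap x a)
      = Y.toSSetObjEquiv (op n) (ψ.app (op n) x) a :=
        congrArg (fun t => t.hom (ULift.up a)) simplex
    _ = φ n x a := congrArg (fun t : C(stdSimplex ℝ (Fin (n.len + 1)), Y) => t a)
        ((Y.toSSetObjEquiv (op n)).apply_symm_apply (φ n x))

end CharacteristicMap

section StdSimplexMap

variable {ι κ : Type*} [Fintype ι] [Fintype κ]

lemma stdSimplex_support_map (f : ι → κ) (a : stdSimplex ℝ ι) :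
    Function.support (stdSimplex.map f a) = f '' Function.support a := by
  classical
  ext k
  rw [Function.mem_support, stdSimplex.map_coe, FunOnFinite.linearMap_apply_apply, Ne,
    Finset.sum_eq_zero_iff_of_nonneg fun i _ => stdSimplex.zero_le a i]
  simp [and_comm]

lemma stdSimplex_map_apply_of_injective {f : ι → κ} (hf : Function.Injective f)
    (a : stdSimplex ℝ ι) (i : ι) : stdSimplex.map f a (f i) = a i := by
  classical
  rw [stdSimplex.map_coe, FunOnFinite.linearMap_apply_apply,
    Finset.sum_eq_single_of_mem i (by simp) fun j hj hji =>
      absurd (hf (Finset.mem_filter.1 hj).2) hji]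

lemma exists_stdSimplex_map_eq {f : ι → κ} (hf : Function.Injective f) {a : stdSimplex ℝ κ}
    (ha : Function.support a ⊆ range f) : ∃ b, stdSimplex.map f b = a := by
  have hzero : ∀ k ∉ range f, a k = 0 := fun k hk => Function.notMem_support.1 (mt (@ha k) hk)
  have hsum : ∑ i, a (f i) = 1 :=
    (Fintype.sum_of_injective f hf _ a hzero fun _ => rfl).trans (stdSimplex.sum_eq_one a)
  let b : stdSimplex ℝ ι := ⟨fun i => a (f i), fun i => stdSimplex.zero_le a _, hsum⟩
  refine ⟨b, DFunLike.ext _ _ fun k => ?_⟩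
  by_cases hk : k ∈ range f
  · obtain ⟨i, rfl⟩ := hk
    exact stdSimplex_map_apply_of_injective hf b i
  · rw [hzero k hk, ← Function.notMem_support, stdSimplex_support_map]
    exact mt (image_subset_range f _ ·) hk

lemma stdSimplex_support_nonempty (a : stdSimplex ℝ ι) : (Function.support a).Nonempty := by
  by_contra! h
  simpa [Function.support_eq_empty_iff.1 h] using stdSimplex.sum_eq_one a

end StdSimplexMap

section Chains

variable {P : Type*} [PartialOrder P]

lemma exists_strictMono_range_eq {T : Set P} (hT : IsChain (· ≤ ·) T) (hfin : T.Finite)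
    (hne : T.Nonempty) : ∃ (n : ℕ) (e : Fin (n + 1) →o P), StrictMono e ∧ range e = T := by
  classical
  let := hT.linearOrder
  have := hfin.fintype
  have := hne.to_subtype
  obtain ⟨n, hn⟩ := Nat.exists_eq_succ_of_ne_zero (Fintype.card_ne_zero (α := T))
  let e := Fintype.orderIsoFinOfCardEq T hn
  refine ⟨n, ⟨fun i => e i, fun i j h => e.monotone h⟩, fun i j h => e.strictMono h, ?_⟩
  exact (e.surjective.range_comp Subtype.val).trans Subtype.range_val

lemma exists_comp_eq_of_range_subset {n m : ℕ} {e : Fin (n + 1) →o P} (he : StrictMono e)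
    {c : Fin (m + 1) →o P} (hce : range c ⊆ range e) :
    ∃ f : Fin (m + 1) →o Fin (n + 1), e.comp f = c := by
  choose f hf using fun i => hce (mem_range_self i)
  exact ⟨⟨f, fun i j hij => he.le_iff_le.1 (by simpa only [hf] using c.monotone hij)⟩,
    OrderHom.ext _ _ (funext hf)⟩

end Chains

section NerveRealization

open Simplicial

universe u
variable {P : Type u} [PartialOrder P]

/-- The map `Δⁿ → |N P|` given by a chain `c 0 ≤ ⋯ ≤ c n` in the poset `P`. -/
noncomputable def chainMap {n : ℕ} (c : Fin (n + 1) →o P) :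
    C(stdSimplex ℝ (Fin (n + 1)), SSet.toTop.obj (nerve P)) :=
  characteristicMap (X := nerve P) (n := ⦋n⦌) c.monotone.functor

lemma chainMap_comp {n m : ℕ} (c : Fin (n + 1) →o P) (f : Fin (m + 1) →o Fin (n + 1))
    (a : stdSimplex ℝ (Fin (m + 1))) :
    chainMap (c.comp f) a = chainMap c (stdSimplex.map f a) :=
  characteristicMap_map (SimplexCategory.mkHom f) (X := nerve P) c.monotone.functor a

lemma exists_chainMap_eq (p : SSet.toTop.obj (nerve P)) :
    ∃ (n : ℕ) (c : Fin (n + 1) →o P) (a : stdSimplex ℝ (Fin (n + 1))), chainMap c a = p := by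
  obtain ⟨n, x, a, rfl⟩ := exists_characteristicMap_eq _ p
  exact ⟨n.len, ⟨x.obj, fun _ _ hij => leOfHom (x.map (homOfLE hij))⟩, a, rfl⟩

lemma exists_chainMap_eq_of_support_eq_univ (p : SSet.toTop.obj (nerve P)) :
    ∃ (n : ℕ) (c : Fin (n + 1) →o P) (a : stdSimplex ℝ (Fin (n + 1))),
      Function.support a = univ ∧ chainMap c a = p := by
  obtain ⟨n, c, a, rfl⟩ := exists_chainMap_eq p
  obtain ⟨m, e, he, hrange⟩ := exists_strictMono_range_eq (T := Function.support a)
    (isChain_of_trichotomous _) (toFinite _) (stdSimplex_support_nonempty a)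
  obtain ⟨b, hb⟩ := exists_stdSimplex_map_eq he.injective hrange.ge
  refine ⟨m, c.comp e, b, eq_univ_of_forall fun i => ?_, by rw [chainMap_comp, hb]⟩
  rw [Function.mem_support, ← stdSimplex_map_apply_of_injective he.injective b i, hb]
  exact hrange.le (mem_range_self i)

section Barycentric

variable [Fintype P]

variable (P) in
lemma exists_barycentric : ∃ Φ : C(SSet.toTop.obj (nerve P), stdSimplex ℝ P),
    ∀ n (c : Fin (n + 1) →o P) a, Φ (chainMap c a) = stdSimplex.map c a := by
  obtain ⟨Φ, hΦ⟩ := exists_continuousMap_of_compatible (nerve P) (TopCat.of (stdSimplex ℝ P))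
    (fun _ x => ⟨stdSimplex.map x.obj, stdSimplex.continuous_map _⟩)
    (fun _ _ f x a => (stdSimplex.map_comp_apply f x.obj a).symm)
  exact ⟨Φ, fun n c a => hΦ ⦋n⦌ c.monotone.functor a⟩

variable (P) in
/-- The barycentric coordinates of a point of `|N P|`, indexed by all elements of the finite
poset `P`. -/
noncomputable def barycentric : C(SSet.toTop.obj (nerve P), stdSimplex ℝ P) :=
  (exists_barycentric P).choose

@[simp]
lemma barycentric_chainMap {n : ℕ} (c : Fin (n + 1) →o P) (a : stdSimplex ℝ (Fin (n + 1))) :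
    barycentric P (chainMap c a) = stdSimplex.map c a :=
  (exists_barycentric P).choose_spec n c a

lemma isChain_support_barycentric (p : SSet.toTop.obj (nerve P)) :
    IsChain (· ≤ ·) (Function.support (barycentric P p)) := by
  obtain ⟨n, c, a, rfl⟩ := exists_chainMap_eq p
  rw [barycentric_chainMap, stdSimplex_support_map]
  exact c.monotone.isChain_range.mono (image_subset_range _ _)

lemma exists_chainMap_eq_of_range_eq_support (p : SSet.toTop.obj (nerve P)) {n : ℕ}
    {e : Fin (n + 1) →o P} (he : StrictMono e)
    (hrange : range e = Function.support (barycentric P p)) : ∃ a, chainMap e a = p := by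
  obtain ⟨m, c, a, ha, rfl⟩ := exists_chainMap_eq_of_support_eq_univ p
  rw [barycentric_chainMap, stdSimplex_support_map, ha, image_univ] at hrange
  obtain ⟨f, rfl⟩ := exists_comp_eq_of_range_subset he hrange.ge
  exact ⟨_, (chainMap_comp e f a).symm⟩

variable (P) in
lemma barycentric_injective : Function.Injective (barycentric P) := by
  intro p q hpq
  obtain ⟨n, e, he, hrange⟩ := exists_strictMono_range_eq (isChain_support_barycentric p)
    (toFinite _) (stdSimplex_support_nonempty _)
  obtain ⟨a, rfl⟩ := exists_chainMap_eq_of_range_eq_support p he hrange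
  obtain ⟨b, rfl⟩ := exists_chainMap_eq_of_range_eq_support q he (hpq ▸ hrange)
  have hab : a = b := DFunLike.ext _ _ fun i => by
    rw [← stdSimplex_map_apply_of_injective he.injective a,
      ← stdSimplex_map_apply_of_injective he.injective b, ← barycentric_chainMap, hpq,
      barycentric_chainMap]
  rw [hab]

lemma exists_barycentric_eq {g : stdSimplex ℝ P} (hg : IsChain (· ≤ ·) (Function.support g)) :
    ∃ p, barycentric P p = g := by
  obtain ⟨n, e, he, hrange⟩ :=
    exists_strictMono_range_eq hg (toFinite _) (stdSimplex_support_nonempty g)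
  obtain ⟨a, ha⟩ := exists_stdSimplex_map_eq he.injective hrange.ge
  exact ⟨chainMap e a, (barycentric_chainMap e a).trans ha⟩

end Barycentric

instance nerveRealization_compactSpace [Finite P] :
    CompactSpace (SSet.toTop.obj (nerve P)) := by
  have := Fintype.ofFinite P
  have (n : ℕ) : Finite (Fin (n + 1) →o P) := .of_injective _ DFunLike.coe_injective
  let simplices := Σ n : Fin (Fintype.card P), Fin (n + 1) →o P
  have cover : ⋃ s : simplices, range (chainMap s.2) = univ := by
    refine eq_univ_of_forall fun p => mem_iUnion.2 ?_
    obtain ⟨n, e, he, hrange⟩ := exists_strictMono_range_eq (isChain_support_barycentric p)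
      (toFinite _) (stdSimplex_support_nonempty _)
    have hn : n < Fintype.card P := by
      simpa using Fintype.card_le_of_injective e he.injective
    exact ⟨⟨⟨n, hn⟩, e⟩, exists_chainMap_eq_of_range_eq_support p he hrange⟩
  rw [← isCompact_univ_iff, ← cover]
  exact isCompact_iUnion fun s => isCompact_range (chainMap s.2).continuous

/-- The realization of the order complex of a finite poset `P`, inside the standard simplex
on `P`. -/
def orderComplex (P : Type*) [PartialOrder P] [Fintype P] : Set (stdSimplex ℝ P) :=
  {g | IsChain (· ≤ ·) (Function.support g)}

variable (P) in
/-- Barycentric coordinates identify `|N P|` with the order complex of `P`. -/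
noncomputable def nerveHomeomorph [Fintype P] :
    SSet.toTop.obj (nerve P) ≃ₜ orderComplex P :=
  Continuous.homeoOfEquivCompactToT2
    (f := Equiv.ofBijective (fun p => ⟨barycentric P p, isChain_support_barycentric p⟩)
      ⟨fun _ _ h => barycentric_injective P (congrArg Subtype.val h), fun g =>
        (exists_barycentric_eq g.2).imp fun _ => Subtype.ext⟩)
    ((barycentric P).continuous.subtype_mk _)

end NerveRealization

section VertexWeight

lemma exists_mem_forall_le_of_isChain {P V : Type*} [PartialOrder P] [Finite P]
    (φ : P ↪o Finset V) {S : P} (hne : (φ S).Nonempty) {C : Set P} (hC : IsChain (· ≤ ·) C) :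
    ∃ v ∈ φ S, ∀ p ∈ C, v ∈ φ p → S ≤ p := by
  rcases {p ∈ C | ¬ S ≤ p}.eq_empty_or_nonempty with hempty | hsmaller
  · obtain ⟨v, hv⟩ := hne
    exact ⟨v, hv, fun p hp _ => not_not.1 fun h => (hempty.le ⟨hp, h⟩ : p ∈ (∅ : Set P))⟩
  · obtain ⟨T, ⟨hTC, hST⟩, hmax⟩ := (toFinite _).exists_maximal hsmaller
    obtain ⟨v, hvS, hvT⟩ := Finset.not_subset.1 (mt φ.le_iff_le.1 hST)
    refine ⟨v, hvS, fun p hp hvp => not_not.1 fun hSp => hvT ?_⟩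
    have hpT : p ≤ T := (hC.total hTC hp).elim (hmax ⟨hp, hSp⟩) id
    exact φ.monotone hpT hvp

variable {P V : Type*} [Fintype P]

open Classical in
/-- The point `∑ p, g p • 1_{φ p}` of the cone over a simplicial complex on `V`, for weights `g`
on a poset `P` of faces `φ p`. -/
noncomputable def vertexWeight (φ : P → Finset V) (g : P → ℝ) (v : V) : ℝ :=
  ∑ p with v ∈ φ p, g p

lemma vertexWeight_nonneg (φ : P → Finset V) {g : P → ℝ} (hg : ∀ p, 0 ≤ g p) (v : V) :
    0 ≤ vertexWeight φ g v :=
  Finset.sum_nonneg fun p _ => hg p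

lemma exists_mem_of_vertexWeight_ne_zero {φ : P → Finset V} {g : P → ℝ} {v : V}
    (h : vertexWeight φ g v ≠ 0) : ∃ p ∈ Function.support g, v ∈ φ p := by
  classical
  obtain ⟨p, hp, hgp⟩ := Finset.exists_ne_zero_of_sum_ne_zero h
  exact ⟨p, hgp, (Finset.mem_filter.1 hp).2⟩

lemma continuous_vertexWeight (φ : P → Finset V) : Continuous (vertexWeight φ) := by
  unfold vertexWeight
  fun_prop

open Classical in
lemma sum_le_vertexWeight {φ : P → Finset V} {g : P → ℝ} (hg : ∀ p, 0 ≤ g p) {v : V}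
    {Q : P → Prop} (hQ : ∀ p, Q p → v ∈ φ p) : ∑ p with Q p, g p ≤ vertexWeight φ g v :=
  Finset.sum_le_sum_of_subset_of_nonneg (Finset.monotone_filter_right _ fun p _ => hQ p)
    fun p _ _ => hg p

open Classical in
lemma vertexWeight_le_sum {φ : P → Finset V} {g : P → ℝ} (hg : ∀ p, 0 ≤ g p) {v : V}
    {Q : P → Prop} (hQ : ∀ p ∈ Function.support g, v ∈ φ p → Q p) :
    vertexWeight φ g v ≤ ∑ p with Q p, g p := by
  simp only [vertexWeight, Finset.sum_filter]
  refine Finset.sum_le_sum fun p _ => ?_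
  by_cases hp : g p = 0
  · simp [hp]
  · split_ifs with hv hq hq
    exacts [le_rfl, absurd (hQ p hp hv) hq, hg p, le_rfl]

variable [PartialOrder P]

lemma norm_vertexWeight [Fintype V] {φ : P → Finset V} (hφ : Monotone φ)
    (hne : ∀ p, (φ p).Nonempty) {g : P → ℝ} (hg : ∀ p, 0 ≤ g p)
    (hchain : IsChain (· ≤ ·) (Function.support g)) :
    ‖vertexWeight φ g‖ = ∑ p, g p := by
  classical
  refine le_antisymm ((pi_norm_le_iff_of_nonneg (Finset.sum_nonneg fun p _ => hg p)).2
    fun v => ?_) ?_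
  · rw [Real.norm_of_nonneg (vertexWeight_nonneg φ hg v)]
    exact Finset.sum_le_sum_of_subset_of_nonneg (Finset.filter_subset _ _) fun p _ _ => hg p
  rcases (Function.support g).eq_empty_or_nonempty with hzero | hsupp
  · simp [Function.support_eq_empty_iff.1 hzero]
  obtain ⟨S, hS⟩ := (toFinite (Function.support g)).exists_minimal hsupp
  have least : ∀ p ∈ Function.support g, S ≤ p := fun p hp =>
    (hchain.total hS.1 hp).elim id (hS.2 hp)
  obtain ⟨v, hv⟩ := hne S
  calc ∑ p, g p = vertexWeight φ g v := by
        refine (Finset.sum_filter_of_ne fun p _ hp => ?_).symm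
        exact hφ (least p hp) hv
    _ ≤ ‖vertexWeight φ g‖ := (le_abs_self _).trans (norm_le_pi_norm (vertexWeight φ g) v)

open Classical in
/-- The comparison at the heart of the uniqueness of weights: take `S` maximal with `h S < g S`.
Some vertex of `S` has `g`-weight `∑ p ≥ S, g p`, so `h` charges a face `T` not containing `S`; but
then a vertex of `S` outside `T` has smaller `h`-weight than `g`-weight. -/
lemma not_lt_of_vertexWeight_eq (φ : P ↪o Finset V) (hne : ∀ p, (φ p).Nonempty) {g h : P → ℝ}
    (hg : ∀ p, 0 ≤ g p) (hh : ∀ p, 0 ≤ h p) (hgc : IsChain (· ≤ ·) (Function.support g))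
    (hhc : IsChain (· ≤ ·) (Function.support h)) (heq : vertexWeight φ g = vertexWeight φ h)
    {S : P} (hS : ∀ p, S < p → g p = h p) : ¬ h S < g S := by
  intro hlt
  obtain ⟨v, hvS, hv⟩ := exists_mem_forall_le_of_isChain φ (hne S) hgc
  have above : ∑ p with S ≤ p, h p < ∑ p with S ≤ p, g p :=
    Finset.sum_lt_sum
      (fun p hp => (Finset.mem_filter.1 hp).2.eq_or_lt.elim (fun e => e ▸ hlt.le)
        fun hSp => (hS p hSp).ge) ⟨S, by simpa using hlt⟩
  obtain ⟨T, hT, hvT, hST⟩ : ∃ T ∈ Function.support h, v ∈ φ T ∧ ¬ S ≤ T := by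
    by_contra! hv'
    refine absurd heq (ne_of_apply_ne (· v) (ne_of_gt ?_))
    calc vertexWeight φ h v ≤ ∑ p with S ≤ p, h p := vertexWeight_le_sum hh hv'
      _ < ∑ p with S ≤ p, g p := above
      _ ≤ vertexWeight φ g v := sum_le_vertexWeight hg fun p hp => φ.monotone hp hvS
  obtain ⟨w, hwS, hwT⟩ := Finset.not_subset.1 (mt φ.le_iff_le.1 hST)
  have hw : ∀ p ∈ Function.support h, w ∈ φ p → T < p := fun p hp hwp => by
    have hpT : ¬ p ≤ T := fun hpT => hwT (φ.monotone hpT hwp)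
    exact ((hhc.total hT hp).resolve_right hpT).lt_of_not_ge hpT
  have : vertexWeight φ h w < vertexWeight φ g w :=
    calc vertexWeight φ h w ≤ ∑ p with T < p, h p := vertexWeight_le_sum hh hw
      _ < ∑ p with T ≤ p, h p :=
        Finset.sum_lt_sum_of_subset (Finset.monotone_filter_right _ fun p _ hp => hp.le)
          (i := T) (by simp) (by simp) ((hh T).lt_of_ne' hT) fun p _ _ => hh p
      _ ≤ vertexWeight φ h v := sum_le_vertexWeight hh fun p hp => φ.monotone hp hvT
      _ = vertexWeight φ g v := by rw [heq]
      _ ≤ ∑ p with S ≤ p, g p := vertexWeight_le_sum hg hv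
      _ ≤ vertexWeight φ g w := sum_le_vertexWeight hg fun p hp => φ.monotone hp hwS
  exact this.ne (by rw [heq])

lemma eq_of_vertexWeight_eq (φ : P ↪o Finset V) (hne : ∀ p, (φ p).Nonempty) {g h : P → ℝ}
    (hg : ∀ p, 0 ≤ g p) (hh : ∀ p, 0 ≤ h p) (hgc : IsChain (· ≤ ·) (Function.support g))
    (hhc : IsChain (· ≤ ·) (Function.support h)) (heq : vertexWeight φ g = vertexWeight φ h) :
    g = h := by
  by_contra hgh
  obtain ⟨S, hS, hmax⟩ := (toFinite {p | g p ≠ h p}).exists_maximal (Function.ne_iff.1 hgh)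
  have above : ∀ p, S < p → g p = h p := fun p hp => not_not.1 fun hp' =>
    (hmax hp' hp.le).not_gt hp
  rcases lt_or_gt_of_ne hS with hlt | hlt
  · exact not_lt_of_vertexWeight_eq φ hne hh hg hhc hgc heq.symm (fun p hp => (above p hp).symm) hlt
  · exact not_lt_of_vertexWeight_eq φ hne hg hh hgc hhc heq above hlt

end VertexWeight

section LayerCake

open MeasureTheory

variable {P V : Type*}

/-- The levels `r > 0` at which the superlevel set `{v | r ≤ f v}` is the finite set `s`. -/
def superlevelLevels (f : V → ℝ) (s : Finset V) : Set ℝ :=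
  {r | 0 < r ∧ ∀ v, v ∈ s ↔ r ≤ f v}

lemma measurableSet_superlevelLevels [Countable V] (f : V → ℝ) (s : Finset V) :
    MeasurableSet (superlevelLevels f s) := by
  unfold superlevelLevels
  measurability

lemma pairwise_disjoint_superlevelLevels (f : V → ℝ) :
    Pairwise (Function.onFun Disjoint (superlevelLevels f)) := fun _ _ hst =>
  Set.disjoint_left.2 fun _ hs ht =>
    hst (Finset.ext fun v => (hs.2 v).trans (ht.2 v).symm)

lemma superlevelLevels_nonempty_of_ne_zero {f : V → ℝ} {s : Finset V}
    (h : volume.real (superlevelLevels f s) ≠ 0) : (superlevelLevels f s).Nonempty := by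
  by_contra! hempty
  simp [hempty] at h

lemma subset_total_of_superlevelLevels_nonempty {f : V → ℝ} {s t : Finset V}
    (hs : (superlevelLevels f s).Nonempty) (ht : (superlevelLevels f t).Nonempty) :
    s ⊆ t ∨ t ⊆ s := by
  obtain ⟨r, -, hr⟩ := hs
  obtain ⟨q, -, hq⟩ := ht
  refine (le_total q r).imp (fun hqr v hv => ?_) fun hrq v hv => ?_
  · exact (hq v).2 (hqr.trans ((hr v).1 hv))
  · exact (hr v).2 (hrq.trans ((hq v).1 hv))

variable [Fintype P]

open Classical in
lemma biUnion_superlevelLevels {φ : P → Finset V} {f : V → ℝ}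
    (hφ : ∀ r > 0, (∃ v, r ≤ f v) → ∃ p, ∀ v, v ∈ φ p ↔ r ≤ f v) (v : V) :
    ⋃ p ∈ ({p | v ∈ φ p} : Finset P), superlevelLevels f (φ p) = Ioc 0 (f v) := by
  ext r
  simp only [Finset.mem_filter, Finset.mem_univ, true_and, mem_iUnion, exists_prop, mem_Ioc]
  constructor
  · rintro ⟨p, hvp, hr, hp⟩
    exact ⟨hr, (hp v).1 hvp⟩
  · rintro ⟨hr, hrv⟩
    obtain ⟨p, hp⟩ := hφ r hr ⟨v, hrv⟩
    exact ⟨p, (hp v).2 hrv, hr, hp⟩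

lemma exists_vertexWeight_eq [PartialOrder P] [Countable V] (φ : P ↪o Finset V) {f : V → ℝ}
    (hf : ∀ v, 0 ≤ f v) (hφ : ∀ r > 0, (∃ v, r ≤ f v) → ∃ p, ∀ v, v ∈ φ p ↔ r ≤ f v) :
    ∃ g : P → ℝ, (∀ p, 0 ≤ g p) ∧ IsChain (· ≤ ·) (Function.support g) ∧
      vertexWeight φ g = f := by
  classical
  refine ⟨fun p => volume.real (superlevelLevels f (φ p)), fun p => measureReal_nonneg,
    fun p hp q hq _ => ?_, funext fun v => ?_⟩
  · exact (subset_total_of_superlevelLevels_nonempty (superlevelLevels_nonempty_of_ne_zero hp)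
      (superlevelLevels_nonempty_of_ne_zero hq)).imp φ.le_iff_le.1 φ.le_iff_le.1
  have union := biUnion_superlevelLevels hφ v
  have disjoint := (pairwise_disjoint_superlevelLevels f).comp_of_injective φ.injective
  calc vertexWeight φ (fun p => volume.real (superlevelLevels f (φ p))) v
      = volume.real (⋃ p ∈ ({p | v ∈ φ p} : Finset P), superlevelLevels f (φ p)) :=
        (measureReal_biUnion_finset (disjoint.set_pairwise _)
          (fun p _ => measurableSet_superlevelLevels f _) fun p hp => measure_ne_top_of_subset
            ((subset_biUnion_of_mem (u := fun p => superlevelLevels f (φ p)) hp).trans union.le)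
            measure_Ioc_lt_top.ne).symm
    _ = f v := by rw [union, Real.volume_real_Ioc_of_le (hf v), sub_zero]

end LayerCake

section IndependenceCone

/-- The cone over the independence complex of a graph with loops, given by its edge set `E`:
nonnegative weights on the vertices with independent support. A loop at `v` forces `f v = 0`, so it
amounts to deleting `v` from the graph. -/
def indCone {V : Type*} (E : Set (Sym2 V)) : Set (V → ℝ) :=
  {f | (∀ v, 0 ≤ f v) ∧ ∀ v w, s(v, w) ∈ E → f v * f w = 0}

lemma mem_indCone_iff {V : Type*} {E : Set (Sym2 V)} {f : V → ℝ} :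
    f ∈ indCone E ↔ (∀ v, 0 ≤ f v) ∧ ∀ v w, s(v, w) ∈ E → f v = 0 ∨ f w = 0 := by
  simp only [indCone, mem_ofPred_eq, mul_eq_zero]

lemma smul_mem_indCone {V : Type*} {E : Set (Sym2 V)} {r : ℝ} (hr : 0 < r) {f : V → ℝ}
    (hf : f ∈ indCone E) : r • f ∈ indCone E := by
  rw [mem_indCone_iff] at hf ⊢
  simpa [hr.ne', hr] using hf

variable {V : Type} (G : SimpleGraph V)

instance : PartialOrder (IndPoset G) where
  __ := (inferInstance : Preorder (IndPoset G))
  le_antisymm _ _ h h' := Subtype.ext (Finset.Subset.antisymm h h')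

/-- The face of the simplex on `V` given by an independent set. -/
def indFace : IndPoset G ↪o Finset V := OrderEmbedding.subtype _

lemma indFace_nonempty (s : IndPoset G) : (indFace G s).Nonempty := s.2.1

variable {G} in
lemma not_adj_of_mem_indFace {s : IndPoset G} {v w : V} (hv : v ∈ indFace G s)
    (hw : w ∈ indFace G s) : ¬ G.Adj v w := s.2.2 v hv w hw

section Finite

variable [Finite V]

instance : Finite (IndPoset G) := Subtype.finite

noncomputable instance : Fintype (IndPoset G) := .ofFinite _

variable {G}

lemma vertexWeight_mem_indCone {g : IndPoset G → ℝ} (hg : ∀ s, 0 ≤ g s)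
    (hchain : IsChain (· ≤ ·) (Function.support g)) :
    vertexWeight (indFace G) g ∈ indCone G.edgeSet := by
  refine ⟨vertexWeight_nonneg _ hg, fun v w hvw => ?_⟩
  by_contra hne
  obtain ⟨s, hs, hvs⟩ := exists_mem_of_vertexWeight_ne_zero (left_ne_zero_of_mul hne)
  obtain ⟨t, ht, hwt⟩ := exists_mem_of_vertexWeight_ne_zero (right_ne_zero_of_mul hne)
  rcases hchain.total hs ht with hst | hts
  · exact not_adj_of_mem_indFace ((indFace G).monotone hst hvs) hwt hvw
  · exact not_adj_of_mem_indFace hvs ((indFace G).monotone hts hwt) hvw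

lemma exists_indFace_eq_superlevel {f : V → ℝ} (hf : f ∈ indCone G.edgeSet) {r : ℝ} (hr : 0 < r)
    (hne : ∃ v, r ≤ f v) : ∃ s, ∀ v, v ∈ indFace G s ↔ r ≤ f v := by
  have mem (v : V) : v ∈ (toFinite {v | r ≤ f v}).toFinset ↔ r ≤ f v := Finite.mem_toFinset _
  refine ⟨⟨_, hne.imp fun v => (mem v).2, fun v hv w hw hvw => ?_⟩, mem⟩
  have hpos : 0 < f v * f w :=
    mul_pos (hr.trans_le ((mem v).1 hv)) (hr.trans_le ((mem w).1 hw))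
  exact hpos.ne' (hf.2 v w hvw)

end Finite

variable [Fintype V]

lemma bijOn_vertexWeight_indFace :
    BijOn (fun g : stdSimplex ℝ (IndPoset G) => vertexWeight (indFace G) g)
      (orderComplex (IndPoset G)) (indCone G.edgeSet ∩ Metric.sphere 0 1) := by
  have hmono := (indFace G).monotone
  have hne := indFace_nonempty G
  refine ⟨fun g hg => ⟨?_, ?_⟩, fun g hg h hh heq => ?_, fun f ⟨hf, hnorm⟩ => ?_⟩
  · exact vertexWeight_mem_indCone (stdSimplex.zero_le g) hg
  · rw [mem_sphere_zero_iff_norm, norm_vertexWeight hmono hne (stdSimplex.zero_le g) hg,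
      stdSimplex.sum_eq_one]
  · exact DFunLike.coe_injective (eq_of_vertexWeight_eq (indFace G) hne (stdSimplex.zero_le g)
      (stdSimplex.zero_le h) hg hh heq)
  · obtain ⟨g, hg, hchain, rfl⟩ := exists_vertexWeight_eq (indFace G) hf.1
      fun r hr => exists_indFace_eq_superlevel hf hr
    rw [mem_sphere_zero_iff_norm, norm_vertexWeight hmono hne hg hchain] at hnorm
    exact ⟨⟨g, hg, hnorm⟩, hchain, rfl⟩

/-- The realization of the independence complex is the unit sphere, for the sup norm, of the cone
over it. -/
noncomputable def indComplexHomeomorph :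
    indComplex G ≃ₜ (indCone G.edgeSet ∩ Metric.sphere 0 1 : Set (V → ℝ)) :=
  have : CompactSpace (orderComplex (IndPoset G)) := (nerveHomeomorph (IndPoset G)).compactSpace
  (nerveHomeomorph (IndPoset G)).trans <|
    Continuous.homeoOfEquivCompactToT2
      (f := (bijOn_vertexWeight_indFace G).equiv _)
      (((continuous_vertexWeight (indFace G)).comp
        (continuous_subtype_val.comp continuous_subtype_val)).subtype_mk _)

end IndependenceCone

section PuncturedEquiv

/-- `C` and `D` become homotopy equivalent once `0` is removed, and remain so after taking the
product with any space before removing `0`. -/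
def PuncturedEquiv {E F : Type} [TopologicalSpace E] [TopologicalSpace F] [Zero E] [Zero F]
    (C : Set E) (D : Set F) : Prop :=
  ∀ (Z : Type) [TopologicalSpace Z] [Zero Z], Nonempty (ContinuousMap.HomotopyEquiv
    ((C ×ˢ univ) \ {0} : Set (E × Z)) ((D ×ˢ univ) \ {0} : Set (F × Z)))

namespace PuncturedEquiv

variable {E F G : Type} [TopologicalSpace E] [TopologicalSpace F] [TopologicalSpace G]
  [Zero E] [Zero F] [Zero G] {B C : Set E} {D : Set F} {A : Set G}

lemma symm (h : PuncturedEquiv C D) : PuncturedEquiv D C := fun Z _ _ =>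
  (h Z).map ContinuousMap.HomotopyEquiv.symm

lemma trans (h : PuncturedEquiv C D) (h' : PuncturedEquiv D A) : PuncturedEquiv C A :=
  fun Z _ _ => (h Z).map2 ContinuousMap.HomotopyEquiv.trans (h' Z)

lemma prod_univ (h : PuncturedEquiv C D) (Y : Type) [TopologicalSpace Y] [Zero Y] :
    PuncturedEquiv (C ×ˢ univ : Set (E × Y)) (D ×ˢ univ : Set (F × Y)) := by
  have assoc {E : Type} [TopologicalSpace E] [Zero E] (C : Set E) (Z : Type)
      [TopologicalSpace Z] [Zero Z] :
      (((C ×ˢ univ) ×ˢ univ) \ {0} : Set ((E × Y) × Z)) ≃ₜ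
        ((C ×ˢ univ) \ {0} : Set (E × (Y × Z))) :=
    (Homeomorph.prodAssoc E Y Z).subtype fun x => by
      simp [Prod.ext_iff, and_assoc, Homeomorph.prodAssoc]
  exact fun Z _ _ => (h (Y × Z)).map fun e =>
    (assoc C Z).toHomotopyEquiv.trans (e.trans (assoc D Z).symm.toHomotopyEquiv)

lemma nonempty_homotopyEquiv (h : PuncturedEquiv C D) :
    Nonempty (ContinuousMap.HomotopyEquiv (C \ {0} : Set E) (D \ {0} : Set F)) := by
  have forget {E : Type} [TopologicalSpace E] [Zero E] (C : Set E) :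
      ((C ×ˢ univ) \ {0} : Set (E × Unit)) ≃ₜ (C \ {0} : Set E) :=
    (Homeomorph.prodPUnit E).subtype fun x => by simp [Prod.ext_iff]
  exact (h Unit).map fun e =>
    (forget C).symm.toHomotopyEquiv.trans (e.trans (forget D).toHomotopyEquiv)

lemma of_invOn {f : E → F} {g : F → E} (hf : Continuous f) (hg : Continuous g)
    (hfC : MapsTo f C D) (hgD : MapsTo g D C) (hinv : InvOn g f C D) (hf0 : f 0 = 0)
    (hg0 : g 0 = 0) : PuncturedEquiv C D := fun Z _ _ => by
  let e : ((C ×ˢ univ) \ {0} : Set (E × Z)) ≃ₜ ((D ×ˢ univ) \ {0} : Set (F × Z)) :=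
    { toFun x := ⟨(f x.1.1, x.1.2), ⟨hfC x.2.1.1, mem_univ _⟩, fun h => x.2.2 <| by
        obtain ⟨h₁, h₂⟩ := Prod.ext_iff.1 h
        exact Prod.ext ((hinv.1 x.2.1.1).symm.trans ((congrArg g h₁).trans hg0)) h₂⟩
      invFun y := ⟨(g y.1.1, y.1.2), ⟨hgD y.2.1.1, mem_univ _⟩, fun h => y.2.2 <| by
        obtain ⟨h₁, h₂⟩ := Prod.ext_iff.1 h
        exact Prod.ext ((hinv.2 y.2.1.1).symm.trans ((congrArg f h₁).trans hf0)) h₂⟩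
      left_inv x := Subtype.ext (Prod.ext (hinv.1 x.2.1.1) rfl)
      right_inv y := Subtype.ext (Prod.ext (hinv.2 y.2.1.1) rfl)
      continuous_toFun := by fun_prop
      continuous_invFun := by fun_prop }
  exact ⟨e.toHomotopyEquiv⟩

lemma of_deformationRetraction {H : unitInterval × E → E} (hH : Continuous H) (hBC : B ⊆ C)
    (hzero : ∀ x ∈ C, H (0, x) = x) (hone : ∀ x ∈ C, H (1, x) ∈ B)
    (hC : ∀ τ, ∀ x ∈ C, H (τ, x) ∈ C) (hfix : ∀ x ∈ B, H (1, x) = x)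
    (hne : ∀ τ, ∀ x ∈ C, H (τ, x) = 0 → x = 0) : PuncturedEquiv C B := fun Z _ _ => by
  have punctured (τ : unitInterval) (x : ((C ×ˢ univ) \ {0} : Set (E × Z))) :
      (H (τ, x.1.1), x.1.2) ∉ ({0} : Set (E × Z)) := fun h => x.2.2 <|
    Prod.ext (hne τ _ x.2.1.1 (Prod.ext_iff.1 h).1) (Prod.ext_iff.1 h).2
  exact ⟨{
    toFun := ⟨fun x => ⟨(H (1, x.1.1), x.1.2), ⟨hone _ x.2.1.1, mem_univ _⟩, punctured 1 x⟩,
      by fun_prop⟩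
    invFun := ⟨inclusion (sdiff_subset_sdiff_left (prod_mono_left hBC)), continuous_inclusion _⟩
    left_inv := ⟨ContinuousMap.Homotopy.symm {
      toFun p := ⟨(H (p.1, p.2.1.1), p.2.1.2), ⟨hC _ _ p.2.2.1.1, mem_univ _⟩,
        punctured p.1 p.2⟩
      continuous_toFun := by fun_prop
      map_zero_left x := Subtype.ext (Prod.ext (hzero _ x.2.1.1) rfl)
      map_one_left x := rfl }⟩
    right_inv := by
      convert ContinuousMap.Homotopic.refl _
      ext1 x
      exact Subtype.ext (Prod.ext (hfix _ x.2.1.1).symm rfl) }⟩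

end PuncturedEquiv

section Sphere

variable {E : Type*} [NormedAddCommGroup E] [NormedSpace ℝ E]

/-- A cone without its apex deformation retracts radially onto its unit sphere. -/
noncomputable def sphereHomotopyEquiv {C : Set E} (hC : ∀ r : ℝ, 0 < r → ∀ x ∈ C, r • x ∈ C) :
    ContinuousMap.HomotopyEquiv (C ∩ Metric.sphere 0 1 : Set E) (C \ {0} : Set E) :=
  have norm_ne (x : (C \ {0} : Set E)) : ‖x.1‖ ≠ 0 := norm_ne_zero_iff.2 x.2.2
  have scale_pos (τ : unitInterval) (x : (C \ {0} : Set E)) :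
      0 < (1 - τ) * ‖x.1‖⁻¹ + (τ : ℝ) := by
    have hx : 0 < ‖x.1‖⁻¹ := inv_pos.2 (norm_pos_iff.2 x.2.2)
    have hτ := τ.2
    rcases hτ.1.eq_or_lt with h | h
    · simpa [← h] using x.2.2
    · exact add_pos_of_nonneg_of_pos (mul_nonneg (sub_nonneg.2 hτ.2) hx.le) h
  { toFun := ⟨inclusion fun x hx => ⟨hx.1, ne_zero_of_mem_unit_sphere ⟨x, hx.2⟩⟩,
      continuous_inclusion _⟩
    invFun := ⟨fun x => ⟨‖x.1‖⁻¹ • x.1, hC _ (inv_pos.2 (norm_pos_iff.2 x.2.2)) _ x.2.1,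
      mem_sphere_zero_iff_norm.2 <| by
        rw [norm_smul, norm_inv, norm_norm, inv_mul_cancel₀ (norm_ne x)]⟩,
      by fun_prop (disch := exact norm_ne)⟩
    left_inv := by
      convert ContinuousMap.Homotopic.refl _
      ext1 x
      exact Subtype.ext (by simp [mem_sphere_zero_iff_norm.1 x.2.2])
    right_inv := ⟨{
      toFun p := ⟨((1 - p.1) * ‖p.2.1‖⁻¹ + (p.1 : ℝ)) • p.2.1, hC _ (scale_pos p.1 p.2) _ p.2.2.1,
        smul_ne_zero (scale_pos p.1 p.2).ne' p.2.2.2⟩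
      continuous_toFun := by fun_prop (disch := exact fun p => norm_ne p.2)
      map_zero_left x := Subtype.ext (by simp)
      map_one_left x := Subtype.ext (by simp) }⟩ }

end Sphere

end PuncturedEquiv

section EdgeInsertion

lemma mem_indCone_insert {V : Type*} {E : Set (Sym2 V)} {u v : V} {f : V → ℝ} :
    f ∈ indCone (insert s(u, v) E) ↔ f ∈ indCone E ∧ (f u = 0 ∨ f v = 0) := by
  simp only [mem_indCone_iff, mem_insert_iff, Sym2.eq_iff]
  constructor
  · rintro ⟨hnonneg, h⟩
    exact ⟨⟨hnonneg, fun x y hxy => h x y (.inr hxy)⟩, h u v (by simp)⟩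
  · rintro ⟨⟨hnonneg, h⟩, huv⟩
    refine ⟨hnonneg, fun x y => ?_⟩
    rintro ((⟨rfl, rfl⟩ | ⟨rfl, rfl⟩) | hxy)
    exacts [huv, huv.symm, h x y hxy]

variable {V : Type} {E : Set (Sym2 V)} {u v w : V} {f : V → ℝ}

open Classical in
/-- The direction in `ℝ^V` that shifts weight from `u` and `v` onto `w`. -/
noncomputable def shiftDirection (u v w : V) : V → ℝ :=
  fun x => if x = w then 1 else if x = u ∨ x = v then -1 else 0

open Classical in
lemma add_smul_shiftDirection_apply (f : V → ℝ) (t : ℝ) (x : V) :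
    (f + t • shiftDirection u v w) x =
      if x = w then f x + t else if x = u ∨ x = v then f x - t else f x := by
  simp only [shiftDirection, Pi.add_apply, Pi.smul_apply, smul_eq_mul]
  split_ifs <;> ring

lemma add_smul_shiftDirection_mem_indCone (hf : f ∈ indCone E) (huw : s(u, w) ∉ E)
    (hvw : s(v, w) ∉ E) (hw : ∀ x, s(w, x) ∈ E → s(u, x) ∈ E ∨ s(v, x) ∈ E) {t : ℝ} (ht : 0 ≤ t)
    (hte : t ≤ min (f u) (f v)) : f + t • shiftDirection u v w ∈ indCone E := by
  obtain ⟨hnonneg, hE⟩ := mem_indCone_iff.1 hf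
  have le_of_mem {x : V} (hx : x = u ∨ x = v) : t ≤ f x := by
    rcases hx with rfl | rfl
    exacts [hte.trans (min_le_left _ _), hte.trans (min_le_right _ _)]
  have new_nonneg (x : V) : 0 ≤ (f + t • shiftDirection u v w) x := by
    rw [add_smul_shiftDirection_apply]
    split_ifs with _ hx
    exacts [add_nonneg (hnonneg x) ht, sub_nonneg.2 (le_of_mem hx), hnonneg x]
  have zero_of_ne {x : V} (hx : x ≠ w) (h : f x = 0) : (f + t • shiftDirection u v w) x = 0 :=
    (new_nonneg x).antisymm' <| by
      rw [add_smul_shiftDirection_apply, if_neg hx, h]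
      split_ifs <;> simp [ht]
  have zero_of_edge {y : V} (hwy : s(w, y) ∈ E) : (f + t • shiftDirection u v w) w = 0 ∨
      (f + t • shiftDirection u v w) y = 0 := by
    have hyw : y ≠ w := fun h => by
      subst h
      exact (hw y hwy).elim huw hvw
    by_cases hy : f y = 0
    · exact .inr (zero_of_ne hyw hy)
    · have hfw : f w = 0 := (hE w y hwy).resolve_right hy
      obtain ⟨x, hx, hfx⟩ : ∃ x, (x = u ∨ x = v) ∧ f x = 0 := by
        rcases hw y hwy with h | h
        exacts [⟨u, .inl rfl, (hE u y h).resolve_right hy⟩,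
          ⟨v, .inr rfl, (hE v y h).resolve_right hy⟩]
      left
      rw [add_smul_shiftDirection_apply, if_pos rfl, hfw, zero_add]
      exact ht.antisymm' (hfx ▸ le_of_mem hx)
  refine mem_indCone_iff.2 ⟨new_nonneg, fun x y hxy => ?_⟩
  rcases eq_or_ne x w with rfl | hx
  · exact zero_of_edge hxy
  rcases eq_or_ne y w with rfl | hy
  · exact (zero_of_edge (Sym2.eq_swap ▸ hxy)).symm
  exact (hE x y hxy).imp (zero_of_ne hx) (zero_of_ne hy)

/-- If the neighbours of `w` are neighbours of `u` or of `v`, then weight on the pair `u`, `v` can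
be shifted onto `w`, so the edge `uv` may be added. For `u = v` this deletes `u`. -/
lemma puncturedEquiv_insert_edge (hwu : w ≠ u) (hwv : w ≠ v) (huw : s(u, w) ∉ E)
    (hvw : s(v, w) ∉ E) (hw : ∀ x, s(w, x) ∈ E → s(u, x) ∈ E ∨ s(v, x) ∈ E) :
    PuncturedEquiv (indCone E) (indCone (insert s(u, v) E)) := by
  have shift_u : shiftDirection u v w u = -1 := by simp [shiftDirection, hwu.symm]
  have shift_v : shiftDirection u v w v = -1 := by simp [shiftDirection, hwv.symm]
  have shift_w : shiftDirection u v w w = 1 := by simp [shiftDirection]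
  have min_nonneg {f : V → ℝ} (hf : f ∈ indCone E) : 0 ≤ min (f u) (f v) :=
    le_min (hf.1 u) (hf.1 v)
  refine .of_deformationRetraction
    (H := fun p => p.2 + ((p.1 : ℝ) * min (p.2 u) (p.2 v)) • shiftDirection u v w)
    (by fun_prop) (fun f hf => (mem_indCone_insert.1 hf).1) (fun f _ => by simp)
    (fun f hf => mem_indCone_insert.2 ⟨?_, ?_⟩) (fun τ f hf => ?_) (fun f hf => ?_)
    (fun τ f hf h => ?_)
  · exact add_smul_shiftDirection_mem_indCone hf huw hvw hw (by simpa using min_nonneg hf)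
      (by simp)
  · rcases le_total (f u) (f v) with h | h
    · left; simp [shift_u, h]
    · right; simp [shift_v, h]
  · exact add_smul_shiftDirection_mem_indCone hf huw hvw hw (mul_nonneg τ.2.1 (min_nonneg hf))
      (mul_le_of_le_one_left (min_nonneg hf) τ.2.2)
  · obtain ⟨hf, huv⟩ := mem_indCone_insert.1 hf
    have : min (f u) (f v) = 0 := (min_nonneg hf).antisymm' (by rcases huv with h | h <;> simp [h])
    simp [this]
  · have : f w + τ * min (f u) (f v) = 0 := by simpa [shift_w] using congrFun h w
    have : (τ : ℝ) * min (f u) (f v) = 0 := by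
      linarith [hf.1 w, mul_nonneg τ.2.1 (min_nonneg hf)]
    simpa [this] using h

end EdgeInsertion

section Suspension

variable {V : Type} {E : Set (Sym2 V)}

lemma indCone_insert_loop_insert (x y : V) :
    indCone (insert s(x, x) (insert s(x, y) E)) = indCone (insert s(x, x) E) := by
  ext f
  simp only [mem_indCone_insert, or_self, and_assoc]
  exact and_congr_right fun _ => and_iff_right_of_imp .inl

lemma update_mem_indCone [DecidableEq V] {f : V → ℝ} (hf : f ∈ indCone E) {x : V}
    (hx : ∀ z, s(x, z) ∉ E) {r : ℝ} (hr : 0 ≤ r) : Function.update f x r ∈ indCone E := by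
  rw [mem_indCone_iff] at hf ⊢
  refine ⟨fun v => ?_, fun v w hvw => ?_⟩
  · rcases eq_or_ne v x with rfl | hv
    · simpa
    · simpa [hv] using hf.1 v
  · have hv : v ≠ x := fun h => hx w (h ▸ hvw)
    have hw : w ≠ x := fun h => hx v (h ▸ Sym2.eq_swap ▸ hvw)
    simpa [hv, hw] using hf.2 v w hvw

/-- The vertices of an isolated edge `xy` span two opposite rays of the cone, which form a line. -/
lemma puncturedEquiv_isolated_edge {x y : V} (hxy : x ≠ y) (hx : ∀ z, s(x, z) ∉ E)
    (hy : ∀ z, s(y, z) ∉ E) : PuncturedEquiv (indCone (insert s(x, y) E))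
      (indCone (insert s(x, x) (insert s(y, y) E)) ×ˢ (univ : Set ℝ)) := by
  classical
  refine .of_invOn (f := fun f => (Function.update (Function.update f x 0) y 0, f x - f y))
    (g := fun p => Function.update (Function.update p.1 x (max p.2 0)) y (max (-p.2) 0))
    (by fun_prop) (by fun_prop) (fun f hf => ?_) (fun p hp => ?_) ⟨fun f hf => ?_, fun p hp => ?_⟩
    (by simp) (by simp)
  · rw [mem_indCone_insert] at hf
    simp only [mem_prod, mem_indCone_insert, mem_univ, and_true]
    exact ⟨⟨update_mem_indCone (update_mem_indCone hf.1 hx le_rfl) hy le_rfl, by simp⟩,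
      by simp [hxy]⟩
  · simp only [mem_prod, mem_indCone_insert, mem_univ, and_true] at hp
    refine mem_indCone_insert.2 ⟨update_mem_indCone (update_mem_indCone hp.1.1 hx
      (le_max_right _ _)) hy (le_max_right _ _), ?_⟩
    rcases le_total p.2 0 with h | h <;> simp [hxy, h]
  · obtain ⟨⟨hnonneg, -⟩, h⟩ := mem_indCone_insert.1 hf
    have hfx : max (f x - f y) 0 = f x := by
      rcases h with h | h <;> simp [h, hnonneg x, hnonneg y]
    have hfy : max (f y - f x) 0 = f y := by
      rcases h with h | h <;> simp [h, hnonneg x, hnonneg y]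
    ext v
    rcases eq_or_ne v y with rfl | hvy
    · simp [hfy]
    rcases eq_or_ne v x with rfl | hvx
    · simp [hvy, hfx]
    · simp [hvx, hvy]
  · simp only [mem_prod, mem_indCone_insert, mem_univ, and_true, or_self] at hp
    refine Prod.ext (funext fun v => ?_) (by simp [hxy])
    rcases eq_or_ne v y with rfl | hvy
    · simp [hp]
    rcases eq_or_ne v x with rfl | hvx
    · simp [hvy, hp]
    · simp [hvx, hvy]

section Subdivision

variable {a b c d u v : V} (hnodup : [a, b, c, d, u, v].Nodup)
  (hE : ∀ x ∈ ({a, b, c, d} : Set V), ∀ y, s(x, y) ∉ E)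

include hnodup hE

lemma puncturedEquiv_insert_chord_and_pendant_edge :
    PuncturedEquiv (indCone (insert s(d, d) ({s(u, a), s(a, b), s(b, c), s(c, v)} ∪ E)))
      (indCone (insert s(u, v) (insert s(b, d) ({s(u, a), s(a, b), s(b, c), s(c, v)} ∪ E)))) := by
  let P := {s(u, a), s(a, b), s(b, c), s(c, v)} ∪ E
  simp only [List.nodup_cons, List.mem_cons] at hnodup
  simp only [mem_insert_iff, mem_singleton_iff] at hE
  have add_neighbors : indCone (insert s(d, d) P) =
      indCone (insert s(d, d) (insert s(d, u) (insert s(d, v) (insert s(b, d) P)))) := by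
    rw [Sym2.eq_swap (a := b)]
    simp only [indCone_insert_loop_insert]
  have remove_loop : PuncturedEquiv
      (indCone (insert s(d, u) (insert s(d, v) (insert s(b, d) P))))
      (indCone (insert s(d, d) (insert s(d, u) (insert s(d, v) (insert s(b, d) P))))) := by
    refine puncturedEquiv_insert_edge (w := a) (by grind) (by grind) ?_ ?_ ?_
    all_goals simp only [P, mem_insert_iff, Sym2.eq_iff, mem_singleton_iff, mem_union]; grind
  have add_uv : PuncturedEquiv
      (indCone (insert s(d, u) (insert s(d, v) (insert s(b, d) P))))
      (indCone (insert s(u, v) (insert s(d, u) (insert s(d, v) (insert s(b, d) P))))) := by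
    refine puncturedEquiv_insert_edge (w := b) (by grind) (by grind) ?_ ?_ ?_
    all_goals simp only [P, mem_insert_iff, Sym2.eq_iff, mem_singleton_iff, mem_union]; grind
  have remove_du : PuncturedEquiv
      (indCone (insert s(d, v) (insert s(u, v) (insert s(b, d) P))))
      (indCone (insert s(d, u) (insert s(d, v) (insert s(u, v) (insert s(b, d) P))))) := by
    refine puncturedEquiv_insert_edge (w := c) (by grind) (by grind) ?_ ?_ ?_
    all_goals simp only [P, mem_insert_iff, Sym2.eq_iff, mem_singleton_iff, mem_union]; grind
  have remove_dv : PuncturedEquiv (indCone (insert s(u, v) (insert s(b, d) P)))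
      (indCone (insert s(d, v) (insert s(u, v) (insert s(b, d) P)))) := by
    refine puncturedEquiv_insert_edge (w := a) (by grind) (by grind) ?_ ?_ ?_
    all_goals simp only [P, mem_insert_iff, Sym2.eq_iff, mem_singleton_iff, mem_union]; grind
  change PuncturedEquiv (indCone (insert s(d, d) P)) _
  rw [add_neighbors]
  rw [insert_comm s(u, v) s(d, u), insert_comm s(u, v) s(d, v)] at add_uv
  exact remove_loop.symm.trans (add_uv.trans (remove_du.symm.trans remove_dv.symm))

lemma puncturedEquiv_delete_neighbors_of_pendant_edge :
    PuncturedEquiv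
      (indCone (insert s(u, v) (insert s(b, d) ({s(u, a), s(a, b), s(b, c), s(c, v)} ∪ E))))
      (indCone (insert s(b, d) ({s(a, a), s(c, c), s(u, v)} ∪ E))) := by
  simp only [List.nodup_cons, List.mem_cons] at hnodup
  simp only [mem_insert_iff, mem_singleton_iff] at hE
  let R := insert s(u, v) (insert s(b, d) ({s(u, a), s(a, b), s(b, c), s(c, v)} ∪ E))
  have delete_a : PuncturedEquiv (indCone R) (indCone (insert s(a, a) R)) := by
    refine puncturedEquiv_insert_edge (w := d) (by grind) (by grind) ?_ ?_ ?_
    all_goals simp only [R, mem_insert_iff, Sym2.eq_iff, mem_singleton_iff, mem_union]; grind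
  have delete_c : PuncturedEquiv (indCone (insert s(a, a) R))
      (indCone (insert s(c, c) (insert s(a, a) R))) := by
    refine puncturedEquiv_insert_edge (w := d) (by grind) (by grind) ?_ ?_ ?_
    all_goals simp only [R, mem_insert_iff, Sym2.eq_iff, mem_singleton_iff, mem_union]; grind
  convert delete_a.trans delete_c using 1
  ext f
  simp only [R, insert_union, singleton_union, mem_indCone_insert]
  grind

/-- Csorba's theorem that subdividing the edge `uv` into four edges suspends the independence
complex. The deleted vertex `d` is a spare one, which carries auxiliary edges in between. -/
lemma puncturedEquiv_subdivide_edge :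
    PuncturedEquiv (indCone (insert s(d, d) ({s(u, a), s(a, b), s(b, c), s(c, v)} ∪ E)))
      (indCone (insert s(b, b) (insert s(d, d) ({s(a, a), s(c, c), s(u, v)} ∪ E))) ×ˢ
        (univ : Set ℝ)) := by
  refine (puncturedEquiv_insert_chord_and_pendant_edge hnodup hE).trans
    ((puncturedEquiv_delete_neighbors_of_pendant_edge hnodup hE).trans
      (puncturedEquiv_isolated_edge ?_ ?_ ?_))
  all_goals
    simp only [List.nodup_cons, List.mem_cons] at hnodup
    simp only [mem_insert_iff, mem_singleton_iff, mem_union, Sym2.eq_iff] at hE ⊢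
    grind

end Subdivision

end Suspension

section Cycle

/-- The loops at the vertices in `S`, which delete those vertices. -/
def loops {V : Type*} (S : Set V) : Set (Sym2 V) := (fun v => s(v, v)) '' S

/-- The edges of the path on the vertices `0, …, n`. -/
def pathEdges (n : ℕ) : Set (Sym2 ℕ) := (fun i => s(i, i + 1)) '' Iio n

/-- The edges of the cycle on the vertices `0, …, n`, together with the loops that delete all other
natural numbers. -/
def cycleEdges (n : ℕ) : Set (Sym2 ℕ) := insert s(0, n) (pathEdges n ∪ loops (Ici (n + 1)))

lemma mem_loops {V : Type*} {S : Set V} {x y : V} : s(x, y) ∈ loops S ↔ x ∈ S ∧ x = y := by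
  simp only [loops, mem_image, Sym2.eq_iff]
  grind

lemma indCone_loops_univ {V : Type*} : indCone (loops (univ : Set V)) = {0} := by
  refine eq_singleton_iff_unique_mem.2 ⟨by simp [mem_indCone_iff], fun f hf => funext fun v => ?_⟩
  simpa using (mem_indCone_iff.1 hf).2 v v (mem_loops.2 ⟨mem_univ v, rfl⟩)

lemma loops_Ici_eq_insert (n : ℕ) : loops (Ici n) = insert s(n, n) (loops (Ici (n + 1))) := by
  rw [Ici_add_one_eq_Ioi, loops, ← Ioi_insert, image_insert_eq, loops]

lemma mem_pathEdges {n x y : ℕ} :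
    s(x, y) ∈ pathEdges n ↔ x < n ∧ y = x + 1 ∨ y < n ∧ x = y + 1 := by
  simp only [pathEdges, mem_image, mem_Iio, Sym2.eq_iff]
  grind

lemma pathEdges_zero : pathEdges 0 = ∅ := by simp [pathEdges]

lemma pathEdges_succ (n : ℕ) : pathEdges (n + 1) = insert s(n, n + 1) (pathEdges n) := by
  rw [pathEdges, Iio_add_one_eq_Iic, ← Iio_insert, image_insert_eq, pathEdges]

lemma puncturedEquiv_cycleEdges_add_three {n : ℕ} (hn : n ≠ 0) :
    PuncturedEquiv (indCone (cycleEdges (n + 3))) (indCone (cycleEdges n) ×ˢ (univ : Set ℝ)) := by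
  convert puncturedEquiv_subdivide_edge (a := n + 3) (b := n + 2) (c := n + 1) (d := n + 4)
    (u := 0) (v := n) (E := pathEdges n ∪ loops (Ici (n + 5))) ?_ ?_ using 4
  · ext e
    rw [Sym2.eq_swap (a := n + 3), Sym2.eq_swap (a := n + 2), Sym2.eq_swap (a := n + 1)]
    simp only [cycleEdges, pathEdges_succ, loops_Ici_eq_insert (n + 4), mem_insert_iff, mem_union,
      mem_singleton_iff]
    grind
  · ext e
    simp only [cycleEdges, loops_Ici_eq_insert (n + 1), loops_Ici_eq_insert (n + 2),
      loops_Ici_eq_insert (n + 3), loops_Ici_eq_insert (n + 4), mem_insert_iff, mem_union,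
      mem_singleton_iff]
    grind
  · simp; omega
  · simp only [mem_insert_iff, mem_singleton_iff, mem_union, mem_pathEdges, mem_loops, mem_Ici]
    omega

lemma puncturedEquiv_cycleEdges_three :
    PuncturedEquiv (indCone (cycleEdges 3)) (indCone (cycleEdges 1)) := by
  have delete_two : PuncturedEquiv (indCone (cycleEdges 3))
      (indCone (insert s(2, 2) (cycleEdges 3))) := by
    refine puncturedEquiv_insert_edge (w := 0) (by simp) (by simp) ?_ ?_ ?_
    all_goals
      simp only [cycleEdges, mem_insert_iff, mem_union, mem_pathEdges, mem_loops, mem_Ici,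
        Sym2.eq_iff]
      grind
  have delete_three : PuncturedEquiv (indCone (insert s(2, 2) (cycleEdges 3)))
      (indCone (insert s(3, 3) (insert s(2, 2) (cycleEdges 3)))) := by
    refine puncturedEquiv_insert_edge (w := 1) (by simp) (by simp) ?_ ?_ ?_
    all_goals
      simp only [cycleEdges, mem_insert_iff, mem_union, mem_pathEdges, mem_loops, mem_Ici,
        Sym2.eq_iff]
      grind
  convert delete_two.trans delete_three using 1
  ext f
  simp only [cycleEdges, pathEdges_succ, pathEdges_zero, loops_Ici_eq_insert 2,
      loops_Ici_eq_insert 3, insert_union, union_insert, mem_indCone_insert]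
  grind

lemma PuncturedEquiv.prod_real {E : Type} [TopologicalSpace E] [Zero E] {C : Set E} {k : ℕ}
    (h : PuncturedEquiv C (univ : Set (EuclideanSpace ℝ (Fin k)))) :
    PuncturedEquiv (C ×ˢ (univ : Set ℝ)) (univ : Set (EuclideanSpace ℝ (Fin (k + 1)))) := by
  let e : (EuclideanSpace ℝ (Fin k) × ℝ) ≃L[ℝ] EuclideanSpace ℝ (Fin (k + 1)) :=
    .ofFinrankEq (by simp)
  exact (h.prod_univ ℝ).trans (.of_invOn e.continuous e.symm.continuous (mapsTo_univ _ _)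
    (fun _ _ => by simp) ⟨fun x _ => e.symm_apply_apply x, fun x _ => e.apply_symm_apply x⟩
    e.map_zero e.symm.map_zero)

lemma puncturedEquiv_cycleEdges_one : PuncturedEquiv (indCone (cycleEdges 1))
    (univ : Set (EuclideanSpace ℝ (Fin 1))) := by
  have point : PuncturedEquiv ({0} : Set (ℕ → ℝ)) (univ : Set (EuclideanSpace ℝ (Fin 0))) :=
    .of_invOn continuous_zero continuous_zero (mapsTo_univ _ _) (by simp [MapsTo])
      ⟨fun _ hx => hx.symm, fun _ _ => Subsingleton.elim _ _⟩ rfl rfl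
  have edge : PuncturedEquiv (indCone (cycleEdges 1)) (({0} : Set (ℕ → ℝ)) ×ˢ (univ : Set ℝ)) := by
    convert puncturedEquiv_isolated_edge (E := loops (Ici 2)) zero_ne_one ?_ ?_ using 2
    · simp [cycleEdges, pathEdges_succ, pathEdges_zero]
    · rw [← loops_Ici_eq_insert 1, ← loops_Ici_eq_insert 0, ← Nat.bot_eq_zero, Ici_bot,
        indCone_loops_univ]
    all_goals simp [mem_loops]
  exact edge.trans point.prod_real

lemma puncturedEquiv_cycleEdges_euclideanSpace {k n : ℕ} (hn : n = 3 * k + 1 ∨ n = 3 * k + 3) :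
    PuncturedEquiv (indCone (cycleEdges n)) (univ : Set (EuclideanSpace ℝ (Fin (k + 1)))) := by
  induction k generalizing n with
  | zero =>
    rcases hn with rfl | rfl
    exacts [puncturedEquiv_cycleEdges_one,
      puncturedEquiv_cycleEdges_three.trans puncturedEquiv_cycleEdges_one]
  | succ k ih =>
    obtain ⟨m, rfl⟩ : ∃ m, n = m + 3 := ⟨n - 3, by omega⟩
    exact (puncturedEquiv_cycleEdges_add_three (by omega)).trans
      (ih (n := m) (by omega)).prod_real

end Cycle

section ExtensionByZero

lemma continuous_extend_zero {V W : Type*} (e : V ↪ W) :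
    Continuous fun f : V → ℝ => Function.extend e f 0 := by
  refine continuous_pi fun w => ?_
  by_cases hw : ∃ v, e v = w
  · obtain ⟨v, rfl⟩ := hw
    simpa only [e.injective.extend_apply] using continuous_apply v
  · simpa only [Function.extend_apply' _ _ _ hw] using continuous_const

lemma extend_mem_indCone {V W : Type*} (e : V ↪ W) {E : Set (Sym2 V)} {f : V → ℝ}
    (hf : f ∈ indCone E) :
    Function.extend e f 0 ∈ indCone (Sym2.map e '' E ∪ loops (range e)ᶜ) := by
  rw [mem_indCone_iff] at hf ⊢
  refine ⟨fun w => ?_, fun x y => ?_⟩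
  · by_cases hw : ∃ v, e v = w
    · obtain ⟨v, rfl⟩ := hw
      simpa only [e.injective.extend_apply] using hf.1 v
    · simp [Function.extend_apply' _ _ _ hw]
  · rintro (⟨p, hp, hxy⟩ | hxy)
    · induction p with | h v w
      rcases Sym2.eq_iff.1 hxy with ⟨rfl, rfl⟩ | ⟨rfl, rfl⟩
      · simpa only [e.injective.extend_apply] using hf.2 v w hp
      · simpa only [e.injective.extend_apply] using (hf.2 v w hp).symm
    · exact .inl (Function.extend_apply' _ _ _ (mem_loops.1 hxy).1)

lemma puncturedEquiv_map_embedding {V W : Type} (e : V ↪ W) (E : Set (Sym2 V)) :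
    PuncturedEquiv (indCone E) (indCone (Sym2.map e '' E ∪ loops (range e)ᶜ)) := by
  refine .of_invOn (f := fun f => Function.extend e f 0) (g := fun g => g ∘ e)
    (continuous_extend_zero e) (by fun_prop) (fun f hf => extend_mem_indCone e hf)
    (fun g hg => ?_) ⟨fun f _ => Function.extend_comp e.injective f 0, fun g hg => ?_⟩
    (Function.extend_const e 0) rfl
  · rw [mem_indCone_iff] at hg ⊢
    exact ⟨fun v => hg.1 _, fun v w hvw => hg.2 _ _ (.inl ⟨_, hvw, rfl⟩)⟩
  · funext w
    by_cases hw : w ∈ range e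
    · obtain ⟨v, rfl⟩ := hw
      exact e.injective.extend_apply _ _ v
    · have : g w = 0 := by simpa using (mem_indCone_iff.1 hg).2 w w (.inr (mem_loops.2 ⟨hw, rfl⟩))
      exact (Function.extend_apply' _ _ _ hw).trans this.symm

end ExtensionByZero

section CycleGraph

lemma cycleGraph_adj_iff_val {n : ℕ} (hn : n ≠ 0) {v w : Fin (n + 1)} :
    (SimpleGraph.cycleGraph (n + 1)).Adj v w ↔
      s(v.val, w.val) ∈ insert s(0, n) (pathEdges n) := by
  simp only [mem_insert_iff, mem_pathEdges, Sym2.eq_iff]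
  wlog hvw : v ≤ w generalizing v w
  · rw [SimpleGraph.adj_comm, this (le_of_not_ge hvw)]
    grind
  rw [SimpleGraph.cycleGraph_adj', Fin.sub_val_of_le hvw]
  rcases hvw.eq_or_lt with rfl | hlt
  · simp only [sub_self, Fin.val_zero]
    omega
  · rw [Fin.coe_sub_iff_lt.2 hlt]
    omega

lemma map_val_cycleGraph_edgeSet {n : ℕ} (hn : n ≠ 0) :
    Sym2.map Fin.valEmbedding '' (SimpleGraph.cycleGraph (n + 1)).edgeSet ∪
      loops (range (Fin.valEmbedding (n := n + 1)))ᶜ = cycleEdges n := by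
  have image_edgeSet : Sym2.map Fin.valEmbedding '' (SimpleGraph.cycleGraph (n + 1)).edgeSet =
      insert s(0, n) (pathEdges n) := by
    refine ext (Sym2.ind fun x y => ⟨?_, fun hxy => ?_⟩)
    · rintro ⟨p, hp, hxy⟩
      induction p with | h v w
      exact hxy ▸ (cycleGraph_adj_iff_val hn).1 hp
    · have hle : x < n + 1 ∧ y < n + 1 := by
        simp only [mem_insert_iff, mem_pathEdges, Sym2.eq_iff] at hxy
        omega
      exact ⟨s(⟨x, hle.1⟩, ⟨y, hle.2⟩), (cycleGraph_adj_iff_val hn).2 hxy, rfl⟩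
  have range_val : range (Fin.valEmbedding (n := n + 1)) = Iio (n + 1) := Fin.range_val
  rw [image_edgeSet, range_val, compl_Iio, insert_union, cycleEdges]

lemma puncturedEquiv_cycleGraph_euclideanSpace {k n : ℕ} (hn : n = 3 * k + 1 ∨ n = 3 * k + 3) :
    PuncturedEquiv (indCone (SimpleGraph.cycleGraph (n + 1)).edgeSet)
      (univ : Set (EuclideanSpace ℝ (Fin (k + 1)))) := by
  refine (puncturedEquiv_map_embedding Fin.valEmbedding _).trans ?_
  rw [map_val_cycleGraph_edgeSet (by omega)]
  exact puncturedEquiv_cycleEdges_euclideanSpace hn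

end CycleGraph

/-- **Kozlov**: for `t ≥ 4`, `k ≥ 1` with `t = 3k + 1` or `t = 3k - 1`, the
independence complex of the cycle `C_t` is homotopy equivalent to the sphere
`S^{k-1}`. -/
theorem indComplex_cycle_homotopyEquiv_sphere (t k : ℕ) (ht : 4 ≤ t) (hk : 1 ≤ k)
    (htk : t = 3 * k + 1 ∨ t = 3 * k - 1) :
    Nonempty (ContinuousMap.HomotopyEquiv
      (indComplex (SimpleGraph.cycleGraph t))
      (Metric.sphere (0 : EuclideanSpace ℝ (Fin k)) 1)) := by
  obtain ⟨k, rfl⟩ := Nat.exists_eq_add_of_le' hk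
  obtain ⟨n, rfl⟩ := Nat.exists_eq_add_of_le' (show 1 ≤ t by omega)
  obtain ⟨cones⟩ :=
    (puncturedEquiv_cycleGraph_euclideanSpace (k := k) (n := n) (by omega)).nonempty_homotopyEquiv
  have euclidean := sphereHomotopyEquiv (C := (univ : Set (EuclideanSpace ℝ (Fin (k + 1)))))
    fun _ _ _ _ => mem_univ _
  rw [univ_inter] at euclidean
  exact ⟨(indComplexHomeomorph _).toHomotopyEquiv.trans <|
    (sphereHomotopyEquiv fun r hr f hf => smul_mem_indCone hr hf).trans <|
    cones.trans euclidean.symm⟩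
end

section
/- (Borsuk–Ulam.) Let n and m be nonnegative integers. If there exists a continuous map φ from the unit sphere S^n ⊂ ℝ^{n+1} to the unit sphere S^m ⊂ ℝ^{m+1} satisfying φ(−x) = −φ(x) for all x ∈ S^n, then n ≤ m. -/
/-!
An odd map `Sⁿ → Sᵐ` with `m < n` would give an odd map `g : Sⁿ → ℝᵐ⁺¹` without zeros, where
`m + 1 ≤ n`. The signs of the coordinates of `g` are `0`-cochains `sᵢ` mod 2 with
`sᵢ(-x) = sᵢ(x) + 1`. Let `c₀, c₁, …` be hemispheres of a symmetric triangulation, so that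
`∂cₖ₊₁ = cₖ + νcₖ` for the antipodal map `ν`. Integrating by parts, `δs₁ ∪ ⋯ ∪ δsₖ` evaluated on
`cₖ` equals `s₁ ∪ δs₂ ∪ ⋯ ∪ δsₖ` evaluated on `cₖ₋₁ + νcₖ₋₁`. Since `δs₂ ∪ ⋯ ∪ δsₖ` is
`ν`-invariant and `s₁` takes the value `1` at exactly one of any two antipodes, this equals
`δs₂ ∪ ⋯ ∪ δsₖ` evaluated on `cₖ₋₁`, and finally the number of vertices of `c₀`, which is `1`. Hence
some simplex of `cₘ₊₁` has a sign change in every coordinate. Subdividing barycentrically, such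
simplices can be taken arbitrarily small, so `‖g‖` has infimum `0`, and `g` has a zero by
compactness.
-/

open Finsupp

namespace BorsukUlam

section Chains

variable {V W : Type*}

/-- Ordered simplicial chains mod 2: a list is the ordered simplex spanned by its entries,
degenerate simplices are allowed, and `[]` is the simplex of dimension `-1` that augments the
complex. -/
abbrev Chain (V : Type*) := List V →₀ ZMod 2

/-- The boundary operator of the augmented ordered chain complex. -/
noncomputable def boundary : Chain V →ₗ[ZMod 2] Chain V :=
  linearCombination (ZMod 2) fun l ↦ ∑ i : Fin l.length, single (l.eraseIdx i) 1

/-- The cone over a chain with apex `v`. -/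
noncomputable def cone (v : V) : Chain V →ₗ[ZMod 2] Chain V :=
  lmapDomain (ZMod 2) (ZMod 2) (List.cons v)

/-- The chain map induced by a map of vertices. -/
noncomputable def pushforward (f : V → W) : Chain V →ₗ[ZMod 2] Chain W :=
  lmapDomain (ZMod 2) (ZMod 2) (List.map f)

lemma boundary_single (l : List V) :
    boundary (single l 1) = ∑ i : Fin l.length, single (l.eraseIdx i) 1 := by
  simp only [boundary, linearCombination_single, one_smul]

@[simp]
lemma cone_single (v : V) (l : List V) : cone v (single l 1) = single (v :: l) 1 :=
  mapDomain_single

@[simp]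
lemma pushforward_single (f : V → W) (l : List V) :
    pushforward f (single l 1) = single (l.map f) 1 :=
  mapDomain_single

lemma linearMap_ext_simplex {M : Type*} [AddCommMonoid M] [Module (ZMod 2) M]
    {f g : Chain V →ₗ[ZMod 2] M} (h : ∀ l, f (single l 1) = g (single l 1)) : f = g :=
  lhom_ext' fun l ↦ LinearMap.ext_ring (h l)

lemma map_eq_sum_simplex {M : Type*} [AddCommMonoid M] [Module (ZMod 2) M]
    (f : Chain V →ₗ[ZMod 2] M) (c : Chain V) :
    f c = ∑ l ∈ c.support, c l • f (single l 1) := by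
  conv_lhs => rw [← c.sum_single, Finsupp.sum, map_sum]
  simp only [← map_smul, smul_single_one]

lemma exists_mem_support_of_mem_support_map (f : Chain V →ₗ[ZMod 2] Chain W) {c : Chain V}
    {t : List W} (ht : t ∈ (f c).support) : ∃ l ∈ c.support, t ∈ (f (single l 1)).support := by
  rw [mem_support_iff, map_eq_sum_simplex, finsetSum_apply] at ht
  obtain ⟨l, hl, h⟩ := Finset.exists_ne_zero_of_sum_ne_zero ht
  exact ⟨l, hl, mem_support_iff.2 (right_ne_zero_of_smul h)⟩

lemma exists_of_mem_support_cone {v : V} {c : Chain V} {l : List V}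
    (hl : l ∈ (cone v c).support) : ∃ t ∈ c.support, l = v :: t := by
  obtain ⟨t, ht, h⟩ := exists_mem_support_of_mem_support_map _ hl
  rw [cone_single] at h
  exact ⟨t, ht, Finset.mem_singleton.1 (support_single_subset h)⟩

lemma exists_of_mem_support_pushforward {f : V → W} {c : Chain V} {l : List W}
    (hl : l ∈ (pushforward f c).support) : ∃ t ∈ c.support, l = t.map f := by
  obtain ⟨t, ht, h⟩ := exists_mem_support_of_mem_support_map _ hl
  rw [pushforward_single] at h
  exact ⟨t, ht, Finset.mem_singleton.1 (support_single_subset h)⟩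

lemma exists_of_mem_support_boundary_single {l t : List V}
    (ht : t ∈ (boundary (single l 1)).support) : ∃ i : Fin l.length, t = l.eraseIdx i := by
  rw [mem_support_iff, boundary_single, finsetSum_apply] at ht
  obtain ⟨i, -, hi⟩ := Finset.exists_ne_zero_of_sum_ne_zero ht
  exact ⟨i, (single_apply_ne_zero.1 hi).1⟩

@[simp]
lemma boundary_single_nil : boundary (single ([] : List V) 1) = 0 := by
  simp [boundary_single]

lemma boundary_cone (v : V) (c : Chain V) : boundary (cone v c) = c + cone v (boundary c) := by
  suffices boundary ∘ₗ cone v = LinearMap.id + cone v ∘ₗ boundary from LinearMap.congr_fun this c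
  refine linearMap_ext_simplex fun l ↦ ?_
  simp [boundary_single, Fin.sum_univ_succ]

lemma pushforward_cone (f : V → W) (v : V) (c : Chain V) :
    pushforward f (cone v c) = cone (f v) (pushforward f c) := by
  suffices pushforward f ∘ₗ cone v = cone (f v) ∘ₗ pushforward f from LinearMap.congr_fun this c
  exact linearMap_ext_simplex fun l ↦ by simp

lemma pushforward_pushforward_neg [InvolutiveNeg V] (c : Chain V) :
    pushforward Neg.neg (pushforward Neg.neg c) = c := by
  suffices pushforward Neg.neg ∘ₗ pushforward Neg.neg = LinearMap.id (M := Chain V) from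
    LinearMap.congr_fun this c
  exact linearMap_ext_simplex fun l ↦ by simp

lemma boundary_pushforward (f : V → W) (c : Chain V) :
    boundary (pushforward f c) = pushforward f (boundary c) := by
  suffices boundary ∘ₗ pushforward f = pushforward f ∘ₗ boundary from LinearMap.congr_fun this c
  refine linearMap_ext_simplex fun l ↦ ?_
  induction l with
  | nil => simp
  | cons v l ih =>
    simp only [LinearMap.comp_apply, pushforward_single] at ih
    simp only [LinearMap.comp_apply, pushforward_single, ← cone_single, boundary_cone, map_add,
      pushforward_cone, ih]

lemma boundary_single_map (f : V → W) (l : List V) :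
    boundary (single (l.map f) 1) = ∑ i : Fin l.length, single ((l.eraseIdx i).map f) 1 := by
  rw [← pushforward_single, boundary_pushforward, boundary_single, map_sum]
  simp only [pushforward_single]

lemma boundary_boundary (c : Chain V) : boundary (boundary c) = 0 := by
  suffices boundary ∘ₗ boundary = (0 : Chain V →ₗ[ZMod 2] Chain V) from LinearMap.congr_fun this c
  refine linearMap_ext_simplex fun l ↦ ?_
  simp only [LinearMap.comp_apply, LinearMap.zero_apply]
  induction l with
  | nil => simp
  | cons v l ih =>
    rw [← cone_single, boundary_cone, map_add, boundary_cone, ih, map_zero, add_zero,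
      ZModModule.add_self]

end Chains

section Crossing

variable {V : Type*}

/-- The cap product with the `0`-cochain `s`, evaluated on the first vertex of a simplex. -/
noncomputable def cap (s : V → ZMod 2) : Chain V →ₗ[ZMod 2] Chain V :=
  linearCombination (ZMod 2) fun l ↦ l.head?.elim 0 s • single l 1

/-- The cochain `δs₁ ∪ ⋯ ∪ δsₖ ∪ 1` of a list of vertex colourings `s₁, …, sₖ`. It is defined by
repeatedly integrating by parts, which makes it a cocycle by construction. -/
noncomputable def crossing : List (V → ZMod 2) → Chain V →ₗ[ZMod 2] ZMod 2
  | [] => lapply [] ∘ₗ boundary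
  | s :: S => crossing S ∘ₗ cap s ∘ₗ boundary

lemma cap_single (s : V → ZMod 2) (l : List V) :
    cap s (single l 1) = l.head?.elim 0 s • single l 1 := by
  simp only [cap, linearCombination_single, one_smul]

lemma crossing_boundary (S : List (V → ZMod 2)) (c : Chain V) : crossing S (boundary c) = 0 := by
  cases S <;> simp [crossing, boundary_boundary]

lemma crossing_single_nil (S : List (V → ZMod 2)) : crossing S (single [] 1) = 0 := by
  cases S <;> simp [crossing]

lemma crossing_cap_single (S : List (V → ZMod 2)) (s : V → ZMod 2) (l : List V) :
    crossing S (cap s (single l 1)) = l.head?.elim 0 s * crossing S (single l 1) := by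
  rw [cap_single, map_smul, smul_eq_mul]

lemma crossing_cons_single (s : V → ZMod 2) (S : List (V → ZMod 2)) (l : List V) :
    crossing (s :: S) (single l 1) =
      ∑ i : Fin l.length, (l.eraseIdx i).head?.elim 0 s * crossing S (single (l.eraseIdx i) 1) := by
  simp only [crossing, LinearMap.comp_apply, boundary_single, map_sum, crossing_cap_single]

lemma crossing_single_eq_zero_of_const {s : V → ZMod 2} {a : ZMod 2} {l : List V}
    (hs : ∀ x ∈ l, s x = a) (S : List (V → ZMod 2)) : crossing (s :: S) (single l 1) = 0 := by
  have weight (i : Fin l.length) :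
      (l.eraseIdx i).head?.elim 0 s * crossing S (single (l.eraseIdx i) 1) =
        a * crossing S (single (l.eraseIdx i) 1) := by
    match ht : l.eraseIdx i with
    | [] => simp [crossing_single_nil]
    | x :: t => simp [hs x (List.mem_of_mem_eraseIdx (ht ▸ List.mem_cons_self))]
  calc crossing (s :: S) (single l 1)
    _ = a * crossing S (boundary (single l 1)) := by
        simp only [crossing_cons_single, weight, boundary_single, map_sum, Finset.mul_sum]
    _ = 0 := by rw [crossing_boundary, mul_zero]

lemma exists_ne_of_crossing_single_ne_zero {S : List (V → ZMod 2)} {l : List V}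
    (h : crossing S (single l 1) ≠ 0) : ∀ s ∈ S, ∃ x ∈ l, ∃ y ∈ l, s x ≠ s y := by
  induction S generalizing l with
  | nil => simp
  | cons s S ih =>
    refine List.forall_mem_cons.2 ⟨?_, fun s' hs' ↦ ?_⟩
    · by_contra! hconst
      cases l with
      | nil => exact h (crossing_single_nil _)
      | cons x t =>
        exact h (crossing_single_eq_zero_of_const (fun y hy ↦ hconst y hy x List.mem_cons_self) S)
    · rw [crossing_cons_single] at h
      obtain ⟨i, -, hi⟩ := Finset.exists_ne_zero_of_sum_ne_zero h
      obtain ⟨x, hx, y, hy, hxy⟩ := ih (right_ne_zero_of_mul hi) s' hs'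
      exact ⟨x, List.mem_of_mem_eraseIdx hx, y, List.mem_of_mem_eraseIdx hy, hxy⟩

variable [Neg V]

lemma crossing_cap_single_map_neg {s : V → ZMod 2} {l : List V}
    (hs : ∀ x ∈ l, s (-x) = s x + 1) {S : List (V → ZMod 2)}
    (hS : crossing S (single (l.map Neg.neg) 1) = crossing S (single l 1)) :
    crossing S (cap s (single (l.map Neg.neg) 1)) =
      crossing S (cap s (single l 1)) + crossing S (single l 1) := by
  rw [crossing_cap_single, crossing_cap_single, hS]
  cases l with
  | nil => simp [crossing_single_nil]
  | cons x l => simp [hs x List.mem_cons_self, add_mul]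

lemma crossing_single_map_neg {S : List (V → ZMod 2)} {l : List V}
    (hS : ∀ s ∈ S, ∀ x ∈ l, s (-x) = s x + 1) :
    crossing S (single (l.map Neg.neg) 1) = crossing S (single l 1) := by
  induction S generalizing l with
  | nil =>
    simp only [crossing, LinearMap.comp_apply]
    rw [boundary_single_map, boundary_single]
    simp only [map_sum, lapply_apply, single_apply, List.map_eq_nil_iff]
  | cons s S ih =>
    have face (i : Fin l.length) :
        crossing S (cap s (single ((l.eraseIdx i).map Neg.neg) 1)) =
          crossing S (cap s (single (l.eraseIdx i) 1)) + crossing S (single (l.eraseIdx i) 1) := by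
      have hmem {x : V} : x ∈ l.eraseIdx i → x ∈ l := List.mem_of_mem_eraseIdx
      rw [List.forall_mem_cons] at hS
      exact crossing_cap_single_map_neg (fun x hx ↦ hS.1 x (hmem hx))
        (ih fun s' hs' x hx ↦ hS.2 s' hs' x (hmem hx))
    calc crossing (s :: S) (single (l.map Neg.neg) 1)
      _ = crossing (s :: S) (single l 1) + crossing S (boundary (single l 1)) := by
          simp only [crossing, LinearMap.comp_apply]
          rw [boundary_single_map, boundary_single]
          simp only [map_sum, face, Finset.sum_add_distrib]
      _ = crossing (s :: S) (single l 1) := by rw [crossing_boundary, add_zero]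

end Crossing

section Tower

variable {V : Type*}

/-- A chain-level model of the inclusions `S⁰ ⊂ S¹ ⊂ S² ⊂ ⋯` with their antipodal symmetry: `c k` is
a hemisphere of dimension `k`, and its boundary is the union of the two hemispheres of dimension
`k - 1`. -/
structure IsAntipodalTower [Neg V] (c : ℕ → Chain V) : Prop where
  boundary_zero : boundary (c 0) = single [] 1
  boundary_succ (k : ℕ) : boundary (c (k + 1)) = c k + pushforward Neg.neg (c k)

lemma IsAntipodalTower.crossing_eq_one [Neg V] {c : ℕ → Chain V} (hc : IsAntipodalTower c)
    {S : List (V → ZMod 2)}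
    (hS : ∀ s ∈ S, ∀ k < S.length, ∀ l ∈ (c k).support, ∀ x ∈ l, s (-x) = s x + 1) :
    crossing S (c S.length) = 1 := by
  induction S with
  | nil => simp [crossing, hc.boundary_zero]
  | cons s S ih =>
    rw [List.length_cons, List.forall_mem_cons] at hS
    have simplex : ∀ l ∈ (c S.length).support,
        crossing S (cap s (single l 1 + pushforward Neg.neg (single l 1))) =
          crossing S (single l 1) := fun l hl ↦ by
      have key := crossing_cap_single_map_neg (hS.1 _ S.length.lt_succ_self l hl)
        (crossing_single_map_neg fun s' hs' ↦ hS.2 s' hs' _ S.length.lt_succ_self l hl)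
      rw [pushforward_single, map_add, map_add, key, CharTwo.add_cancel_left]
    calc crossing (s :: S) (c (S.length + 1))
      _ = (crossing S ∘ₗ cap s ∘ₗ (LinearMap.id + pushforward Neg.neg)) (c S.length) := by
          simp only [crossing, LinearMap.comp_apply, hc.boundary_succ, LinearMap.add_apply,
            LinearMap.id_apply]
      _ = crossing S (c S.length) := by
          rw [map_eq_sum_simplex, map_eq_sum_simplex (crossing S)]
          refine Finset.sum_congr rfl fun l hl ↦ ?_
          rw [← simplex l hl]
          rfl
      _ = 1 := ih fun s' hs' k hk ↦ hS.2 s' hs' k (hk.trans S.length.lt_succ_self)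

theorem IsAntipodalTower.exists_simplex_forall_exists_ne [Neg V] {c : ℕ → Chain V}
    (hc : IsAntipodalTower c) {S : List (V → ZMod 2)}
    (hS : ∀ s ∈ S, ∀ k < S.length, ∀ l ∈ (c k).support, ∀ x ∈ l, s (-x) = s x + 1) :
    ∃ l ∈ (c S.length).support, l ≠ [] ∧ ∀ s ∈ S, ∃ x ∈ l, ∃ y ∈ l, s x ≠ s y := by
  have h : crossing S (c S.length) ≠ 0 := by simp [hc.crossing_eq_one hS]
  rw [map_eq_sum_simplex] at h
  obtain ⟨l, hl, h⟩ := Finset.exists_ne_zero_of_sum_ne_zero h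
  have hl0 : crossing S (single l 1) ≠ 0 := right_ne_zero_of_smul h
  refine ⟨l, hl, ?_, exists_ne_of_crossing_single_ne_zero hl0⟩
  rintro rfl
  exact hl0 (crossing_single_nil S)

/-- The join of antipodal pairs `{± e 0}, {± e 1}, …`, as a tower of hemispheres. -/
noncomputable def crossPolytope [Neg V] (e : ℕ → V) : ℕ → Chain V
  | 0 => single [e 0] 1
  | k + 1 => cone (e (k + 1)) (crossPolytope e k + pushforward Neg.neg (crossPolytope e k))

theorem isAntipodalTower_crossPolytope [InvolutiveNeg V] (e : ℕ → V) :
    IsAntipodalTower (crossPolytope e) := by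
  have step {k : ℕ}
      (h : boundary (crossPolytope e k + pushforward Neg.neg (crossPolytope e k)) = 0) :
      boundary (crossPolytope e (k + 1)) =
        crossPolytope e k + pushforward Neg.neg (crossPolytope e k) := by
    rw [crossPolytope, boundary_cone, h, map_zero, add_zero]
  have closed (k : ℕ) :
      boundary (crossPolytope e k + pushforward Neg.neg (crossPolytope e k)) = 0 := by
    induction k with
    | zero => simp [crossPolytope, boundary_single, ZModModule.add_self]
    | succ k ih =>
      rw [map_add, boundary_pushforward, step ih, map_add, pushforward_pushforward_neg,
        add_comm (pushforward _ _), ZModModule.add_self]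
  exact ⟨by simp [crossPolytope, boundary_single], fun k ↦ step (closed k)⟩

lemma length_of_mem_support_crossPolytope [Neg V] {e : ℕ → V} {k : ℕ} {l : List V}
    (hl : l ∈ (crossPolytope e k).support) : l.length = k + 1 := by
  classical
  induction k generalizing l with
  | zero =>
    rw [Finset.mem_singleton.1 (support_single_subset hl), List.length_singleton]
  | succ k ih =>
    obtain ⟨t, ht, rfl⟩ := exists_of_mem_support_cone hl
    rw [List.length_cons, add_left_inj]
    rcases Finset.mem_union.1 (support_add ht) with ht | ht
    · exact ih ht
    · obtain ⟨u, hu, rfl⟩ := exists_of_mem_support_pushforward ht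
      rw [List.length_map, ih hu]

end Tower

section Subdivision

variable {E : Type*}

/-- The barycenter of the simplex spanned by a list of points, with multiplicity; it is `0` for the
empty list. -/
noncomputable def barycenter [AddCommMonoid E] [Module ℝ E] (l : List E) : E :=
  (l.length : ℝ)⁻¹ • l.sum

/-- The barycentric subdivision of a single ordered simplex: the cone from the barycenter over the
subdivided boundary. -/
noncomputable def subdivideSimplex [AddCommMonoid E] [Module ℝ E] : List E → Chain E
  | [] => single [] 1
  | x :: l => cone (barycenter (x :: l))
      (∑ i : Fin (x :: l).length, subdivideSimplex ((x :: l).eraseIdx i))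
termination_by l => l.length
decreasing_by rw [List.length_eraseIdx_of_lt i.2]; exact Nat.sub_one_lt_of_lt i.2

/-- The barycentric subdivision operator on chains. -/
noncomputable def subdivide [AddCommMonoid E] [Module ℝ E] : Chain E →ₗ[ZMod 2] Chain E :=
  linearCombination (ZMod 2) subdivideSimplex

section Algebra

variable [AddCommMonoid E] [Module ℝ E]

lemma barycenter_map {F : Type*} [AddCommMonoid F] [Module ℝ F] (f : E →ₗ[ℝ] F) (l : List E) :
    barycenter (l.map f) = f (barycenter l) := by
  rw [barycenter, barycenter, List.length_map, map_smul, map_list_sum]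

@[simp]
lemma subdivide_single_nil : subdivide (single ([] : List E) 1) = single [] 1 := by
  simp [subdivide, subdivideSimplex]

lemma subdivide_single_cons (x : E) (l : List E) :
    subdivide (single (x :: l) 1) =
      cone (barycenter (x :: l)) (subdivide (boundary (single (x :: l) 1))) := by
  simp only [subdivide, boundary_single, map_sum, linearCombination_single, one_smul,
    subdivideSimplex]

lemma boundary_subdivide (c : Chain E) :
    boundary (subdivide c) = subdivide (boundary c) := by
  suffices boundary ∘ₗ subdivide = subdivide ∘ₗ boundary (V := E) from LinearMap.congr_fun this c
  refine linearMap_ext_simplex fun l ↦ ?_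
  simp only [LinearMap.comp_apply]
  induction l using subdivideSimplex.induct with
  | case1 => simp
  | case2 x l ih =>
    have closed : boundary (subdivide (boundary (single (x :: l) 1))) = 0 := by
      rw [boundary_single, map_sum, map_sum, Finset.sum_congr rfl fun i _ ↦ ih i, ← map_sum,
        ← map_sum, ← boundary_single, boundary_boundary, map_zero]
    rw [subdivide_single_cons, boundary_cone, closed, map_zero, add_zero]

lemma pushforward_subdivide {F : Type*} [AddCommMonoid F] [Module ℝ F] (f : E →ₗ[ℝ] F)
    (c : Chain E) : pushforward f (subdivide c) = subdivide (pushforward f c) := by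
  suffices pushforward f ∘ₗ subdivide = subdivide ∘ₗ pushforward f from
    LinearMap.congr_fun this c
  refine linearMap_ext_simplex fun l ↦ ?_
  simp only [LinearMap.comp_apply, pushforward_single]
  induction l using subdivideSimplex.induct with
  | case1 => simp
  | case2 x l ih =>
    rw [subdivide_single_cons, pushforward_cone, ← barycenter_map, boundary_single, map_sum,
      map_sum, Finset.sum_congr rfl fun i _ ↦ ih i, ← map_sum, ← boundary_single_map,
      List.map_cons, subdivide_single_cons]

lemma exists_of_mem_support_subdivide_single_cons {x : E} {l t : List E}
    (ht : t ∈ (subdivide (single (x :: l) 1)).support) :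
    ∃ (i : Fin (x :: l).length) (t' : List E),
      t' ∈ (subdivide (single ((x :: l).eraseIdx i) 1)).support ∧
        t = barycenter (x :: l) :: t' := by
  rw [subdivide_single_cons] at ht
  obtain ⟨t', ht', rfl⟩ := exists_of_mem_support_cone ht
  obtain ⟨face, hface, ht'⟩ := exists_mem_support_of_mem_support_map _ ht'
  obtain ⟨i, rfl⟩ := exists_of_mem_support_boundary_single hface
  exact ⟨i, t', ht', rfl⟩

lemma length_of_mem_support_subdivide_single {l t : List E}
    (ht : t ∈ (subdivide (single l 1)).support) : t.length = l.length := by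
  induction l using subdivideSimplex.induct generalizing t with
  | case1 =>
    rw [subdivide_single_nil] at ht
    rw [Finset.mem_singleton.1 (support_single_subset ht)]
  | case2 x l ih =>
    obtain ⟨i, t', ht', rfl⟩ := exists_of_mem_support_subdivide_single_cons ht
    rw [List.length_cons, ih i ht', List.length_eraseIdx_add_one i.2]

end Algebra

lemma pushforward_neg_subdivide [AddCommGroup E] [Module ℝ E] (c : Chain E) :
    pushforward Neg.neg (subdivide c) = subdivide (pushforward Neg.neg c) :=
  pushforward_subdivide (LinearEquiv.neg ℝ : E ≃ₗ[ℝ] E).toLinearMap c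

lemma IsAntipodalTower.subdivide [AddCommGroup E] [Module ℝ E] {c : ℕ → Chain E}
    (hc : IsAntipodalTower c) : IsAntipodalTower fun k ↦ subdivide (c k) where
  boundary_zero := by rw [boundary_subdivide, hc.boundary_zero, subdivide_single_nil]
  boundary_succ k := by
    rw [boundary_subdivide, hc.boundary_succ, map_add, pushforward_neg_subdivide]

lemma barycenter_mem_convexHull [AddCommGroup E] [Module ℝ E] {l : List E} (hl : l ≠ []) :
    barycenter l ∈ convexHull ℝ {x | x ∈ l} := by
  have hlen : (l.length : ℝ) ≠ 0 := Nat.cast_ne_zero.2 (mt List.length_eq_zero_iff.1 hl)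
  rw [barycenter, ← Fin.sum_univ_getElem, Finset.smul_sum]
  refine (convex_convexHull ℝ _).sum_mem (fun i _ ↦ by positivity) (by simp [hlen]) fun i _ ↦ ?_
  exact subset_convexHull ℝ _ (List.getElem_mem i.2)

lemma mem_convexHull_of_mem_support_subdivide_single [AddCommGroup E] [Module ℝ E] {l t : List E}
    (ht : t ∈ (subdivide (single l 1)).support) {x : E} (hx : x ∈ t) :
    x ∈ convexHull ℝ {y | y ∈ l} := by
  induction l using subdivideSimplex.induct generalizing t with
  | case1 =>
    rw [subdivide_single_nil] at ht
    rw [Finset.mem_singleton.1 (support_single_subset ht)] at hx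
    exact absurd hx List.not_mem_nil
  | case2 y l ih =>
    obtain ⟨i, t', ht', rfl⟩ := exists_of_mem_support_subdivide_single_cons ht
    rcases List.mem_cons.1 hx with rfl | hx
    · exact barycenter_mem_convexHull (List.cons_ne_nil y l)
    · exact convexHull_mono (fun _ ↦ List.mem_of_mem_eraseIdx) (ih i ht' hx)

end Subdivision

section Mesh

lemma isBounded_setOf_mem {X : Type*} [PseudoMetricSpace X] (l : List X) :
    Bornology.IsBounded {x | x ∈ l} :=
  l.finite_toSet.isBounded

variable {E : Type*} [NormedAddCommGroup E] [NormedSpace ℝ E]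

lemma length_smul_barycenter_sub (l : List E) (x : E) :
    (l.length : ℝ) • (barycenter l - x) = ∑ i : Fin l.length, (l[i] - x) := by
  rcases eq_or_ne l [] with rfl | hl
  · simp
  have hlen : (l.length : ℝ) ≠ 0 := Nat.cast_ne_zero.2 (mt List.length_eq_zero_iff.1 hl)
  rw [smul_sub, barycenter, smul_inv_smul₀ hlen, Finset.sum_sub_distrib, Finset.sum_const,
    Finset.card_univ, Fintype.card_fin, Nat.cast_smul_eq_nsmul]
  simp only [Fin.getElem_fin, Fin.sum_univ_getElem]

lemma length_mul_dist_barycenter_le {l : List E} {x : E} (hx : x ∈ l) :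
    l.length * dist x (barycenter l) ≤ (l.length - 1) * Metric.diam {y | y ∈ l} := by
  obtain ⟨j, hj, rfl⟩ := List.mem_iff_getElem.1 hx
  calc l.length * dist l[j] (barycenter l)
    _ = ‖∑ i : Fin l.length, (l[i] - l[j])‖ := by
        rw [← length_smul_barycenter_sub, norm_smul, Real.norm_natCast, dist_comm, dist_eq_norm]
    _ = ‖∑ i ∈ Finset.univ.erase (⟨j, hj⟩ : Fin l.length), (l[i] - l[j])‖ := by
        rw [Finset.sum_erase]
        exact sub_self _
    _ ≤ ∑ _i ∈ Finset.univ.erase (⟨j, hj⟩ : Fin l.length), Metric.diam {y | y ∈ l} :=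
        norm_sum_le_of_le _ fun i _ ↦ by
          rw [← dist_eq_norm]
          exact Metric.dist_le_diam_of_mem (isBounded_setOf_mem l) (List.getElem_mem _) hx
    _ = (l.length - 1) * Metric.diam {y | y ∈ l} := by
        rw [Finset.sum_const, Finset.card_erase_of_mem (Finset.mem_univ _), Finset.card_univ,
          Fintype.card_fin, nsmul_eq_mul, Nat.cast_pred (List.length_pos_of_mem hx)]

lemma dist_barycenter_le {n : ℕ} {l : List E} (hn : l.length ≤ n + 1) {x : E}
    (hx : x ∈ convexHull ℝ {y | y ∈ l}) :
    dist x (barycenter l) ≤ n / (n + 1) * Metric.diam {y | y ∈ l} := by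
  refine convexHull_min (t := Metric.closedBall (barycenter l) _) (fun y hy ↦ ?_)
    (convex_closedBall _ _) hx
  have hpos : (0 : ℝ) < l.length := Nat.cast_pos.2 (List.length_pos_of_mem hy)
  have hn' : (l.length : ℝ) ≤ n + 1 := by exact_mod_cast hn
  have hratio : ((l.length : ℝ) - 1) / l.length ≤ n / (n + 1) := by
    rw [div_le_div_iff₀ hpos (by positivity)]
    linarith
  calc dist y (barycenter l)
    _ ≤ (l.length - 1) / l.length * Metric.diam {y | y ∈ l} := by
        rw [div_mul_eq_mul_div, le_div_iff₀' hpos]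
        exact length_mul_dist_barycenter_le hy
    _ ≤ n / (n + 1) * Metric.diam {y | y ∈ l} := by gcongr

lemma diam_le_of_mem_support_subdivide_single {n : ℕ} {l t : List E} (hn : l.length ≤ n + 1)
    (ht : t ∈ (subdivide (single l 1)).support) :
    Metric.diam {x | x ∈ t} ≤ n / (n + 1) * Metric.diam {x | x ∈ l} := by
  induction l using subdivideSimplex.induct generalizing t with
  | case1 =>
    rw [subdivide_single_nil] at ht
    simp [Finset.mem_singleton.1 (support_single_subset ht)]
  | case2 x l ih =>
    obtain ⟨i, t', ht', rfl⟩ := exists_of_mem_support_subdivide_single_cons ht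
    have hface : {y | y ∈ (x :: l).eraseIdx i} ⊆ {y | y ∈ x :: l} :=
      fun _ ↦ List.mem_of_mem_eraseIdx
    have apex (y : E) (hy : y ∈ t') :
        dist y (barycenter (x :: l)) ≤ n / (n + 1) * Metric.diam {y | y ∈ x :: l} :=
      dist_barycenter_le hn
        (convexHull_mono hface (mem_convexHull_of_mem_support_subdivide_single ht' hy))
    have base (y : E) (hy : y ∈ t') (z : E) (hz : z ∈ t') :
        dist y z ≤ n / (n + 1) * Metric.diam {y | y ∈ x :: l} :=
      calc dist y z
        _ ≤ Metric.diam {y | y ∈ t'} :=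
            Metric.dist_le_diam_of_mem (isBounded_setOf_mem t') hy hz
        _ ≤ n / (n + 1) * Metric.diam {y | y ∈ (x :: l).eraseIdx i} :=
            ih i ((List.length_eraseIdx_le _ _).trans hn) ht'
        _ ≤ n / (n + 1) * Metric.diam {y | y ∈ x :: l} := by
            gcongr
            exact Metric.diam_mono hface (isBounded_setOf_mem _)
    have hnonneg : 0 ≤ n / (n + 1) * Metric.diam {y | y ∈ x :: l} :=
      mul_nonneg (by positivity) Metric.diam_nonneg
    refine Metric.diam_le_of_forall_dist_le hnonneg ?_
    simp only [Set.mem_ofPred_eq, List.forall_mem_cons]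
    exact ⟨⟨by rwa [dist_self], fun y hy ↦ dist_comm y _ ▸ apex y hy⟩,
      fun y hy ↦ ⟨apex y hy, base y hy⟩⟩

lemma exists_of_mem_support_iterate_subdivide {n : ℕ} {c : Chain E}
    (hn : ∀ l ∈ c.support, l.length ≤ n + 1) (r : ℕ) {t : List E}
    (ht : t ∈ (subdivide^[r] c).support) :
    ∃ l ∈ c.support, t.length = l.length ∧ {x | x ∈ t} ⊆ convexHull ℝ {x | x ∈ l} ∧
      Metric.diam {x | x ∈ t} ≤ (n / (n + 1)) ^ r * Metric.diam {x | x ∈ l} := by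
  induction r generalizing t with
  | zero => exact ⟨t, ht, rfl, subset_convexHull ℝ _, by rw [pow_zero, one_mul]⟩
  | succ r ih =>
    rw [Function.iterate_succ_apply'] at ht
    obtain ⟨u, hu, htu⟩ := exists_mem_support_of_mem_support_map _ ht
    obtain ⟨l, hl, hlen, hsub, hdiam⟩ := ih hu
    refine ⟨l, hl, (length_of_mem_support_subdivide_single htu).trans hlen, fun x hx ↦ ?_, ?_⟩
    · exact convexHull_min hsub (convex_convexHull ℝ _)
        (mem_convexHull_of_mem_support_subdivide_single htu hx)
    · calc Metric.diam {x | x ∈ t}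
        _ ≤ n / (n + 1) * Metric.diam {x | x ∈ u} :=
            diam_le_of_mem_support_subdivide_single (hlen.trans_le (hn l hl)) htu
        _ ≤ n / (n + 1) * ((n / (n + 1)) ^ r * Metric.diam {x | x ∈ l}) := by gcongr
        _ = (n / (n + 1)) ^ (r + 1) * Metric.diam {x | x ∈ l} := by ring

end Mesh

section SmallTower

/-- The unit sphere of the `ℓ¹` norm, the boundary of the cross-polytope. -/
def l1Sphere (ι : Type*) [Fintype ι] : Set (ι → ℝ) := {x | ∑ i, |x i| = 1}

section L1Sphere

variable {ι : Type*} [Fintype ι]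

lemma neg_mem_l1Sphere {x : ι → ℝ} (hx : x ∈ l1Sphere ι) : -x ∈ l1Sphere ι := by
  simpa only [l1Sphere, Set.mem_ofPred_eq, Pi.neg_apply, abs_neg] using hx

lemma ne_zero_of_mem_l1Sphere {x : ι → ℝ} (hx : x ∈ l1Sphere ι) : x ≠ 0 := by
  rintro rfl
  simp [l1Sphere] at hx

lemma l1Sphere_subset_closedBall : l1Sphere ι ⊆ Metric.closedBall 0 1 := fun x hx ↦ by
  rw [mem_closedBall_zero_iff, pi_norm_le_iff_of_nonneg zero_le_one]
  intro i
  rw [← hx.out, Real.norm_eq_abs]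
  exact Finset.single_le_sum (f := fun j ↦ |x j|) (fun j _ ↦ abs_nonneg _) (Finset.mem_univ i)

lemma isCompact_l1Sphere : IsCompact (l1Sphere ι) :=
  Metric.isCompact_of_isClosed_isBounded
    (isClosed_eq (by fun_prop) continuous_const)
    (Metric.isBounded_closedBall.subset l1Sphere_subset_closedBall)

lemma single_mem_l1Sphere [DecidableEq ι] (i : ι) : Pi.single i 1 ∈ l1Sphere ι := by
  simp [l1Sphere, Pi.single_apply, apply_ite abs]

lemma smul_single_add_smul_mem_l1Sphere [DecidableEq ι] {i : ι} {y : ι → ℝ}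
    (hy : y ∈ l1Sphere ι) (hi : y i = 0) {a b : ℝ} (ha : 0 ≤ a) (hb : 0 ≤ b) (hab : a + b = 1) :
    a • Pi.single i 1 + b • y ∈ l1Sphere ι := by
  have abs_apply (j : ι) : |(a • Pi.single i 1 + b • y : ι → ℝ) j| =
      a * |(Pi.single i 1 : ι → ℝ) j| + b * |y j| := by
    rcases eq_or_ne j i with rfl | hj
    · simp [hi, abs_of_nonneg ha]
    · simp [hj, abs_mul, abs_of_nonneg hb]
  calc ∑ j, |(a • Pi.single i 1 + b • y : ι → ℝ) j|
    _ = a * ∑ j, |(Pi.single i 1 : ι → ℝ) j| + b * ∑ j, |y j| := by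
        simp only [abs_apply, Finset.sum_add_distrib, Finset.mul_sum]
    _ = 1 := by rw [hy.out, (single_mem_l1Sphere i).out, mul_one, mul_one, hab]

end L1Sphere

lemma convexHull_setOf_mem_map_neg {E : Type*} [AddCommGroup E] [Module ℝ E] (l : List E) :
    convexHull ℝ {x | x ∈ l.map Neg.neg} = -convexHull ℝ {x | x ∈ l} := by
  rw [← convexHull_neg]
  congr 1
  ext x
  simp [neg_eq_iff_eq_neg]

lemma exists_of_mem_convexHull_setOf_mem_cons {E : Type*} [AddCommGroup E] [Module ℝ E]
    {v x : E} {l : List E} (hl : l ≠ []) (hx : x ∈ convexHull ℝ {y | y ∈ v :: l}) :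
    ∃ y ∈ convexHull ℝ {y | y ∈ l}, x ∈ segment ℝ v y := by
  have hcons : {y | y ∈ v :: l} = insert v {y | y ∈ l} := by
    ext y
    exact List.mem_cons
  have hnonempty : {y | y ∈ l}.Nonempty := List.exists_mem_of_ne_nil l hl
  rw [hcons, convexHull_insert hnonempty, mem_convexJoin] at hx
  simpa only [Set.mem_singleton_iff, exists_eq_left] using hx

lemma convexHull_subset_of_mem_support_crossPolytope {n k : ℕ} (hk : k ≤ n)
    {l : List (Fin (n + 1) → ℝ)}
    (hl : l ∈ (crossPolytope (fun j ↦ Pi.single (Fin.ofNat (n + 1) j) 1) k).support) :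
    convexHull ℝ {x | x ∈ l} ⊆ {x ∈ l1Sphere (Fin (n + 1)) | ∀ i, k < i.val → x i = 0} := by
  classical
  induction k generalizing l with
  | zero =>
    simp only [Finset.mem_singleton.1 (support_single_subset hl), List.mem_singleton,
      Set.ofPred_eq_eq_singleton, convexHull_singleton, Set.singleton_subset_iff]
    exact ⟨single_mem_l1Sphere _, fun i hi ↦ Pi.single_eq_of_ne (Fin.pos_iff_ne_zero.1 hi) _⟩
  | succ k ih =>
    obtain ⟨t, ht, rfl⟩ := exists_of_mem_support_cone hl
    have face : convexHull ℝ {x | x ∈ t} ⊆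
        {x ∈ l1Sphere (Fin (n + 1)) | ∀ i, k < i.val → x i = 0} := by
      rcases Finset.mem_union.1 (support_add ht) with ht | ht
      · exact ih (k.le_succ.trans hk) ht
      · obtain ⟨u, hu, rfl⟩ := exists_of_mem_support_pushforward ht
        rw [convexHull_setOf_mem_map_neg]
        intro x hx
        obtain ⟨hsphere, hzero⟩ := ih (k.le_succ.trans hk) hu hx
        exact ⟨neg_neg x ▸ neg_mem_l1Sphere hsphere, fun i hi ↦ neg_eq_zero.1 (hzero i hi)⟩
    have ht0 : t ≠ [] := by
      rintro rfl
      simpa using length_of_mem_support_crossPolytope hl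
    intro x hx
    obtain ⟨y, hy, a, b, ha, hb, hab, rfl⟩ := exists_of_mem_convexHull_setOf_mem_cons ht0 hx
    obtain ⟨hsphere, hzero⟩ := face hy
    have hval : (Fin.ofNat (n + 1) (k + 1)).val = k + 1 := Nat.mod_eq_of_lt (Nat.lt_succ_of_le hk)
    refine ⟨smul_single_add_smul_mem_l1Sphere hsphere (hzero _ (by lia)) ha hb hab,
      fun i hi ↦ ?_⟩
    have hne : i ≠ Fin.ofNat (n + 1) (k + 1) := fun h ↦ hi.ne' (h ▸ hval)
    simp only [Pi.add_apply, Pi.smul_apply, Pi.single_eq_of_ne hne,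
      hzero i (k.lt_succ_self.trans hi), smul_zero, add_zero]

theorem exists_isAntipodalTower_dist_lt (n : ℕ) {ε : ℝ} (hε : 0 < ε) :
    ∃ c : ℕ → Chain (Fin (n + 1) → ℝ), IsAntipodalTower c ∧ ∀ k ≤ n, ∀ l ∈ (c k).support,
      (∀ x ∈ l, x ∈ l1Sphere (Fin (n + 1))) ∧ ∀ x ∈ l, ∀ y ∈ l, dist x y < ε := by
  set c : ℕ → Chain (Fin (n + 1) → ℝ) :=
    crossPolytope fun j ↦ Pi.single (Fin.ofNat (n + 1) j) 1
  have tower (r : ℕ) : IsAntipodalTower fun k ↦ subdivide^[r] (c k) := by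
    induction r with
    | zero => exact isAntipodalTower_crossPolytope _
    | succ r ih => simpa only [Function.iterate_succ_apply'] using ih.subdivide
  obtain ⟨r, hr⟩ : ∃ r : ℕ, ((n : ℝ) / (n + 1)) ^ r < ε / 2 :=
    exists_pow_lt_of_lt_one (half_pos hε) ((div_lt_one (by positivity)).2 (lt_add_one _))
  refine ⟨_, tower r, fun k hk t ht ↦ ?_⟩
  have hlen (l) (hl : l ∈ (c k).support) : l.length ≤ n + 1 := by
    rw [length_of_mem_support_crossPolytope hl]
    exact Nat.succ_le_succ hk
  obtain ⟨l, hl, -, hsub, hdiam⟩ := exists_of_mem_support_iterate_subdivide hlen r ht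
  have hull : convexHull ℝ {x | x ∈ l} ⊆ l1Sphere (Fin (n + 1)) :=
    (convexHull_subset_of_mem_support_crossPolytope hk hl).trans (Set.sep_subset _ _)
  have hdiam_l : Metric.diam {x | x ∈ l} ≤ 2 * 1 :=
    Metric.diam_le_of_subset_closedBall zero_le_one
      ((subset_convexHull ℝ _).trans (hull.trans l1Sphere_subset_closedBall))
  refine ⟨fun x hx ↦ hull (hsub hx), fun x hx y hy ↦ ?_⟩
  calc dist x y
    _ ≤ Metric.diam {x | x ∈ t} := Metric.dist_le_diam_of_mem (isBounded_setOf_mem t) hx hy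
    _ ≤ (n / (n + 1)) ^ r * (2 * 1) := hdiam.trans (by gcongr)
    _ < ε := by linarith

end SmallTower

section Coordinates

/-- The sign of the `i`-th coordinate of `v`, encoded in `ZMod 2`. If that coordinate vanishes, the
sign of the first nonzero coordinate is used instead, so that antipodal vectors have opposite
signs. -/
noncomputable def coordSign {m : ℕ} (i : Fin m) (v : Fin m → ℝ) : ZMod 2 :=
  if 0 < toLex (v i, toLex v) then 1 else 0

variable {m : ℕ} {i : Fin m}

lemma coordSign_neg {v : Fin m → ℝ} (hv : v ≠ 0) : coordSign i (-v) = coordSign i v + 1 := by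
  have hneg : toLex ((-v) i, toLex (-v)) = -toLex (v i, toLex v) := rfl
  have hne : toLex (v i, toLex v) ≠ 0 := fun h ↦
    hv (congrArg (fun p : ℝ ×ₗ Lex (Fin m → ℝ) ↦ ofLex (ofLex p).2) h)
  simp only [coordSign, hneg, neg_pos]
  rcases hne.lt_or_gt with h | h
  · simp [h, h.le]
  · simp [h, h.le, CharTwo.add_self_eq_zero]

lemma coordSign_eq_one_of_pos {v : Fin m → ℝ} (hv : 0 < v i) : coordSign i v = 1 :=
  if_pos (Prod.Lex.lt_iff.2 (.inl hv))

lemma coordSign_eq_zero_of_neg {v : Fin m → ℝ} (hv : v i < 0) : coordSign i v = 0 :=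
  if_neg (Prod.Lex.lt_iff.2 (.inl hv)).not_gt

lemma abs_apply_le_of_coordSign_ne {v w : Fin m → ℝ} (h : coordSign i v ≠ coordSign i w) :
    |v i| ≤ |v i - w i| := by
  rcases lt_trichotomy (v i) 0 with hv | hv | hv
  · have hw : 0 ≤ w i := not_lt.1 fun hw ↦
      h (by rw [coordSign_eq_zero_of_neg hv, coordSign_eq_zero_of_neg hw])
    exact abs_le_abs_of_nonpos hv.le (by linarith)
  · simp [hv]
  · have hw : w i ≤ 0 := not_lt.1 fun hw ↦
      h (by rw [coordSign_eq_one_of_pos hv, coordSign_eq_one_of_pos hw])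
    exact abs_le_abs_of_nonneg hv.le (by linarith)

end Coordinates

section Zeros

variable {m n : ℕ}

lemma exists_mem_l1Sphere_norm_lt_of_odd {g : (Fin (n + 1) → ℝ) → Fin m → ℝ}
    (hmn : m ≤ n) (hg : ContinuousOn g (l1Sphere (Fin (n + 1))))
    (hodd : ∀ x ∈ l1Sphere (Fin (n + 1)), g (-x) = -g x)
    (hne : ∀ x ∈ l1Sphere (Fin (n + 1)), g x ≠ 0) {δ : ℝ} (hδ : 0 < δ) :
    ∃ x ∈ l1Sphere (Fin (n + 1)), ‖g x‖ < δ := by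
  obtain ⟨ε, hε, hclose⟩ := Metric.uniformContinuousOn_iff.1
    (isCompact_l1Sphere.uniformContinuousOn_of_continuous hg) (δ / 2) (half_pos hδ)
  obtain ⟨c, hc, hsmall⟩ := exists_isAntipodalTower_dist_lt n hε
  set S := List.ofFn fun (i : Fin m) x ↦ coordSign i (g x)
  have hlen : S.length = m := List.length_ofFn
  have hS : ∀ s ∈ S, ∀ k < S.length, ∀ l ∈ (c k).support, ∀ x ∈ l, s (-x) = s x + 1 := by
    rw [List.forall_mem_ofFn_iff, hlen]
    intro i k hk l hl x hx
    have hxK := (hsmall k (hk.le.trans hmn) l hl).1 x hx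
    simp only [hodd x hxK, coordSign_neg (hne x hxK)]
  obtain ⟨l, hl, hl0, hchange⟩ := hc.exists_simplex_forall_exists_ne hS
  obtain ⟨hlK, hldist⟩ := hsmall _ (hlen.trans_le hmn) l hl
  obtain ⟨z, hz⟩ := List.exists_mem_of_ne_nil l hl0
  refine ⟨z, hlK z hz, (pi_norm_lt_iff hδ).2 fun i ↦ ?_⟩
  have close (x) (hx : x ∈ l) (y) (hy : y ∈ l) : |g x i - g y i| < δ / 2 :=
    (dist_le_pi_dist (g x) (g y) i).trans_lt
      (hclose x (hlK x hx) y (hlK y hy) (hldist x hx y hy))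
  obtain ⟨x, hx, y, hy, hxy⟩ := List.forall_mem_ofFn_iff.1 hchange i
  calc ‖g z i‖
    _ ≤ |g z i - g x i| + |g x i| := by
        rw [Real.norm_eq_abs]
        exact sub_le_iff_le_add.1 (abs_sub_abs_le_abs_sub _ _)
    _ < δ / 2 + δ / 2 := by
        have := close z hz x hx
        have := (abs_apply_le_of_coordSign_ne hxy).trans_lt (close x hx y hy)
        gcongr
    _ = δ := add_halves δ

theorem exists_mem_l1Sphere_eq_zero_of_odd {g : (Fin (n + 1) → ℝ) → Fin m → ℝ}
    (hmn : m ≤ n) (hg : ContinuousOn g (l1Sphere (Fin (n + 1))))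
    (hodd : ∀ x ∈ l1Sphere (Fin (n + 1)), g (-x) = -g x) :
    ∃ x ∈ l1Sphere (Fin (n + 1)), g x = 0 := by
  by_contra! hne
  obtain ⟨x₀, hx₀, -⟩ := exists_mem_l1Sphere_norm_lt_of_odd hmn hg hodd hne one_pos
  obtain ⟨x, hx, hmin⟩ := isCompact_l1Sphere.exists_isMinOn ⟨x₀, hx₀⟩ hg.norm
  obtain ⟨y, hy, hlt⟩ :=
    exists_mem_l1Sphere_norm_lt_of_odd hmn hg hodd hne (norm_pos_iff.2 (hne x hx))
  exact hlt.not_ge (hmin hy)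

theorem exists_mem_sphere_eq_zero_of_odd
    {g : EuclideanSpace ℝ (Fin (n + 1)) → EuclideanSpace ℝ (Fin m)} (hmn : m ≤ n)
    (hg : ContinuousOn g (Metric.sphere 0 1))
    (hodd : ∀ x ∈ Metric.sphere (0 : EuclideanSpace ℝ (Fin (n + 1))) 1, g (-x) = -g x) :
    ∃ x ∈ Metric.sphere (0 : EuclideanSpace ℝ (Fin (n + 1))) 1, g x = 0 := by
  set u : (Fin (n + 1) → ℝ) → EuclideanSpace ℝ (Fin (n + 1)) :=
    fun x ↦ ‖WithLp.toLp 2 x‖⁻¹ • WithLp.toLp 2 x with hu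
  have hne {x} (hx : x ∈ l1Sphere (Fin (n + 1))) : WithLp.toLp 2 x ≠ 0 :=
    (WithLp.toLp_eq_zero 2).not.2 (ne_zero_of_mem_l1Sphere hx)
  have hu_mem : Set.MapsTo u (l1Sphere (Fin (n + 1))) (Metric.sphere 0 1) :=
    fun x hx ↦ by simp [hu, norm_smul, hne hx]
  have hu_cont : ContinuousOn u (l1Sphere (Fin (n + 1))) := by
    have htoLp : ContinuousOn (WithLp.toLp 2) (l1Sphere (Fin (n + 1))) :=
      (PiLp.continuous_toLp 2 _).continuousOn
    exact (htoLp.norm.inv₀ fun x hx ↦ norm_ne_zero_iff.2 (hne hx)).smul htoLp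
  have hu_neg (x) : u (-x) = -u x := by simp [hu]
  obtain ⟨x, hx, hzero⟩ := exists_mem_l1Sphere_eq_zero_of_odd (g := fun x ↦ (g (u x)).ofLp) hmn
    ((PiLp.continuous_ofLp 2 _).comp_continuousOn (hg.comp hu_cont hu_mem))
    fun x hx ↦ by rw [hu_neg, hodd _ (hu_mem hx), WithLp.ofLp_neg]
  exact ⟨u x, hu_mem hx, (WithLp.ofLp_eq_zero 2).1 hzero⟩

end Zeros

end BorsukUlam

/-- **Borsuk–Ulam theorem**: if there is a continuous antipodal map from the unit
sphere `S^n ⊂ ℝ^{n+1}` to the unit sphere `S^m ⊂ ℝ^{m+1}`, then `n ≤ m`. -/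
theorem borsuk_ulam (n m : ℕ)
    (f : EuclideanSpace ℝ (Fin (n + 1)) → EuclideanSpace ℝ (Fin (m + 1)))
    (hcont : ContinuousOn f (Metric.sphere (0 : EuclideanSpace ℝ (Fin (n + 1))) 1))
    (hmaps : ∀ x ∈ Metric.sphere (0 : EuclideanSpace ℝ (Fin (n + 1))) 1,
      f x ∈ Metric.sphere (0 : EuclideanSpace ℝ (Fin (m + 1))) 1)
    (hanti : ∀ x ∈ Metric.sphere (0 : EuclideanSpace ℝ (Fin (n + 1))) 1,
      f (-x) = - f x) :
    n ≤ m := by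
  by_contra! hmn
  obtain ⟨x, hx, hzero⟩ := BorsukUlam.exists_mem_sphere_eq_zero_of_odd hmn hcont hanti
  simpa [hzero] using hmaps x hx
end
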